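/- Let n ≥ 0, 0 < ρ < 1, 0 ≤ β < ρ, 0 < a < 1, and set α := −Φ⁻¹(a). Let z₀ > 0. Let Ω ⊆ ℝ^{n+1} be measurable with γ_{n+1}(Ω) = a, let z := ∫_Ω x dγ_{n+1}(x), and assume z ≠ 0 with ‖z‖ ≥ z₀. Let H ⊆ ℝ^{n+1} be a half space with γ_{n+1}(H) = a such that ∫_H x dγ_{n+1}(x) is a positive scalar multiple of z. Define δ := ∫ 1_H(x) T_ρ1_H(x) dγ_{n+1}(x) − ∫ 1_Ω(x) T_ρ1_Ω(x) dγ_{n+1}(x), and for 0 ≤ β' ≤ ρ define η_{β'} := ∫_{ℝ^{n+1}} Φ((β'⟨z/‖z‖, x⟩ − α)/√(1 − β'²)) (1_H(x) − 1_Ω(x)) dγ_{n+1}(x). Then η_β ≥ 0 and [10⁻⁷ · a · z₀² · e^{−α² · max(1, β/(ρ−β))} · (6 + |α|)⁻² · ρ(1−ρ)² β(1−β²) a(1−a)] · η_β ≤ δ ≤ 2 η_ρ. -/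

import Mathlib

/-!
Write `S ρ f g = ∫ f T_ρ g dγ`, let `φ` be the Gaussian density (`ph`), and put `v = -u`, `h = -α`
for the unit vector `u = z / ‖z‖`. The half space is then `H = {⟪v, x⟫ < h}`. The function
`f = 1_H - 1_Ω` is nonnegative on `H`, nonpositive off `H`, and has mean zero, so that `η_b` is the
integral of `|f|` against `|k_b - k_b(h)|`, where `k_b` (`prof b h`) is the monotone profile of
`T_b 1_H`. Expanding gives `δ = 2 S ρ f 1_H - S ρ f f`. Here `S ρ f 1_H = η_ρ` and `S ρ f f ≥ 0`,
which is the upper bound.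

For the lower bound, let `I = ∫ |f| min(|⟪v, x⟫ - h|, 1)`. The profile is Lipschitz, so
`√(1 - β²) η_β ≤ I` (`prof_upper`), and it suffices to bound `δ` below by a multiple of `I`.

*Small correlation* (`deficit_small`). For `r ≤ φ(h) / 300` the term `2 S r f 1_H` is of first order
in `r` and is bounded below through `prof_lower`. As the barycentres of `H` and `Ω` are parallel,
the first-order part of `S r f f` is `r e²` with `|e| = φ(h) - ‖z‖ ≤ φ(h)`, and
`|e| = ∫ |f| |⟪v, x⟫ - h|`; this is where the assumption on the barycentres enters. The rest of
`S r f f` is of second order by the spectral gap (`S_gap_half`) and is controlled by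
`S (1/2) f f ≤ 2 I` (`S_half_le`). The result is that the deficit at correlation `r` is at least
`r φ(h) I / 4`.

*Transport to the correlation `ρ`* (`S_mono_rho`). Two `ρ`-correlated Gaussian vectors can be built
from a common component of variance `s² = r` and conditionally correlated remainders (`S_fiber`).
Borell's inequality for the remainders bounds `S ρ 1_Ω 1_Ω` by `∫ J(M, M)`, where `M = T_s 1_Ω` and
`J` is the two-point function of half-lines, with equality for half spaces. For a suitable `k > 0`
the function `J(p, p) - k p²` is a mixture of the functions `(p - θ)₊` (`J_diag_repr`), and half
spaces maximise `∫ (T_s f - θ)₊` at given mean (`stop_loss`). Hence the deficit at `ρ` is at least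
`k` times the deficit at `r`. Taking `r = ρ φ(h) / 300` gives
`δ ≥ ρ (1 - ρ)² φ(h)² √(1 - β²) η_β / 2400` (`robust_core`). The bound claimed is weaker, since
`z₀ ≤ ‖z‖ ≤ φ(α)` and the exponential factor is at most `1`.

Borell's inequality is needed for two functions, `S τ f g ≤ J τ (∫ f) (∫ g)` (`S_le_J`), and is
proved by a central-limit type argument. The Hessian of `J` satisfies `J_pp J_qq = τ² J_pq²`
(`Ja_det`), so together with the spectral gap the quadratic term of the Taylor expansion of `J`
around the means is nonpositive in expectation. Only a cubic error remains (`EJ_one_step`), and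
splitting the Gaussian vector into `2^j` independent parts removes it (`EJ_iter`).
-/


open MeasureTheory Real Set Filter
open scoped RealInnerProductSpace ENNReal

noncomputable section

/-- `ℝ^k` with the Euclidean structure. -/
abbrev Euc (k : ℕ) : Type := EuclideanSpace ℝ (Fin k)

/-- Standard Gaussian density on `ℝ^k`. -/
def gaussDensity (k : ℕ) (x : Euc k) : ℝ :=
  (2 * π) ^ (-(k : ℝ) / 2) * Real.exp (-‖x‖ ^ 2 / 2)

/-- Standard Gaussian measure on `ℝ^k`. -/
def gaussMeasure (k : ℕ) : Measure (Euc k) :=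
  volume.withDensity fun x => ENNReal.ofReal (gaussDensity k x)

/-- Ornstein–Uhlenbeck operator with correlation `ρ`. -/
def ouOp (k : ℕ) (ρ : ℝ) (f : Euc k → ℝ) (x : Euc k) : ℝ :=
  ∫ y, f (ρ • x + Real.sqrt (1 - ρ ^ 2) • y) ∂(gaussMeasure k)

/-- Noise stability of a set with correlation `ρ`. -/
def noiseStability (k : ℕ) (ρ : ℝ) (Ω : Set (Euc k)) : ℝ :=
  ∫ x, Ω.indicator (fun _ => (1 : ℝ)) x * ouOp k ρ (Ω.indicator fun _ => (1 : ℝ)) x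
    ∂(gaussMeasure k)

/-- A half space: `{x : ⟨x,u⟩ > t}` for a unit vector `u`. -/
def IsHalfSpace (k : ℕ) (H : Set (Euc k)) : Prop :=
  ∃ (u : Euc k) (t : ℝ), ‖u‖ = 1 ∧ H = {x | t < ⟪x, u⟫}

/-- The standard Gaussian cumulative distribution function. -/
def Phi (t : ℝ) : ℝ := ∫ s in Iio t, (2 * π) ^ (-(1 : ℝ) / 2) * Real.exp (-s ^ 2 / 2)

/-- The Gaussian barycenter of `Ω ⊆ ℝ^k`. -/
def bary (k : ℕ) (Ω : Set (Euc k)) : Euc k := ∫ x in Ω, x ∂(gaussMeasure k)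

namespace RobustBorell
open ProbabilityTheory Topology

/-! ### The Ornstein–Uhlenbeck form of the Gaussian measure -/

section

variable {E : Type*} [NormedAddCommGroup E] [InnerProductSpace ℝ E] [FiniteDimensional ℝ E]
  [MeasurableSpace E] [BorelSpace E]

/-- Mathlib's `stdGaussian`, defined without reference to Lebesgue measure, has the usual density; both
measures have the same characteristic function. -/
lemma stdGaussian_eq_withDensity :
    stdGaussian E = volume.withDensity fun x : E =>
      ENNReal.ofReal ((2 * π) ^ (-(Module.finrank ℝ E : ℝ) / 2) * Real.exp (-‖x‖ ^ 2 / 2)) := by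
  have hpos : ∀ x : E, 0 ≤ (2 * π) ^ (-(Module.finrank ℝ E : ℝ) / 2) * Real.exp (-‖x‖ ^ 2 / 2) :=
    fun x => by positivity
  have hint : Integrable (fun x : E =>
      (2 * π) ^ (-(Module.finrank ℝ E : ℝ) / 2) * Real.exp (-‖x‖ ^ 2 / 2)) := by
    apply Integrable.const_mul
    have h := (GaussianFourier.integrable_cexp_neg_mul_sq_norm_add (V := E)
      (b := (1 / 2 : ℂ)) (by norm_num) 0 0).norm
    refine h.congr (Filter.Eventually.of_forall fun x => ?_)
    simp only [Complex.norm_exp]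
    congr 1
    have : (-(1 / 2 : ℂ) * (‖x‖ : ℂ) ^ 2 + 0 * (⟪(0 : E), x⟫ : ℂ)) = ((-‖x‖ ^ 2 / 2 : ℝ) : ℂ) := by
      push_cast; ring
    rw [this, Complex.ofReal_re]
  have : IsFiniteMeasure (volume.withDensity fun x : E =>
      ENNReal.ofReal ((2 * π) ^ (-(Module.finrank ℝ E : ℝ) / 2) * Real.exp (-‖x‖ ^ 2 / 2))) :=
    isFiniteMeasure_withDensity_ofReal hint.2
  apply Measure.ext_of_charFun
  ext t
  rw [charFun_stdGaussian, charFun_apply, integral_withDensity_eq_integral_toReal_smul₀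
    (by fun_prop) (by simp)]
  simp_rw [ENNReal.toReal_ofReal (hpos _)]
  have h := GaussianFourier.integral_cexp_neg_mul_sq_norm_add (V := E)
      (b := (1 / 2 : ℂ)) (by norm_num) Complex.I t
  have e : ∀ x : E, ((2 * π) ^ (-(Module.finrank ℝ E : ℝ) / 2) * Real.exp (-‖x‖ ^ 2 / 2)) •
      Complex.exp (⟪x, t⟫ * Complex.I) = (((2 * π) ^ (-(Module.finrank ℝ E : ℝ) / 2) : ℝ) : ℂ) *
      Complex.exp (-(1 / 2 : ℂ) * (‖x‖ : ℂ) ^ 2 + Complex.I * (⟪t, x⟫ : ℂ)) := by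
    intro x
    rw [Complex.real_smul, Complex.ofReal_mul, mul_assoc, Complex.ofReal_exp, ← Complex.exp_add,
      real_inner_comm]
    congr 2
    push_cast; ring
  simp_rw [e]
  rw [integral_const_mul, h, ← mul_assoc]
  have h2 : (((2 * π) ^ (-(Module.finrank ℝ E : ℝ) / 2) : ℝ) : ℂ) *
      ((π : ℂ) / (1 / 2 : ℂ)) ^ ((Module.finrank ℝ E : ℂ) / 2) = 1 := by
    have : ((π : ℂ) / (1 / 2 : ℂ)) ^ ((Module.finrank ℝ E : ℂ) / 2) =
        (((2 * π) ^ ((Module.finrank ℝ E : ℝ) / 2) : ℝ) : ℂ) := by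
      rw [Complex.ofReal_cpow (by positivity)]
      push_cast
      congr 1
      ring
    rw [this, ← Complex.ofReal_mul, ← Real.rpow_add (by positivity)]
    simp [neg_div]
  rw [h2, one_mul]
  congr 1
  rw [Complex.I_sq]; ring

lemma gaussMeasure_eq (k : ℕ) : gaussMeasure k = stdGaussian (Euc k) := by
  rw [stdGaussian_eq_withDensity, gaussMeasure]
  simp [gaussDensity]

/-- Rotation invariance of `γ ⊗ γ`, by comparing characteristic functions. -/
lemma map_rot {a b : ℝ} (h : a ^ 2 + b ^ 2 = 1) :
    MeasurePreserving (fun p : E × E => (a • p.1 + b • p.2, b • p.1 - a • p.2))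
      ((stdGaussian E).prod (stdGaussian E)) ((stdGaussian E).prod (stdGaussian E)) := by
  refine ⟨by fun_prop, ?_⟩
  let L : E × E →L[ℝ] E × E :=
    (a • ContinuousLinearMap.fst ℝ E E + b • ContinuousLinearMap.snd ℝ E E).prod
      (b • ContinuousLinearMap.fst ℝ E E - a • ContinuousLinearMap.snd ℝ E E)
  have hL : (fun p : E × E => (a • p.1 + b • p.2, b • p.1 - a • p.2)) = L := by
    ext p <;> simp [L]
  rw [hL]
  apply Measure.ext_of_charFunDual
  ext M
  rw [charFunDual_map, charFunDual_prod, charFunDual_prod]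
  simp_rw [charFunDual_stdGaussian, ← Complex.exp_add]
  congr 1
  set l1 := M.comp (ContinuousLinearMap.inl ℝ E E)
  set l2 := M.comp (ContinuousLinearMap.inr ℝ E E)
  have hM : ∀ p : E × E, M p = l1 p.1 + l2 p.2 := by
    intro p
    simp only [l1, l2, ContinuousLinearMap.comp_apply, ContinuousLinearMap.inl_apply,
      ContinuousLinearMap.inr_apply, ← map_add]
    simp
  have e1 : (M.comp L).comp (ContinuousLinearMap.inl ℝ E E) = a • l1 + b • l2 := by
    ext x; simp [hM, L]
  have e2 : (M.comp L).comp (ContinuousLinearMap.inr ℝ E E) = b • l1 - a • l2 := by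
    ext x; simp [hM, L]; ring
  rw [e1, e2]
  have key : ‖a • l1 + b • l2‖ ^ 2 + ‖b • l1 - a • l2‖ ^ 2 = ‖l1‖ ^ 2 + ‖l2‖ ^ 2 := by
    rw [← (InnerProductSpace.toDual ℝ E).symm.norm_map (a • l1 + b • l2),
      ← (InnerProductSpace.toDual ℝ E).symm.norm_map (b • l1 - a • l2),
      ← (InnerProductSpace.toDual ℝ E).symm.norm_map l1,
      ← (InnerProductSpace.toDual ℝ E).symm.norm_map l2]
    simp only [map_add, map_sub, map_smul, LinearIsometryEquiv.map_smulₛₗ]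
    rw [← real_inner_self_eq_norm_sq, ← real_inner_self_eq_norm_sq, ← real_inner_self_eq_norm_sq,
      ← real_inner_self_eq_norm_sq]
    simp only [inner_add_left, inner_add_right, inner_sub_left, inner_sub_right,
      real_inner_smul_left, real_inner_smul_right, conj_trivial]
    linear_combination (⟪(InnerProductSpace.toDual ℝ E).symm l1, (InnerProductSpace.toDual ℝ E).symm l1⟫ +
      ⟪(InnerProductSpace.toDual ℝ E).symm l2, (InnerProductSpace.toDual ℝ E).symm l2⟫) * h
  have key' : (‖a • l1 + b • l2‖ ^ 2 + ‖b • l1 - a • l2‖ ^ 2 : ℂ) = ‖l1‖ ^ 2 + ‖l2‖ ^ 2 := by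
    exact_mod_cast key
  linear_combination (-1/2 : ℂ) * key'

/-- Stability: `a X + b Z` is standard Gaussian when `a ^ 2 + b ^ 2 = 1`. -/
lemma map_stable {a b : ℝ} (h : a ^ 2 + b ^ 2 = 1) :
    MeasurePreserving (fun p : E × E => a • p.1 + b • p.2)
      ((stdGaussian E).prod (stdGaussian E)) (stdGaussian E) :=
  (measurePreserving_fst (μ := stdGaussian E) (ν := stdGaussian E)).comp (map_rot h)

lemma integrable_norm_pow (k : ℕ) : Integrable (fun x : E => (1 + ‖x‖) ^ k) (stdGaussian E) := by
  have h : MemLp (fun x : E => 1 + ‖x‖) k (stdGaussian E) := by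
    have h1 := (IsGaussian.memLp_id (stdGaussian E) k (by simp)).norm
    exact (memLp_const (1 : ℝ)).add h1
  rcases Nat.eq_zero_or_pos k with rfl | hk
  · simp
  · have := h.integrable_norm_pow hk.ne'
    refine this.congr (Filter.Eventually.of_forall fun x => ?_)
    simp only [Real.norm_eq_abs]
    rw [abs_of_nonneg (by positivity)]

/-- Measurable functions of at most linear growth: the class on which the Ornstein–Uhlenbeck
calculus is developed. -/
def LG (f : E → ℝ) : Prop := Measurable f ∧ ∃ C, 0 ≤ C ∧ ∀ x, |f x| ≤ C * (1 + ‖x‖)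

lemma LG.meas {f : E → ℝ} (hf : LG f) : Measurable f := hf.1

lemma LG.of_bdd {f : E → ℝ} (hf : Measurable f) (C : ℝ) (h : ∀ x, |f x| ≤ C) : LG f := by
  refine ⟨hf, |C|, abs_nonneg _, fun x => (h x).trans ((le_abs_self C).trans ?_)⟩
  nlinarith [abs_nonneg C, norm_nonneg x, mul_nonneg (abs_nonneg C) (norm_nonneg x)]

lemma LG.const (c : ℝ) : LG (fun _ : E => c) := LG.of_bdd measurable_const |c| fun _ => le_rfl

lemma LG.inner (v : E) : LG (fun x : E => ⟪v, x⟫) := by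
  refine ⟨by fun_prop, ‖v‖, norm_nonneg _, fun x => (abs_real_inner_le_norm v x).trans ?_⟩
  nlinarith [norm_nonneg v, norm_nonneg x]

lemma LG.add {f g : E → ℝ} (hf : LG f) (hg : LG g) : LG (fun x => f x + g x) := by
  obtain ⟨C, hC, h1⟩ := hf.2
  obtain ⟨D, hD, h2⟩ := hg.2
  refine ⟨hf.1.add hg.1, C + D, by positivity, fun x => (abs_add_le _ _).trans ?_⟩
  linarith [h1 x, h2 x]

lemma LG.const_mul {f : E → ℝ} (c : ℝ) (hf : LG f) : LG (fun x => c * f x) := by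
  obtain ⟨C, hC, h1⟩ := hf.2
  refine ⟨hf.1.const_mul c, |c| * C, by positivity, fun x => ?_⟩
  rw [abs_mul, mul_assoc]
  exact mul_le_mul_of_nonneg_left (h1 x) (abs_nonneg c)

lemma LG.sub {f g : E → ℝ} (hf : LG f) (hg : LG g) : LG (fun x => f x - g x) := by
  have := hf.add (hg.const_mul (-1))
  simpa [sub_eq_add_neg] using this

lemma LG.integrable {f : E → ℝ} (hf : LG f) : Integrable f (stdGaussian E) := by
  obtain ⟨C, hC, h1⟩ := hf.2
  refine ((integrable_norm_pow (E := E) 1).const_mul C).mono' hf.1.aestronglyMeasurable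
    (Filter.Eventually.of_forall fun x => ?_)
  simpa using h1 x

lemma LG.integrable_mul {f g : E → ℝ} (hf : LG f) (hg : LG g) :
    Integrable (fun x => f x * g x) (stdGaussian E) := by
  obtain ⟨C, hC, h1⟩ := hf.2
  obtain ⟨D, hD, h2⟩ := hg.2
  refine ((integrable_norm_pow (E := E) 2).const_mul (C * D)).mono'
    (hf.1.mul hg.1).aestronglyMeasurable (Filter.Eventually.of_forall fun x => ?_)
  rw [Real.norm_eq_abs, abs_mul]
  calc |f x| * |g x| ≤ (C * (1 + ‖x‖)) * (D * (1 + ‖x‖)) :=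
        mul_le_mul (h1 x) (h2 x) (abs_nonneg _) (by positivity)
    _ = _ := by ring

/-- Composition with an affine-type map `y ↦ a x + b y`. -/
lemma LG.comp_affine {f : E → ℝ} (hf : LG f) (a b : ℝ) (x : E) :
    LG (fun y => f (a • x + b • y)) := by
  obtain ⟨C, hC, h1⟩ := hf.2
  refine ⟨hf.1.comp (by fun_prop), C * (1 + ‖a • x‖ + |b|), by positivity, fun y => (h1 _).trans ?_⟩
  rw [mul_assoc]
  refine mul_le_mul_of_nonneg_left ?_ hC
  have := norm_add_le (a • x) (b • y)
  rw [norm_smul b y, Real.norm_eq_abs] at this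
  nlinarith [norm_nonneg (a • x), norm_nonneg y, abs_nonneg b,
    mul_nonneg (norm_nonneg (a • x)) (norm_nonneg y)]

lemma norm_lin_le (a b : ℝ) (p : E × E) :
    1 + ‖a • p.1 + b • p.2‖ ≤ (1 + |a| + |b|) * ((1 + ‖p.1‖) * (1 + ‖p.2‖)) := by
  have h := norm_add_le (a • p.1) (b • p.2)
  rw [norm_smul, norm_smul, Real.norm_eq_abs, Real.norm_eq_abs] at h
  have h1 := norm_nonneg p.1
  have h2 := norm_nonneg p.2
  have h3 := mul_nonneg h1 h2
  have ha := abs_nonneg a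
  have hb := abs_nonneg b
  nlinarith [mul_nonneg ha h1, mul_nonneg ha h2, mul_nonneg hb h1, mul_nonneg hb h2,
    mul_nonneg ha h3, mul_nonneg hb h3]

lemma LG.integrable_prod {f g : E → ℝ} (hf : LG f) (hg : LG g) (a b a' b' : ℝ) :
    Integrable (fun p : E × E => f (a • p.1 + b • p.2) * g (a' • p.1 + b' • p.2))
      ((stdGaussian E).prod (stdGaussian E)) := by
  obtain ⟨C, hC, h1⟩ := hf.2
  obtain ⟨D, hD, h2⟩ := hg.2
  refine (((integrable_norm_pow (E := E) 2).mul_prod (integrable_norm_pow (E := E) 2)).const_mul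
    (C * (1 + |a| + |b|) * (D * (1 + |a'| + |b'|)))).mono' ?_ (Filter.Eventually.of_forall fun p => ?_)
  · exact ((hf.1.comp (by fun_prop)).mul (hg.1.comp (by fun_prop))).aestronglyMeasurable
  · rw [Real.norm_eq_abs, abs_mul]
    have i1 := (h1 (a • p.1 + b • p.2)).trans (mul_le_mul_of_nonneg_left (norm_lin_le a b p) hC)
    have i2 := (h2 (a' • p.1 + b' • p.2)).trans
      (mul_le_mul_of_nonneg_left (norm_lin_le a' b' p) hD)
    calc _ ≤ _ := mul_le_mul i1 i2 (abs_nonneg _) (by positivity)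
      _ = _ := by ring

/-- The Ornstein–Uhlenbeck operator on a general Euclidean space. -/
def ou (ρ : ℝ) (f : E → ℝ) (x : E) : ℝ := ∫ y, f (ρ • x + √(1 - ρ ^ 2) • y) ∂stdGaussian E

/-- The bilinear form `⟨f, T_ρ g⟩`. -/
def S (ρ : ℝ) (f g : E → ℝ) : ℝ := ∫ x, f x * ou ρ g x ∂stdGaussian E

lemma sq_add_sqrt {ρ : ℝ} (h : |ρ| ≤ 1) : ρ ^ 2 + √(1 - ρ ^ 2) ^ 2 = 1 := by
  rw [Real.sq_sqrt (by nlinarith [abs_le.1 h, sq_abs ρ, abs_nonneg ρ])]; ring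

lemma LG.ou {f : E → ℝ} (hf : LG f) (ρ : ℝ) : LG (ou ρ f) := by
  obtain ⟨C, hC, h1⟩ := hf.2
  refine ⟨?_, C * (1 + |ρ| + |√(1 - ρ ^ 2)|) * ∫ y : E, (1 + ‖y‖) ∂stdGaussian E, ?_, fun x => ?_⟩
  · have : StronglyMeasurable (fun p : E × E => f (ρ • p.1 + √(1 - ρ ^ 2) • p.2)) :=
      (hf.1.comp (by fun_prop)).stronglyMeasurable
    exact (this.integral_prod_right (ν := stdGaussian E)).measurable
  · have : 0 ≤ ∫ y : E, (1 + ‖y‖) ∂stdGaussian E := integral_nonneg fun y => by positivity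
    positivity
  · have hi : Integrable (fun y : E => 1 + ‖y‖) (stdGaussian E) := by
      simpa using integrable_norm_pow (E := E) 1
    calc |RobustBorell.ou ρ f x| ≤ ∫ y, |f (ρ • x + √(1 - ρ ^ 2) • y)| ∂stdGaussian E :=
          abs_integral_le_integral_abs
      _ ≤ ∫ y, C * (1 + |ρ| + |√(1 - ρ ^ 2)|) * (1 + ‖x‖) * (1 + ‖y‖) ∂stdGaussian E := by
          refine integral_mono (hf.comp_affine _ _ _).integrable.abs (hi.const_mul _) fun y => ?_
          refine (h1 _).trans ((mul_le_mul_of_nonneg_left (norm_lin_le _ _ (x, y)) hC).trans ?_)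
          simp only []
          apply le_of_eq; ring
      _ = _ := by rw [integral_const_mul]; ring

lemma S_eq_prod {f g : E → ℝ} (hf : LG f) (hg : LG g) (ρ : ℝ) :
    S ρ f g = ∫ p : E × E, f p.1 * g (ρ • p.1 + √(1 - ρ ^ 2) • p.2)
      ∂((stdGaussian E).prod (stdGaussian E)) := by
  have hi := hf.integrable_prod hg 1 0 ρ (√(1 - ρ ^ 2))
  simp only [one_smul, zero_smul, add_zero] at hi
  rw [integral_prod _ hi]
  simp only [S, ou, integral_const_mul]

lemma S_symm {f g : E → ℝ} (hf : LG f) (hg : LG g) {ρ : ℝ} (h : |ρ| ≤ 1) :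
    S ρ f g = S ρ g f := by
  rw [S_eq_prod hf hg, S_eq_prod hg hf]
  have hm := map_rot (E := E) (sq_add_sqrt h)
  set c := √(1 - ρ ^ 2) with hc
  have h0 := sq_add_sqrt h
  rw [← hc] at h0
  rw [← hm.map_eq, integral_map (by fun_prop)]
  · rw [hm.map_eq]
    congr 1 with p
    rw [mul_comm]
    congr 2
    have : p.1 = (ρ ^ 2 + c ^ 2) • p.1 := by rw [h0, one_smul]
    refine Eq.trans ?_ this.symm
    dsimp only
    module
  · rw [hm.map_eq]
    exact ((hf.1.comp (by fun_prop)).mul (hg.1.comp (by fun_prop))).aestronglyMeasurable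

lemma ou_one {f : E → ℝ} : ou 1 f = f := by ext x; simp [ou]

lemma ou_zero {f : E → ℝ} (x : E) : ou 0 f x = ∫ y, f y ∂stdGaussian E := by simp [ou]

/-- Two independent Gaussian increments combine into one. -/
lemma integral_two {f : E → ℝ} (hf : LG f) (x : E) (a b : ℝ) :
    ∫ y, ∫ z, f (x + (a • y + b • z)) ∂stdGaussian E ∂stdGaussian E =
      ∫ y, f (x + √(a ^ 2 + b ^ 2) • y) ∂stdGaussian E := by
  set r := √(a ^ 2 + b ^ 2) with hr
  have hr2 : r ^ 2 = a ^ 2 + b ^ 2 := Real.sq_sqrt (by positivity)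
  by_cases h0 : r = 0
  · have : a ^ 2 + b ^ 2 = 0 := by rw [← hr2, h0]; ring
    have ha : a = 0 := by nlinarith [sq_nonneg a, sq_nonneg b]
    have hb : b = 0 := by nlinarith [sq_nonneg a, sq_nonneg b]
    simp [h0, ha, hb]
  have hm := map_stable (E := E) (a := a / r) (b := b / r) (by field_simp; linarith)
  have hfx : LG (fun y => f (x + y)) := by simpa using hf.comp_affine 1 1 x
  have hi := hfx.integrable_prod (LG.const 1) a b 0 0
  simp only [mul_one] at hi
  rw [← integral_prod (fun p : E × E => f (x + (a • p.1 + b • p.2))) hi]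
  conv_rhs => rw [← hm.map_eq]
  rw [integral_map (f := fun y : E => f (x + r • y)) (by fun_prop)
    (hf.1.comp (by fun_prop : Measurable fun y : E => x + r • y)).aestronglyMeasurable]
  congr 1 with p
  congr 2
  rw [smul_add, smul_smul, smul_smul, mul_div_cancel₀ _ h0, mul_div_cancel₀ _ h0]

lemma ou_ou {f : E → ℝ} (hf : LG f) {ρ σ : ℝ} (hρ : |ρ| ≤ 1) (hσ : |σ| ≤ 1) (x : E) :
    ou ρ (ou σ f) x = ou (σ * ρ) f x := by
  have h1 := integral_two hf ((σ * ρ) • x) (σ * √(1 - ρ ^ 2)) (√(1 - σ ^ 2))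
  have e : (σ * √(1 - ρ ^ 2)) ^ 2 + √(1 - σ ^ 2) ^ 2 = 1 - (σ * ρ) ^ 2 := by
    have := sq_add_sqrt hρ
    have := sq_add_sqrt hσ
    rw [mul_pow]
    linear_combination σ ^ 2 * (sq_add_sqrt hρ) + sq_add_sqrt hσ
  rw [e] at h1
  rw [ou, ou, ← h1]
  refine integral_congr_ae (Filter.Eventually.of_forall fun y => ?_)
  simp only [ou]
  congr 1 with z
  congr 1
  module

lemma S_ou {f g : E → ℝ} (hg : LG g) {ρ σ : ℝ} (hρ : |ρ| ≤ 1) (hσ : |σ| ≤ 1) :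
    S ρ f (ou σ g) = S (σ * ρ) f g := by
  simp only [S, ou_ou hg hρ hσ]

lemma S_one (f g : E → ℝ) : S 1 f g = ∫ x, f x * g x ∂stdGaussian E := by
  simp only [S, ou_one]

/-- `⟨f, T_{στ} g⟩ = ⟨T_σ f, T_τ g⟩`. -/
lemma S_split {f g : E → ℝ} (hf : LG f) (hg : LG g) {ρ σ : ℝ} (hρ : |ρ| ≤ 1) (hσ : |σ| ≤ 1) :
    S (σ * ρ) f g = ∫ x, ou σ f x * ou ρ g x ∂stdGaussian E := by
  rw [mul_comm, ← S_ou hg hσ hρ, S_symm hf (hg.ou ρ) hσ, S]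
  simp only [mul_comm]

/-- `⟨T_s f, T_ρ T_t g⟩ = ⟨f, T_{stρ} g⟩`, by self-adjointness and the semigroup law. -/
lemma S_split3 {f g : E → ℝ} (hf : LG f) (hg : LG g) {ρ s t : ℝ} (hρ : |ρ| ≤ 1) (hs : |s| ≤ 1)
    (ht : |t| ≤ 1) : S ρ (ou s f) (ou t g) = S (s * t * ρ) f g := by
  have h1 : |t * ρ| ≤ 1 := by
    rw [abs_mul]; exact mul_le_one₀ ht (abs_nonneg _) hρ
  rw [S_ou hg hρ ht, S_symm (hf.ou s) hg h1, S_ou hf h1 hs, S_symm hg hf]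
  · congr 1; ring
  · rw [abs_mul]; exact mul_le_one₀ hs (abs_nonneg _) h1

lemma S_sqrt {f g : E → ℝ} (hf : LG f) (hg : LG g) {ρ : ℝ} (h0 : 0 ≤ ρ) (h1 : ρ ≤ 1) :
    S ρ f g = ∫ x, ou (√ρ) f x * ou (√ρ) g x ∂stdGaussian E := by
  have : |√ρ| ≤ 1 := by
    rw [abs_of_nonneg (Real.sqrt_nonneg _)]; exact Real.sqrt_le_one.2 h1
  rw [← S_split hf hg this this, Real.mul_self_sqrt h0]

lemma S_self_nonneg {f : E → ℝ} (hf : LG f) {ρ : ℝ} (h0 : 0 ≤ ρ) (h1 : ρ ≤ 1) : 0 ≤ S ρ f f := by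
  rw [S_sqrt hf hf h0 h1]
  exact integral_nonneg fun x => mul_self_nonneg _

lemma ou_add {f g : E → ℝ} (hf : LG f) (hg : LG g) (ρ : ℝ) (x : E) :
    ou ρ (fun y => f y + g y) x = ou ρ f x + ou ρ g x := by
  simp only [ou]
  exact integral_add (hf.comp_affine _ _ _).integrable (hg.comp_affine _ _ _).integrable

lemma ou_const_mul (c : ℝ) (f : E → ℝ) (ρ : ℝ) (x : E) :
    ou ρ (fun y => c * f y) x = c * ou ρ f x := by
  simp only [ou]
  exact integral_const_mul _ _

lemma ou_sub {f g : E → ℝ} (hf : LG f) (hg : LG g) (ρ : ℝ) (x : E) :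
    ou ρ (fun y => f y - g y) x = ou ρ f x - ou ρ g x := by
  simp only [ou]
  exact integral_sub (hf.comp_affine _ _ _).integrable (hg.comp_affine _ _ _).integrable

lemma S_add_right {f g h : E → ℝ} (hf : LG f) (hg : LG g) (hh : LG h) (ρ : ℝ) :
    S ρ f (fun x => g x + h x) = S ρ f g + S ρ f h := by
  simp only [S, ou_add hg hh, mul_add]
  exact integral_add (hf.integrable_mul (hg.ou ρ)) (hf.integrable_mul (hh.ou ρ))

lemma S_sub_right {f g h : E → ℝ} (hf : LG f) (hg : LG g) (hh : LG h) (ρ : ℝ) :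
    S ρ f (fun x => g x - h x) = S ρ f g - S ρ f h := by
  simp only [S, ou_sub hg hh, mul_sub]
  exact integral_sub (hf.integrable_mul (hg.ou ρ)) (hf.integrable_mul (hh.ou ρ))

lemma S_sub_left {f g h : E → ℝ} (hf : LG f) (hg : LG g) (hh : LG h) (ρ : ℝ) :
    S ρ (fun x => f x - g x) h = S ρ f h - S ρ g h := by
  simp only [S, sub_mul]
  exact integral_sub (hf.integrable_mul (hh.ou ρ)) (hg.integrable_mul (hh.ou ρ))

lemma S_add_left {f g h : E → ℝ} (hf : LG f) (hg : LG g) (hh : LG h) (ρ : ℝ) :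
    S ρ (fun x => f x + g x) h = S ρ f h + S ρ g h := by
  simp only [S, add_mul]
  exact integral_add (hf.integrable_mul (hh.ou ρ)) (hg.integrable_mul (hh.ou ρ))

lemma S_const_mul_right (c : ℝ) (f g : E → ℝ) (ρ : ℝ) :
    S ρ f (fun x => c * g x) = c * S ρ f g := by
  simp only [S, ou_const_mul, ← integral_const_mul]
  congr 1 with x; ring

lemma S_const_mul_left (c : ℝ) (f g : E → ℝ) (ρ : ℝ) :
    S ρ (fun x => c * f x) g = c * S ρ f g := by
  simp only [S, ← integral_const_mul]
  congr 1 with x; ring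

lemma ou_const (c : ℝ) (ρ : ℝ) (x : E) : ou ρ (fun _ => c) x = c := by
  simp [ou]

lemma integral_ou {f : E → ℝ} (hf : LG f) {ρ : ℝ} (h : |ρ| ≤ 1) :
    ∫ x, ou ρ f x ∂stdGaussian E = ∫ x, f x ∂stdGaussian E := by
  have := S_symm (LG.const 1) hf h
  simpa [S, ou_const] using this

lemma integral_inner (v : E) : ∫ x, ⟪v, x⟫ ∂stdGaussian E = 0 := by
  have := integral_strongDual_stdGaussian (InnerProductSpace.toDual ℝ E v)
  simpa using this

lemma ou_inner (v : E) (ρ : ℝ) (x : E) : ou ρ (fun y => ⟪v, y⟫) x = ρ * ⟪v, x⟫ := by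
  simp only [ou, inner_add_right, real_inner_smul_right]
  rw [integral_add (integrable_const _) ((LG.inner v).integrable.const_mul _), integral_const_mul,
    integral_const_mul, integral_inner]
  simp

lemma integral_inner_inner (v w : E) : ∫ x, ⟪v, x⟫ * ⟪w, x⟫ ∂stdGaussian E = ⟪v, w⟫ := by
  have hsq : ∀ v : E, ∫ x, ⟪v, x⟫ * ⟪v, x⟫ ∂stdGaussian E = ⟪v, v⟫ := by
    intro v
    have h := variance_dual_stdGaussian (InnerProductSpace.toDual ℝ E v)
    rw [variance_of_integral_eq_zero (by fun_prop) (by simpa using integral_inner v)] at h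
    simp only [InnerProductSpace.toDual_apply_apply, LinearIsometryEquiv.norm_map] at h
    rw [real_inner_self_eq_norm_sq, ← h]
    congr 1 with x; ring
  have h1 := hsq (v + w)
  simp only [inner_add_left, inner_add_right] at h1
  have e : ∀ x, (⟪v, x⟫ + ⟪w, x⟫) * (⟪v, x⟫ + ⟪w, x⟫) =
      ⟪v, x⟫ * ⟪v, x⟫ + ⟪w, x⟫ * ⟪w, x⟫ + 2 * (⟪v, x⟫ * ⟪w, x⟫) := fun x => by ring
  simp_rw [e] at h1
  have i1 : Integrable (fun x => ⟪v, x⟫ * ⟪v, x⟫ + ⟪w, x⟫ * ⟪w, x⟫) (stdGaussian E) :=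
    ((LG.inner v).integrable_mul (LG.inner v)).add ((LG.inner w).integrable_mul (LG.inner w))
  rw [integral_add i1 (((LG.inner v).integrable_mul (LG.inner w)).const_mul 2),
    integral_add ((LG.inner v).integrable_mul (LG.inner v))
      ((LG.inner w).integrable_mul (LG.inner w)), hsq, hsq, integral_const_mul,
      real_inner_comm v w] at h1
  linarith

end

/-! ### The Cauchy–Schwarz inequality -/

section

variable {E : Type*} [NormedAddCommGroup E] [InnerProductSpace ℝ E] [FiniteDimensional ℝ E]
  [MeasurableSpace E] [BorelSpace E]

/-- Cauchy–Schwarz for real functions. -/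
lemma cs {X : Type*} [MeasurableSpace X] {μ : Measure X} {f g : X → ℝ}
    (hf : Integrable (fun x => f x * f x) μ) (hg : Integrable (fun x => g x * g x) μ)
    (hfg : Integrable (fun x => f x * g x) μ) :
    (∫ x, f x * g x ∂μ) ^ 2 ≤ (∫ x, f x * f x ∂μ) * ∫ x, g x * g x ∂μ := by
  have h : ∀ t : ℝ, 0 ≤ (∫ x, g x * g x ∂μ) * (t * t) + (2 * ∫ x, f x * g x ∂μ) * t +
      ∫ x, f x * f x ∂μ := by
    intro t
    have e : (∫ x, g x * g x ∂μ) * (t * t) + (2 * ∫ x, f x * g x ∂μ) * t + ∫ x, f x * f x ∂μ =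
        ∫ x, (f x + t * g x) * (f x + t * g x) ∂μ := by
      have e2 : ∀ x, (f x + t * g x) * (f x + t * g x) =
          f x * f x + (2 * t) * (f x * g x) + (t * t) * (g x * g x) := fun x => by ring
      simp_rw [e2]
      have i1 : Integrable (fun x => f x * f x + (2 * t) * (f x * g x)) μ :=
        hf.add (hfg.const_mul _)
      rw [integral_add i1 (hg.const_mul _), integral_add hf (hfg.const_mul _),
        integral_const_mul, integral_const_mul]
      ring
    rw [e]
    exact integral_nonneg fun x => mul_self_nonneg _
  have := discrim_le_zero h
  rw [discrim] at this
  nlinarith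

/-! ### The Cameron–Martin formula and regularity of `T_s f` -/

/-- The Cameron–Martin density `exp(⟨v, x⟩ - ‖v‖² / 2)`. -/
def cmd (v x : E) : ℝ := Real.exp (⟪v, x⟫ - ‖v‖ ^ 2 / 2)

/-- The Cameron–Martin formula: translating the Gaussian by `v` amounts to multiplying by `cmd v`. No
integrability is needed, as both sides are the same integral after a change of variables. -/
lemma cameron_martin (v : E) (f : E → ℝ) :
    ∫ x, f (x + v) ∂stdGaussian E = ∫ x, f x * cmd v x ∂stdGaussian E := by
  have hpos : ∀ x : E, 0 ≤ (2 * π) ^ (-(Module.finrank ℝ E : ℝ) / 2) * Real.exp (-‖x‖ ^ 2 / 2) :=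
    fun x => by positivity
  rw [stdGaussian_eq_withDensity, integral_withDensity_eq_integral_toReal_smul₀
    (by fun_prop) (by simp), integral_withDensity_eq_integral_toReal_smul₀
    (by fun_prop) (by simp)]
  simp_rw [ENNReal.toReal_ofReal (hpos _)]
  rw [← integral_add_right_eq_self (μ := volume) (fun x : E =>
    ((2 * π) ^ (-(Module.finrank ℝ E : ℝ) / 2) * Real.exp (-‖x‖ ^ 2 / 2)) • (f x * cmd v x)) v]
  congr 1 with x
  simp only [smul_eq_mul, cmd]
  have : Real.exp (-‖x‖ ^ 2 / 2) = Real.exp (-‖x + v‖ ^ 2 / 2) *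
      Real.exp (⟪v, x + v⟫ - ‖v‖ ^ 2 / 2) := by
    rw [← Real.exp_add]
    congr 1
    rw [norm_add_sq_real, inner_add_right, real_inner_self_eq_norm_sq, real_inner_comm]
    ring
  rw [this]; ring

lemma integral_cmd (v : E) : ∫ x, cmd v x ∂stdGaussian E = 1 := by
  have := cameron_martin v (fun _ => 1)
  simpa using this.symm

lemma integrable_cmd (v : E) : Integrable (cmd v) (stdGaussian E) := by
  by_contra h
  have := integral_undef h
  rw [integral_cmd] at this
  norm_num at this

lemma cmd_sq (v x : E) : cmd v x * cmd v x = Real.exp (‖v‖ ^ 2) * cmd ((2 : ℝ) • v) x := by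
  simp only [cmd, ← Real.exp_add]
  congr 1
  rw [real_inner_smul_left, norm_smul]
  simp; ring

lemma integrable_cmd_sq (v : E) : Integrable (fun x => cmd v x * cmd v x) (stdGaussian E) := by
  simp_rw [cmd_sq]
  exact (integrable_cmd _).const_mul _

lemma memLp_cmd (v : E) : MemLp (cmd v) 2 (stdGaussian E) := by
  rw [memLp_two_iff_integrable_sq (by unfold cmd; fun_prop)]
  simpa [sq] using integrable_cmd_sq v

lemma LG.memLp {f : E → ℝ} (hf : LG f) : MemLp f 2 (stdGaussian E) := by
  rw [memLp_two_iff_integrable_sq hf.1.aestronglyMeasurable]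
  simpa [sq] using hf.integrable_mul hf

lemma integral_abs_inner_le (v : E) : ∫ x, |⟪v, x⟫| ∂stdGaussian E ≤ ‖v‖ := by
  have hl := LG.inner v
  have h := cs (μ := stdGaussian E) (f := fun x => |⟪v, x⟫|) (g := fun _ => 1)
    (by simpa using hl.integrable_mul hl) (by simp) (by simpa using hl.integrable.abs)
  simp only [abs_mul_abs_self, integral_inner_inner, mul_one] at h
  simp only [integral_const, probReal_univ, smul_eq_mul, mul_one,
    real_inner_self_eq_norm_sq] at h
  exact abs_le_of_sq_le_sq' h (norm_nonneg _) |>.2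

/-- First-order expansion of the Cameron–Martin density in `L¹`. For `‖v‖ ≤ 1` this follows from the
squared `L²` norm of the remainder, which is `e^{‖v‖²} - 1 - ‖v‖²`; for larger `v` it is the triangle
inequality. -/
lemma integral_cmd_second (v : E) :
    ∫ x, |cmd v x - 1 - ⟪v, x⟫| ∂stdGaussian E ≤ 3 * ‖v‖ ^ 2 := by
  have hl := LG.inner v
  have hi1 : Integrable (fun x => cmd v x - 1) (stdGaussian E) :=
    (integrable_cmd v).sub (integrable_const 1)
  have hQ : Integrable (fun x => cmd v x - 1 - ⟪v, x⟫) (stdGaussian E) := hi1.sub hl.integrable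
  rcases le_or_gt ‖v‖ 1 with hv | hv
  · have hcl : Integrable (fun x => ⟪v, x⟫ * cmd v x) (stdGaussian E) :=
      hl.memLp.integrable_mul (memLp_cmd v)
    have icl : ∫ x, ⟪v, x⟫ * cmd v x ∂stdGaussian E = ‖v‖ ^ 2 := by
      rw [← cameron_martin v (fun x => ⟪v, x⟫)]
      simp only [inner_add_right]
      rw [integral_add hl.integrable (integrable_const _), integral_inner]
      simp
    have icc : ∫ x, cmd v x * cmd v x ∂stdGaussian E = Real.exp (‖v‖ ^ 2) := by
      simp_rw [cmd_sq]
      rw [integral_const_mul, integral_cmd, mul_one]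
    have e : ∀ x, (cmd v x - 1 - ⟪v, x⟫) * (cmd v x - 1 - ⟪v, x⟫) =
        ((cmd v x * cmd v x + 1) + ⟪v, x⟫ * ⟪v, x⟫) +
        (((-2) * cmd v x + 2 * ⟪v, x⟫) + (-2) * (⟪v, x⟫ * cmd v x)) := fun x => by ring
    have j1 : Integrable (fun x => cmd v x * cmd v x + 1) (stdGaussian E) :=
      (integrable_cmd_sq v).add (integrable_const 1)
    have j2 : Integrable (fun x => (cmd v x * cmd v x + 1) + ⟪v, x⟫ * ⟪v, x⟫) (stdGaussian E) :=
      j1.add (hl.integrable_mul hl)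
    have j3 : Integrable (fun x => (-2) * cmd v x + 2 * ⟪v, x⟫) (stdGaussian E) :=
      ((integrable_cmd v).const_mul _).add (hl.integrable.const_mul _)
    have j4 : Integrable (fun x => ((-2) * cmd v x + 2 * ⟪v, x⟫) + (-2) * (⟪v, x⟫ * cmd v x))
      (stdGaussian E) := j3.add (hcl.const_mul _)
    have hQQ : Integrable (fun x => (cmd v x - 1 - ⟪v, x⟫) * (cmd v x - 1 - ⟪v, x⟫))
        (stdGaussian E) := by
      simp_rw [e]; exact j2.add j4
    have iQQ : ∫ x, (cmd v x - 1 - ⟪v, x⟫) * (cmd v x - 1 - ⟪v, x⟫) ∂stdGaussian E =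
        Real.exp (‖v‖ ^ 2) - 1 - ‖v‖ ^ 2 := by
      simp_rw [e]
      rw [integral_add j2 j4, integral_add j1 (hl.integrable_mul hl),
        integral_add (integrable_cmd_sq v) (integrable_const 1),
        integral_add j3 (hcl.const_mul _),
        integral_add ((integrable_cmd v).const_mul _) (hl.integrable.const_mul _),
        integral_const_mul, integral_const_mul, integral_const_mul, icl, icc, integral_cmd,
        integral_inner, integral_inner_inner, real_inner_self_eq_norm_sq]
      simp; ring
    have h := cs (μ := stdGaussian E) (f := fun x => |cmd v x - 1 - ⟪v, x⟫|) (g := fun _ => 1)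
      (by simpa using hQQ) (by simp) (by simpa using hQ.abs)
    simp only [abs_mul_abs_self, iQQ, mul_one] at h
    simp only [integral_const, probReal_univ, smul_eq_mul, mul_one] at h
    have hv2 : ‖v‖ ^ 2 ≤ 1 := by nlinarith [norm_nonneg v]
    have h3 := Real.abs_exp_sub_one_sub_id_le (x := ‖v‖ ^ 2) (by rwa [abs_of_nonneg (by positivity)])
    have h4 := (le_abs_self _).trans h3
    have h5 := abs_le_of_sq_le_sq' (h.trans h4) (by positivity) |>.2
    nlinarith [norm_nonneg v]
  · have : ∫ x, |cmd v x - 1 - ⟪v, x⟫| ∂stdGaussian E ≤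
        ∫ x, (cmd v x + 1) + |⟪v, x⟫| ∂stdGaussian E := by
      refine integral_mono hQ.abs (((integrable_cmd v).add (integrable_const 1)).add
        hl.integrable.abs) fun x => ?_
      have h0 : 0 ≤ cmd v x := (Real.exp_pos _).le
      simp only [Pi.add_apply]
      calc |cmd v x - 1 - ⟪v, x⟫| ≤ |cmd v x - 1| + |⟪v, x⟫| := abs_sub _ _
        _ ≤ _ := by
          gcongr
          rw [abs_le]; constructor <;> linarith
    refine this.trans ?_
    have j1 : Integrable (fun x => cmd v x + 1) (stdGaussian E) :=
      (integrable_cmd v).add (integrable_const 1)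
    rw [integral_add j1 hl.integrable.abs, integral_add (integrable_cmd v) (integrable_const 1),
      integral_cmd]
    have := integral_abs_inner_le v
    simp
    nlinarith

lemma integral_cmd_first (v : E) : ∫ x, |cmd v x - 1| ∂stdGaussian E ≤ 4 * ‖v‖ := by
  have hl := LG.inner v
  have hi1 : Integrable (fun x => cmd v x - 1) (stdGaussian E) :=
    (integrable_cmd v).sub (integrable_const 1)
  have hQ : Integrable (fun x => cmd v x - 1 - ⟪v, x⟫) (stdGaussian E) := hi1.sub hl.integrable
  rcases le_or_gt ‖v‖ 1 with hv | hv
  · have : ∫ x, |cmd v x - 1| ∂stdGaussian E ≤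
        ∫ x, |cmd v x - 1 - ⟪v, x⟫| + |⟪v, x⟫| ∂stdGaussian E := by
      refine integral_mono hi1.abs (hQ.abs.add hl.integrable.abs) fun x => ?_
      simpa using abs_add_le (cmd v x - 1 - ⟪v, x⟫) ⟪v, x⟫
    rw [integral_add hQ.abs hl.integrable.abs] at this
    nlinarith [integral_cmd_second v, integral_abs_inner_le v, norm_nonneg v]
  · have j1 : Integrable (fun x => cmd v x + 1) (stdGaussian E) :=
      (integrable_cmd v).add (integrable_const 1)
    have : ∫ x, |cmd v x - 1| ∂stdGaussian E ≤ ∫ x, cmd v x + 1 ∂stdGaussian E := by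
      refine integral_mono hi1.abs j1 fun x => ?_
      have h0 : 0 ≤ cmd v x := (Real.exp_pos _).le
      simp only [abs_le]; constructor <;> linarith
    rw [integral_add (integrable_cmd v) (integrable_const 1), integral_cmd] at this
    simp at this
    linarith

lemma integral_bdd_mul_le {f g : E → ℝ} (hb : ∀ x, |f x| ≤ 1) (hf : Measurable f)
    (hg : Integrable g (stdGaussian E)) :
    |∫ x, f x * g x ∂stdGaussian E| ≤ ∫ x, |g x| ∂stdGaussian E := by
  refine abs_integral_le_integral_abs.trans (integral_mono_of_nonneg
    (Filter.Eventually.of_forall fun x => abs_nonneg _) hg.abs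
    (Filter.Eventually.of_forall fun x => ?_))
  simp only [abs_mul]
  exact mul_le_of_le_one_left (abs_nonneg _) (hb x)

/-- A translation in the argument of `T_s f` can be moved to the Gaussian density; this is how `T_s f`
inherits smoothness from the density and not from `f`. -/
lemma ou_shift (f : E → ℝ) {s : ℝ} (hc : 0 < √(1 - s ^ 2)) (x h : E) :
    ou s f (x + h) = ∫ z, f (s • x + √(1 - s ^ 2) • z) * cmd ((s / √(1 - s ^ 2)) • h) z
      ∂stdGaussian E := by
  rw [← cameron_martin _ (fun z => f (s • x + √(1 - s ^ 2) • z)), ou]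
  congr 1 with z
  congr 1
  rw [smul_add (√(1 - s ^ 2)), smul_smul, mul_div_cancel₀ _ hc.ne']
  module

lemma integrable_bdd_mul {f g : E → ℝ} (hb : ∀ x, |f x| ≤ 1) (hf : Measurable f)
    (hg : Integrable g (stdGaussian E)) : Integrable (fun x => f x * g x) (stdGaussian E) :=
  hg.bdd_mul (c := 1) hf.aestronglyMeasurable (Filter.Eventually.of_forall hb)

/-- `T_s` of a bounded function is Lipschitz for `s < 1`. -/
lemma ou_lipschitz {f : E → ℝ} (hf : Measurable f) (hb : ∀ x, |f x| ≤ 1) {s : ℝ} (h0 : 0 ≤ s)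
    (h1 : s < 1) (x h : E) :
    |ou s f (x + h) - ou s f x| ≤ 4 * (s / √(1 - s ^ 2)) * ‖h‖ := by
  have hc : 0 < √(1 - s ^ 2) := Real.sqrt_pos.2 (by nlinarith)
  have hm : Measurable (fun z => f (s • x + √(1 - s ^ 2) • z)) := hf.comp (by fun_prop)
  rw [ou_shift f hc, ou, ← integral_sub (integrable_bdd_mul (fun z => hb _) hm (integrable_cmd _))
    (LG.of_bdd hm 1 fun z => hb _).integrable]
  set v := (s / √(1 - s ^ 2)) • h with hv
  have e : ∀ z, f (s • x + √(1 - s ^ 2) • z) * cmd v z - f (s • x + √(1 - s ^ 2) • z) =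
    f (s • x + √(1 - s ^ 2) • z) * (cmd v z - 1) := fun z => by ring
  simp_rw [e]
  refine (integral_bdd_mul_le (fun z => hb _) hm
    ((integrable_cmd v).sub (integrable_const 1))).trans ((integral_cmd_first v).trans ?_)
  rw [hv, norm_smul, Real.norm_eq_abs, abs_of_nonneg (by positivity), mul_assoc]

/-- `T_s` of a bounded function has a quadratic first-order remainder, uniformly. -/
lemma ou_second_order {f : E → ℝ} (hf : Measurable f) (hb : ∀ x, |f x| ≤ 1) {s : ℝ} (h0 : 0 ≤ s)
    (h1 : s < 1) (x : E) :
    ∃ w : E, ∀ h : E, |ou s f (x + h) - ou s f x - ⟪w, h⟫| ≤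
      3 * (s / √(1 - s ^ 2)) ^ 2 * ‖h‖ ^ 2 := by
  have hc : 0 < √(1 - s ^ 2) := Real.sqrt_pos.2 (by nlinarith)
  have hm : Measurable (fun z => f (s • x + √(1 - s ^ 2) • z)) := hf.comp (by fun_prop)
  have hbi : Integrable (fun z => f (s • x + √(1 - s ^ 2) • z) • z) (stdGaussian E) :=
    (IsGaussian.integrable_id (μ := stdGaussian E)).bdd_smul 1 hm.aestronglyMeasurable
      (Filter.Eventually.of_forall fun z => hb _)
  refine ⟨(s / √(1 - s ^ 2)) • ∫ z, f (s • x + √(1 - s ^ 2) • z) • z ∂stdGaussian E, fun h => ?_⟩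
  set v := (s / √(1 - s ^ 2)) • h with hv
  have hw : ⟪(s / √(1 - s ^ 2)) • ∫ z, f (s • x + √(1 - s ^ 2) • z) • z ∂stdGaussian E, h⟫ =
      ∫ z, f (s • x + √(1 - s ^ 2) • z) * ⟪v, z⟫ ∂stdGaussian E := by
    rw [real_inner_smul_left, ← real_inner_smul_right, ← hv, real_inner_comm,
      ← _root_.integral_inner hbi]
    simp only [real_inner_smul_right]
  rw [hw, ou_shift f hc, ou, ← integral_sub (integrable_bdd_mul (fun z => hb _) hm
    (integrable_cmd _)) (LG.of_bdd hm 1 fun z => hb _).integrable]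
  have j1 : Integrable (fun z => f (s • x + √(1 - s ^ 2) • z) * cmd v z -
      f (s • x + √(1 - s ^ 2) • z)) (stdGaussian E) :=
    (integrable_bdd_mul (fun z => hb _) hm (integrable_cmd _)).sub
      (LG.of_bdd hm 1 fun z => hb _).integrable
  rw [← hv, ← integral_sub j1 (integrable_bdd_mul (fun z => hb _) hm (LG.inner v).integrable)]
  have e : ∀ z, f (s • x + √(1 - s ^ 2) • z) * cmd v z - f (s • x + √(1 - s ^ 2) • z) -
      f (s • x + √(1 - s ^ 2) • z) * ⟪v, z⟫ =
    f (s • x + √(1 - s ^ 2) • z) * (cmd v z - 1 - ⟪v, z⟫) := fun z => by ring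
  simp_rw [e]
  refine (integral_bdd_mul_le (fun z => hb _) hm
    (((integrable_cmd v).sub (integrable_const 1)).sub (LG.inner v).integrable)).trans
      ((integral_cmd_second v).trans ?_)
  rw [hv, norm_smul, Real.norm_eq_abs, abs_of_nonneg (by positivity), mul_assoc, mul_pow]

/-! ### Spectral gaps of the Ornstein–Uhlenbeck semigroup -/

lemma S_sq_le {A : E → ℝ} (hA : LG A) {ρ : ℝ} (h0 : 0 ≤ ρ) (h1 : ρ ≤ 1) :
    S ρ A A ^ 2 ≤ S 1 A A * S (ρ ^ 2) A A := by
  have h : |ρ| ≤ 1 := by rwa [abs_of_nonneg h0]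
  have := cs (hA.integrable_mul hA) ((hA.ou ρ).integrable_mul (hA.ou ρ))
    (hA.integrable_mul (hA.ou ρ))
  rw [← S_split hA hA h h, ← sq] at this
  rw [S_one]
  exact this

/-- Decay of `⟨A, T_ε A⟩` of order `d` at `ε = 0` self-improves, by iterating the Cauchy–Schwarz
inequality `⟨A, T_ρ A⟩² ≤ ‖A‖² ⟨A, T_{ρ²} A⟩`, to the sharp spectral bound at every correlation. -/
lemma gap_of_decay {A : E → ℝ} (hA : LG A) (d : ℕ) (C : ℝ)
    (hC : ∀ ε : ℝ, 0 < ε → ε ≤ 1 → |S ε A A| ≤ C * ε ^ d) {ρ : ℝ} (h0 : 0 < ρ) (h1 : ρ ≤ 1) :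
    S ρ A A ≤ ρ ^ d * S 1 A A := by
  have hN0 : 0 ≤ S 1 A A := S_self_nonneg hA zero_le_one le_rfl
  rcases hN0.eq_or_lt with hN | hN
  · have := S_sq_le hA h0.le h1
    rw [← hN, zero_mul] at this
    have : S ρ A A = 0 := by nlinarith
    rw [this, ← hN, mul_zero]
  set N := S 1 A A with hNdef
  -- The inequality `S_sq_le` iterated `j` times; the factor `N` avoids a subtraction in the exponent.
  have key : ∀ j : ℕ, N * S ρ A A ^ (2 ^ j) ≤ N ^ (2 ^ j) * S (ρ ^ (2 ^ j)) A A := by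
    intro j
    induction j with
    | zero => simp
    | succ j ih =>
      have hs := S_self_nonneg hA h0.le h1
      have a1 : (N * S ρ A A ^ (2 ^ j)) ^ 2 ≤ (N ^ (2 ^ j) * S (ρ ^ (2 ^ j)) A A) ^ 2 :=
        pow_le_pow_left₀ (by positivity) ih 2
      have a2 := S_sq_le hA (ρ := ρ ^ (2 ^ j)) (by positivity) (pow_le_one₀ h0.le h1)
      rw [← hNdef, ← pow_mul] at a2
      have e1 : 2 ^ (j + 1) = 2 ^ j * 2 := pow_succ _ _
      rw [e1]
      have a3 : (N ^ (2 ^ j) * S (ρ ^ (2 ^ j)) A A) ^ 2 ≤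
          N ^ (2 ^ j * 2) * (N * S (ρ ^ (2 ^ j * 2)) A A) := by
        rw [mul_pow, ← pow_mul]
        exact mul_le_mul_of_nonneg_left a2 (by positivity)
      have a4 : N * (N * S ρ A A ^ (2 ^ j * 2)) ≤
          N * (N ^ (2 ^ j * 2) * S (ρ ^ (2 ^ j * 2)) A A) := by
        calc _ = (N * S ρ A A ^ (2 ^ j)) ^ 2 := by rw [mul_pow, ← pow_mul]; ring
          _ ≤ _ := a1.trans a3
          _ = _ := by ring
      exact le_of_mul_le_mul_left a4 hN
  by_contra! hlt
  have hd : 0 < ρ ^ d * N := by positivity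
  -- If the bound failed, `(S ρ A A / (ρ ^ d N)) ^ (2 ^ n)` would be unbounded, whereas the iterated
  -- Cauchy–Schwarz inequality and the decay at `ρ ^ (2 ^ n)` keep it below `C / N`.
  have hr : 1 < S ρ A A / (ρ ^ d * N) := (one_lt_div hd).2 hlt
  obtain ⟨n, hn⟩ := pow_unbounded_of_one_lt (C / N) hr
  have h2 : (S ρ A A / (ρ ^ d * N)) ^ n ≤ (S ρ A A / (ρ ^ d * N)) ^ (2 ^ n) :=
    pow_le_pow_right₀ hr.le Nat.lt_two_pow_self.le
  have h3 := key n
  have h4 := (le_abs_self _).trans (hC (ρ ^ (2 ^ n)) (by positivity) (pow_le_one₀ h0.le h1))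
  have h5 : N * S ρ A A ^ (2 ^ n) ≤ C * (ρ ^ d * N) ^ (2 ^ n) := by
    refine h3.trans ((mul_le_mul_of_nonneg_left h4 (by positivity)).trans (le_of_eq ?_))
    rw [mul_pow, ← pow_mul, ← pow_mul, mul_comm d]; ring
  have h6 : C / N < S ρ A A ^ (2 ^ n) / (ρ ^ d * N) ^ (2 ^ n) := by
    rw [← div_pow]; exact hn.trans_le h2
  rw [div_lt_div_iff₀ hN (by positivity)] at h6
  linarith

/-- First spectral gap, for Lipschitz functions: if `A` has mean zero then `⟨A, T_ρ A⟩ ≤ ρ ‖A‖²`. The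
Lipschitz bound and the vanishing mean give `⟨A, T_ε A⟩ = O(ε)`. -/
lemma gap_one {A : E → ℝ} (hA : LG A) (h0A : ∫ x, A x ∂stdGaussian E = 0) {l : ℝ}
    (hl : ∀ x h, |A (x + h) - A x| ≤ l * ‖h‖) {ρ : ℝ} (h0 : 0 < ρ) (h1 : ρ ≤ 1) :
    S ρ A A ≤ ρ * S 1 A A := by
  have := gap_of_decay hA 1 (l * ∫ x, |A x| * ‖x‖ ∂stdGaussian E) ?_ h0 h1
  · simpa using this
  intro ε hε0 hε1
  have hs : |ε| ≤ 1 := by rwa [abs_of_pos hε0]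
  have hn : LG (fun x : E => ‖x‖) := ⟨by fun_prop, 1, zero_le_one, fun x => by simp⟩
  have hAabs : LG (fun x : E => |A x|) := by
    obtain ⟨C, hC, h⟩ := hA.2
    exact ⟨hA.1.norm, C, hC, fun x => by simpa using h x⟩
  have hi := hA.integrable_prod hA 1 0 ε (√(1 - ε ^ 2))
  simp only [one_smul, zero_smul, add_zero] at hi
  rw [S_eq_prod hA hA, integral_prod_symm _ hi]
  have hb : ∀ y, ‖∫ x, A x * A (ε • x + √(1 - ε ^ 2) • y) ∂stdGaussian E‖ ≤
      (l * ∫ x, |A x| * ‖x‖ ∂stdGaussian E) * ε ^ 1 := by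
    intro y
    have e : ∫ x, A x * A (ε • x + √(1 - ε ^ 2) • y) ∂stdGaussian E =
        ∫ x, A x * (A (√(1 - ε ^ 2) • y + ε • x) - A (√(1 - ε ^ 2) • y)) ∂stdGaussian E := by
      have : ∫ x, A x * A (√(1 - ε ^ 2) • y) ∂stdGaussian E = 0 := by
        rw [integral_mul_const, h0A, zero_mul]
      simp only [mul_sub]
      rw [integral_sub (hA.integrable_mul (hA.comp_affine _ _ y)) (hA.integrable.mul_const _),
        this, sub_zero]
      simp only [add_comm]
    rw [e, Real.norm_eq_abs]
    refine abs_integral_le_integral_abs.trans ?_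
    calc ∫ x, |A x * (A (√(1 - ε ^ 2) • y + ε • x) - A (√(1 - ε ^ 2) • y))| ∂stdGaussian E
        ≤ ∫ x, (l * ε) * (|A x| * ‖x‖) ∂stdGaussian E := by
          refine integral_mono_of_nonneg (Filter.Eventually.of_forall fun x => abs_nonneg _)
            ((hAabs.integrable_mul hn).const_mul _) (Filter.Eventually.of_forall fun x => ?_)
          simp only [abs_mul]
          have := hl (√(1 - ε ^ 2) • y) (ε • x)
          rw [norm_smul, Real.norm_eq_abs, abs_of_pos hε0] at this
          calc _ ≤ |A x| * (l * (ε * ‖x‖)) := mul_le_mul_of_nonneg_left this (abs_nonneg _)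
            _ = _ := by ring
      _ = _ := by rw [integral_const_mul]; ring
  have := norm_integral_le_of_norm_le_const (μ := stdGaussian E) (Filter.Eventually.of_forall hb)
  simpa using this

/-- Cross version of the first spectral gap. -/
lemma gap_one_cross {A B : E → ℝ} (hA : LG A) (hB : LG B) (h0A : ∫ x, A x ∂stdGaussian E = 0)
    (h0B : ∫ x, B x ∂stdGaussian E = 0) {l : ℝ}
    (hl : ∀ x h, |A (x + h) - A x| ≤ l * ‖h‖) (hl' : ∀ x h, |B (x + h) - B x| ≤ l * ‖h‖)
    {ρ : ℝ} (h0 : 0 < ρ) (h1 : ρ ≤ 1) :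
    |S ρ A B| ≤ ρ * (√(S 1 A A) * √(S 1 B B)) := by
  have h := cs ((hA.ou (√ρ)).integrable_mul (hA.ou (√ρ)))
    ((hB.ou (√ρ)).integrable_mul (hB.ou (√ρ))) ((hA.ou (√ρ)).integrable_mul (hB.ou (√ρ)))
  rw [← S_sqrt hA hB h0.le h1, ← S_sqrt hA hA h0.le h1, ← S_sqrt hB hB h0.le h1] at h
  apply abs_le_of_sq_le_sq _ (by positivity)
  refine h.trans ?_
  rw [mul_pow, mul_pow, Real.sq_sqrt (S_self_nonneg hA zero_le_one le_rfl),
    Real.sq_sqrt (S_self_nonneg hB zero_le_one le_rfl)]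
  calc _ ≤ (ρ * S 1 A A) * (ρ * S 1 B B) :=
        mul_le_mul (gap_one hA h0A hl h0 h1) (gap_one hB h0B hl' h0 h1)
          (S_self_nonneg hB h0.le h1)
          (mul_nonneg h0.le (S_self_nonneg hA zero_le_one le_rfl))
    _ = _ := by ring

/-- Second spectral gap: if `A` is orthogonal to constants and to linear functions then
`⟨A, T_ρ A⟩ ≤ ρ² ‖A‖²`. A uniform quadratic first-order remainder and orthogonality give
`⟨A, T_ε A⟩ = O(ε²)`. -/
lemma gap_two {A : E → ℝ} (hA : LG A) (h0A : ∫ x, A x ∂stdGaussian E = 0)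
    (h1A : ∀ v, ∫ x, A x * ⟪v, x⟫ ∂stdGaussian E = 0) {C : ℝ}
    (hC : ∀ x, ∃ w, ∀ h, |A (x + h) - A x - ⟪w, h⟫| ≤ C * ‖h‖ ^ 2) {ρ : ℝ} (h0 : 0 < ρ)
    (h1 : ρ ≤ 1) : S ρ A A ≤ ρ ^ 2 * S 1 A A := by
  refine gap_of_decay hA 2 (C * ∫ x, |A x| * ‖x‖ ^ 2 ∂stdGaussian E) ?_ h0 h1
  intro ε hε0 hε1
  have hs : |ε| ≤ 1 := by rwa [abs_of_pos hε0]
  have hint : Integrable (fun x : E => |A x| * ‖x‖ ^ 2) (stdGaussian E) := by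
    obtain ⟨D, hD, h⟩ := hA.2
    refine ((integrable_norm_pow (E := E) 3).const_mul D).mono'
      (hA.1.norm.mul (by fun_prop)).aestronglyMeasurable (Filter.Eventually.of_forall fun x => ?_)
    rw [Real.norm_eq_abs, abs_of_nonneg (by positivity)]
    calc |A x| * ‖x‖ ^ 2 ≤ (D * (1 + ‖x‖)) * (1 + ‖x‖) ^ 2 :=
          mul_le_mul (h x) (pow_le_pow_left₀ (norm_nonneg _) (by linarith) 2) (by positivity)
            (by positivity)
      _ = _ := by ring
  have hi := hA.integrable_prod hA 1 0 ε (√(1 - ε ^ 2))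
  simp only [one_smul, zero_smul, add_zero] at hi
  rw [S_eq_prod hA hA, integral_prod_symm _ hi]
  have hb : ∀ y, ‖∫ x, A x * A (ε • x + √(1 - ε ^ 2) • y) ∂stdGaussian E‖ ≤
      (C * ∫ x, |A x| * ‖x‖ ^ 2 ∂stdGaussian E) * ε ^ 2 := by
    intro y
    obtain ⟨w, hw⟩ := hC (√(1 - ε ^ 2) • y)
    have e : ∫ x, A x * A (ε • x + √(1 - ε ^ 2) • y) ∂stdGaussian E =
        ∫ x, A x * (A (√(1 - ε ^ 2) • y + ε • x) - A (√(1 - ε ^ 2) • y) - ⟪w, ε • x⟫)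
          ∂stdGaussian E := by
      have z1 : ∫ x, A x * A (√(1 - ε ^ 2) • y) ∂stdGaussian E = 0 := by
        rw [integral_mul_const, h0A, zero_mul]
      have z2 : ∫ x, A x * ⟪w, ε • x⟫ ∂stdGaussian E = 0 := by
        rw [← h1A (ε • w)]
        simp only [real_inner_smul_left, real_inner_smul_right]
      have j0 := hA.integrable_mul (hA.comp_affine (√(1 - ε ^ 2)) ε y)
      have j1 : Integrable (fun x => A x * A (√(1 - ε ^ 2) • y + ε • x) -
        A x * A (√(1 - ε ^ 2) • y)) (stdGaussian E) := j0.sub (hA.integrable.mul_const _)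
      have j2 : Integrable (fun x => A x * ⟪w, ε • x⟫) (stdGaussian E) := by
        simpa only [real_inner_smul_right, real_inner_smul_left] using
          hA.integrable_mul (LG.inner (ε • w))
      simp only [mul_sub]
      rw [integral_sub j1 j2, integral_sub j0 (hA.integrable.mul_const _),
        z1, z2, sub_zero, sub_zero]
      simp only [add_comm]
    rw [e, Real.norm_eq_abs]
    refine abs_integral_le_integral_abs.trans ?_
    calc ∫ x, |A x * (A (√(1 - ε ^ 2) • y + ε • x) - A (√(1 - ε ^ 2) • y) - ⟪w, ε • x⟫)|
          ∂stdGaussian E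
        ≤ ∫ x, (C * ε ^ 2) * (|A x| * ‖x‖ ^ 2) ∂stdGaussian E := by
          refine integral_mono_of_nonneg (Filter.Eventually.of_forall fun x => abs_nonneg _)
            (hint.const_mul _) (Filter.Eventually.of_forall fun x => ?_)
          simp only [abs_mul]
          have := hw (ε • x)
          rw [norm_smul, Real.norm_eq_abs, abs_of_pos hε0] at this
          calc _ ≤ |A x| * (C * (ε * ‖x‖) ^ 2) := mul_le_mul_of_nonneg_left this (abs_nonneg _)
            _ = _ := by ring
      _ = _ := by rw [integral_const_mul]; ring
  have := norm_integral_le_of_norm_le_const (μ := stdGaussian E) (Filter.Eventually.of_forall hb)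
  simpa using this

/-- For a bounded mean-zero function `f` with `∫ x f = e u`, the part of `⟨f, T_ρ f⟩` beyond the
linear one is quadratic in `ρ`, and controlled by `⟨f, T_{1/2} f⟩`. -/
lemma S_gap_half {f : E → ℝ} (hf : Measurable f) (hb : ∀ x, |f x| ≤ 1)
    (h0f : ∫ x, f x ∂stdGaussian E = 0) {u : E} (hu : ‖u‖ = 1) {e : ℝ}
    (h1f : ∀ v, ∫ x, f x * ⟪v, x⟫ ∂stdGaussian E = e * ⟪v, u⟫) {ρ : ℝ} (h0 : 0 < ρ)
    (h1 : ρ ≤ 1 / 2) : S ρ f f ≤ ρ * e ^ 2 + 4 * ρ ^ 2 * S (1 / 2) f f := by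
  have hF : LG f := LG.of_bdd hf 1 hb
  have hL : LG (fun x => e * ⟪u, x⟫) := (LG.inner u).const_mul e
  set A : E → ℝ := fun x => f x - e * ⟪u, x⟫ with hAdef
  have hA : LG A := hF.sub hL
  have hSA : ∀ r : ℝ, 0 ≤ r → r ≤ 1 → S r A A = S r f f - r * e ^ 2 := by
    intro r r0 r1
    have hr : |r| ≤ 1 := by rwa [abs_of_nonneg r0]
    have s1 : S r f (fun x => e * ⟪u, x⟫) = r * e ^ 2 := by
      rw [S_const_mul_right, S]
      simp only [ou_inner]
      have : ∀ x, f x * (r * ⟪u, x⟫) = r * (f x * ⟪u, x⟫) := fun x => by ring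
      simp_rw [this]
      rw [integral_const_mul, h1f, real_inner_self_eq_norm_sq, hu]; ring
    have s2 : S r (fun x => e * ⟪u, x⟫) (fun x => e * ⟪u, x⟫) = r * e ^ 2 := by
      rw [S_const_mul_right, S_const_mul_left, S]
      simp only [ou_inner]
      have : ∀ x, ⟪u, x⟫ * (r * ⟪u, x⟫) = r * (⟪u, x⟫ * ⟪u, x⟫) := fun x => by ring
      simp_rw [this]
      rw [integral_const_mul, integral_inner_inner, real_inner_self_eq_norm_sq, hu]; ring
    rw [hAdef, S_sub_left hF hL hA, S_sub_right hF hF hL, S_sub_right hL hF hL, S_symm hL hF hr,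
      s1, s2]
    ring
  have hs : |√(1 / 2 : ℝ)| ≤ 1 := by
    rw [abs_of_nonneg (Real.sqrt_nonneg _)]; exact Real.sqrt_le_one.2 (by norm_num)
  have hs1 : √(1 / 2 : ℝ) < 1 := by
    rw [Real.sqrt_lt' one_pos]; norm_num
  have hss : √(1 / 2 : ℝ) * √(1 / 2 : ℝ) = 1 / 2 := Real.mul_self_sqrt (by norm_num)
  set s := √(1 / 2 : ℝ) with hsdef
  have hB : LG (ou s A) := hA.ou s
  have hBeq : ∀ x, ou s A x = ou s f x - e * (s * ⟪u, x⟫) := by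
    intro x
    rw [hAdef, ou_sub hF hL, ou_const_mul, ou_inner]
  have h2r : |2 * ρ| ≤ 1 := by rw [abs_of_pos (by positivity)]; linarith
  have g := gap_two hB ?_ ?_ (C := 3 * (s / √(1 - s ^ 2)) ^ 2) ?_ (ρ := 2 * ρ) (by positivity)
    (by linarith)
  · rw [S_split3 hA hA h2r hs hs, S_split3 hA hA (by simp) hs hs, hss,
      show (1 / 2 : ℝ) * (2 * ρ) = ρ by ring, mul_one, hSA ρ h0.le (by linarith),
      hSA (1 / 2) (by norm_num) (by norm_num)] at g
    nlinarith [sq_nonneg e, sq_nonneg ρ, mul_nonneg (sq_nonneg ρ) (sq_nonneg e)]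
  · rw [integral_ou hA hs, hAdef, integral_sub hF.integrable hL.integrable, h0f,
      integral_const_mul, integral_inner]
    simp
  · intro v
    have : ∫ x, ou s A x * ⟪v, x⟫ ∂stdGaussian E = S s (fun x => ⟪v, x⟫) A := by
      rw [S]; congr 1 with x; ring
    rw [this, S_symm (LG.inner v) hA hs, S]
    simp only [ou_inner]
    have e1 : ∀ x, A x * (s * ⟪v, x⟫) = s * (f x * ⟪v, x⟫) - (s * e) * (⟪u, x⟫ * ⟪v, x⟫) :=
      fun x => by simp only [hAdef]; ring
    simp_rw [e1]
    rw [integral_sub ((hF.integrable_mul (LG.inner v)).const_mul _)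
      (((LG.inner u).integrable_mul (LG.inner v)).const_mul _), integral_const_mul,
      integral_const_mul, h1f, integral_inner_inner, real_inner_comm u v]
    ring
  · intro x
    obtain ⟨w, hw⟩ := ou_second_order hf hb (Real.sqrt_nonneg _) hs1 x
    refine ⟨w - (e * s) • u, fun h => ?_⟩
    have := hw h
    rw [hBeq, hBeq, inner_sub_left, real_inner_smul_left, inner_add_right]
    convert this using 2
    ring

end

/-! ### The one-dimensional Gaussian distribution function and its quantile function -/

section

/-- The standard Gaussian density on the line. -/
def ph (s : ℝ) : ℝ := (2 * π) ^ (-(1 : ℝ) / 2) * Real.exp (-s ^ 2 / 2)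

lemma ph_pos (s : ℝ) : 0 < ph s := by unfold ph; positivity

lemma ph_neg (s : ℝ) : ph (-s) = ph s := by simp [ph]

lemma two_pi_rpow : (2 * π : ℝ) ^ (-(1 : ℝ) / 2) = (√(2 * π))⁻¹ := by
  rw [neg_div, Real.rpow_neg (by positivity), Real.sqrt_eq_rpow]

lemma ph_zero_le : (2 * π : ℝ) ^ (-(1 : ℝ) / 2) ≤ 2 / 5 := by
  rw [two_pi_rpow, inv_le_comm₀ (by positivity) (by norm_num)]
  apply Real.le_sqrt_of_sq_le
  nlinarith [Real.pi_gt_d2]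

lemma le_ph_zero : (1 / 3 : ℝ) ≤ (2 * π : ℝ) ^ (-(1 : ℝ) / 2) := by
  rw [two_pi_rpow, le_inv_comm₀ (by norm_num) (by positivity)]
  rw [Real.sqrt_le_left (by norm_num)]
  nlinarith [Real.pi_lt_d2]

lemma ph_le (s : ℝ) : ph s ≤ 2 / 5 := by
  have h1 : Real.exp (-s ^ 2 / 2) ≤ 1 := Real.exp_le_one_iff.2 (by nlinarith [sq_nonneg s])
  have h2 : 0 < Real.exp (-s ^ 2 / 2) := Real.exp_pos _
  have := ph_zero_le
  unfold ph
  nlinarith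

lemma ph_contDiff {n : WithTop ℕ∞} : ContDiff ℝ n ph := by unfold ph; fun_prop

lemma ph_continuous : Continuous ph := ph_contDiff.continuous (n := 0)

lemma stdGaussian_real_eq :
    stdGaussian ℝ = volume.withDensity fun x : ℝ => ENNReal.ofReal (ph x) := by
  rw [stdGaussian_eq_withDensity]
  simp [ph]

lemma integral_stdGaussian_real (f : ℝ → ℝ) :
    ∫ x, f x ∂stdGaussian ℝ = ∫ x, ph x * f x := by
  rw [stdGaussian_real_eq, integral_withDensity_eq_integral_toReal_smul₀
    (ph_continuous.measurable.ennreal_ofReal.aemeasurable) (by simp)]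
  simp_rw [ENNReal.toReal_ofReal (ph_pos _).le, smul_eq_mul]

lemma integral_ph : ∫ x, ph x = 1 := by
  have := integral_stdGaussian_real (fun _ => 1)
  simpa using this.symm

lemma integrable_ph : Integrable ph := by
  by_contra h
  have := integral_undef h
  rw [integral_ph] at this
  norm_num at this

lemma Phi_def (t : ℝ) : Phi t = ∫ s in Iio t, ph s := rfl

lemma hasDerivAt_Iio {g : ℝ → ℝ} (hg : Continuous g) (hi : Integrable g) (x : ℝ) :
    HasDerivAt (fun t => ∫ s in Iio t, g s) (g x) x := by
  have e : (fun t => ∫ s in Iio t, g s) = fun t => (∫ s in Iic 0, g s) + ∫ s in (0 : ℝ)..t, g s := by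
    ext t
    rw [← intervalIntegral.integral_Iic_sub_Iic hi.integrableOn hi.integrableOn,
      ← integral_Iic_eq_integral_Iio]
    ring
  rw [e]
  exact (intervalIntegral.integral_hasDerivAt_right (hg.intervalIntegrable _ _)
    (hg.stronglyMeasurableAtFilter _ _) hg.continuousAt).const_add _

lemma hasDerivAt_Phi (x : ℝ) : HasDerivAt Phi (ph x) x :=
  hasDerivAt_Iio ph_continuous integrable_ph x

lemma Phi_contDiff {n : ℕ} : ContDiff ℝ n Phi := by
  have hd : deriv Phi = ph := funext fun x => (hasDerivAt_Phi x).deriv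
  cases n with
  | zero =>
    exact contDiff_zero.2 (continuous_iff_continuousAt.2 fun x => (hasDerivAt_Phi x).continuousAt)
  | succ n =>
    have : ((n + 1 : ℕ) : WithTop ℕ∞) = (n : WithTop ℕ∞) + 1 := by push_cast; rfl
    rw [this, contDiff_succ_iff_deriv]
    refine ⟨fun x => (hasDerivAt_Phi x).differentiableAt, by simp, ?_⟩
    rw [hd]; exact ph_contDiff

lemma Phi_continuous : Continuous Phi := Phi_contDiff.continuous (n := 0)

lemma Phi_strictMono : StrictMono Phi := by
  apply strictMono_of_deriv_pos
  intro x
  rw [(hasDerivAt_Phi x).deriv]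
  exact ph_pos x

lemma Phi_nonneg (x : ℝ) : 0 ≤ Phi x := integral_nonneg fun s => (ph_pos s).le

lemma Phi_pos (x : ℝ) : 0 < Phi x := (Phi_nonneg (x - 1)).trans_lt (Phi_strictMono (by linarith))

lemma Phi_neg (x : ℝ) : Phi (-x) = 1 - Phi x := by
  have h1 : Phi (-x) = ∫ s in Ioi x, ph s := by
    rw [Phi_def, ← integral_Iic_eq_integral_Iio, ← integral_comp_neg_Ioi]
    simp [ph_neg]
  have h2 := integral_add_compl (measurableSet_Iic (a := x)) integrable_ph
  rw [integral_ph, compl_Iic, integral_Iic_eq_integral_Iio, ← Phi_def, ← h1] at h2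
  linarith

lemma Phi_lt_one (x : ℝ) : Phi x < 1 := by
  have := Phi_pos (-x); rw [Phi_neg] at this; linarith

lemma Phi_tendsto_atBot : Tendsto Phi atBot (𝓝 0) := by
  have h : Tendsto (fun t => ∫ s in Iic t, ph s) atBot (𝓝 0) := by
    have := tendsto_setIntegral_of_antitone (μ := volume) (f := ph) (s := fun n : ℕ => Iic (-(n:ℝ)))
      (fun n => measurableSet_Iic) (fun m n h => Iic_subset_Iic.2 (by simpa using h))
      ⟨0, integrable_ph.integrableOn⟩
    have e : ⋂ n : ℕ, Iic (-(n : ℝ)) = ∅ := by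
      ext x
      simp only [mem_iInter, mem_Iic, mem_empty_iff_false, iff_false, not_forall, not_le]
      obtain ⟨n, hn⟩ := exists_nat_gt (-x)
      exact ⟨n, by linarith⟩
    rw [e] at this
    simp only [setIntegral_empty] at this
    have hm : Monotone fun t => ∫ s in Iic t, ph s := fun a b hab =>
      setIntegral_mono_set integrable_ph.integrableOn
        (Filter.Eventually.of_forall fun s => (ph_pos s).le) (Iic_subset_Iic.2 hab).eventuallyLE
    have hm2 : Tendsto (fun t => ∫ s in Iic t, ph s) atBot (𝓝 (⨅ t, ∫ s in Iic t, ph s)) := by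
      apply tendsto_atBot_ciInf hm
      exact ⟨0, by rintro _ ⟨t, rfl⟩; exact integral_nonneg fun s => (ph_pos s).le⟩
    have h3 : Tendsto (fun n : ℕ => -(n:ℝ)) atTop atBot :=
      tendsto_neg_atTop_atBot.comp tendsto_natCast_atTop_atTop
    have := tendsto_nhds_unique this (hm2.comp h3)
    rwa [← this] at hm2
  refine h.congr fun t => ?_
  rw [Phi_def, integral_Iic_eq_integral_Iio]

lemma Phi_tendsto_atTop : Tendsto Phi atTop (𝓝 1) := by
  have h : Tendsto (fun x => 1 - Phi (-x)) atTop (𝓝 (1 - 0)) :=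
    (Phi_tendsto_atBot.comp tendsto_neg_atTop_atBot).const_sub 1
  rw [sub_zero] at h
  refine h.congr fun x => ?_
  rw [Phi_neg]; ring

lemma Phi_surj {p : ℝ} (hp : p ∈ Ioo (0 : ℝ) 1) : ∃ x, Phi x = p := by
  obtain ⟨a, ha⟩ := (Phi_tendsto_atBot.eventually (gt_mem_nhds hp.1)).exists
  obtain ⟨b, hb⟩ := (Phi_tendsto_atTop.eventually (lt_mem_nhds hp.2)).exists
  have hab : a ≤ b := by
    by_contra! h
    have := Phi_strictMono h
    linarith
  obtain ⟨x, -, hx⟩ := intermediate_value_Icc hab Phi_continuous.continuousOn ⟨ha.le, hb.le⟩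
  exact ⟨x, hx⟩

/-- The Gaussian quantile function `Φ⁻¹`, meaningful on `(0, 1)`. -/
def qf (p : ℝ) : ℝ := Function.invFun Phi p

lemma Phi_qf {p : ℝ} (hp : p ∈ Ioo (0 : ℝ) 1) : Phi (qf p) = p :=
  Function.invFun_eq (Phi_surj hp)

lemma qf_Phi (x : ℝ) : qf (Phi x) = x :=
  Function.leftInverse_invFun Phi_strictMono.injective x

lemma qf_strictMonoOn : StrictMonoOn qf (Ioo 0 1) := by
  intro p hp q hq hpq
  by_contra! h
  have := Phi_strictMono.monotone h
  rw [Phi_qf hp, Phi_qf hq] at this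
  linarith

lemma qf_continuousAt {p : ℝ} (hp : p ∈ Ioo (0 : ℝ) 1) : ContinuousAt qf p := by
  apply qf_strictMonoOn.continuousAt_of_image_mem_nhds (isOpen_Ioo.mem_nhds hp)
  have : qf '' Ioo 0 1 = univ := by
    ext x
    simp only [mem_image, mem_univ, iff_true]
    exact ⟨Phi x, ⟨Phi_pos x, Phi_lt_one x⟩, qf_Phi x⟩
  rw [this]; exact univ_mem

lemma hasDerivAt_qf {p : ℝ} (hp : p ∈ Ioo (0 : ℝ) 1) : HasDerivAt qf (ph (qf p))⁻¹ p :=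
  HasDerivAt.of_local_left_inverse (qf_continuousAt hp) (hasDerivAt_Phi _) (ph_pos _).ne'
    (by filter_upwards [isOpen_Ioo.mem_nhds hp] with y hy using Phi_qf hy)

lemma qf_contDiffOn {n : ℕ} : ContDiffOn ℝ n qf (Ioo 0 1) := by
  induction n with
  | zero =>
    exact contDiffOn_zero.2 fun p hp => (qf_continuousAt hp).continuousWithinAt
  | succ n ih =>
    have : ((n + 1 : ℕ) : WithTop ℕ∞) = (n : WithTop ℕ∞) + 1 := by push_cast; rfl
    rw [this, contDiffOn_succ_iff_deriv_of_isOpen isOpen_Ioo]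
    refine ⟨fun p hp => (hasDerivAt_qf hp).differentiableAt.differentiableWithinAt, by simp, ?_⟩
    have : ContDiffOn ℝ n (fun p => (ph (qf p))⁻¹) (Ioo 0 1) :=
      (ph_contDiff.comp_contDiffOn ih).inv fun p _ => (ph_pos _).ne'
    exact this.congr fun p hp => (hasDerivAt_qf hp).deriv

lemma ph_measurable : Measurable ph := ph_continuous.measurable

lemma Phi_measurable : Measurable Phi := Phi_continuous.measurable

end

/-! ### The two-point function of half-lines -/

section

section marginal

variable {E : Type*} [NormedAddCommGroup E] [InnerProductSpace ℝ E] [FiniteDimensional ℝ E]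
  [MeasurableSpace E] [BorelSpace E]

/-- One-dimensional marginals of the standard Gaussian are standard Gaussian. -/
lemma mp_inner {u : E} (hu : ‖u‖ = 1) :
    MeasurePreserving (fun x : E => ⟪u, x⟫) (stdGaussian E) (stdGaussian ℝ) := by
  refine ⟨by fun_prop, ?_⟩
  have hm : AEMeasurable (fun x : E => ⟪u, x⟫) (stdGaussian E) := by fun_prop
  have : IsProbabilityMeasure (Measure.map (fun x : E => ⟪u, x⟫) (stdGaussian E)) :=
    Measure.isProbabilityMeasure_map hm
  apply Measure.ext_of_charFun
  ext t
  have h2 := charFun_stdGaussian (E := E) (t • u)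
  rw [charFun_apply] at h2
  rw [charFun_stdGaussian, charFun_apply, integral_map hm (by fun_prop)]
  convert h2 using 4
  · simp [inner_smul_right, real_inner_comm, mul_comm]
  · simp [norm_smul, hu]

lemma LG.marginal {f : ℝ → ℝ} (hf : LG f) {u : E} (hu : ‖u‖ = 1) : LG fun x : E => f ⟪u, x⟫ := by
  obtain ⟨hm, C, hC, h⟩ := hf
  refine ⟨hm.comp (by fun_prop), C, hC, fun x => (h _).trans ?_⟩
  have : ‖(⟪u, x⟫ : ℝ)‖ ≤ ‖x‖ := by
    have := norm_inner_le_norm (𝕜 := ℝ) u x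
    rwa [hu, one_mul] at this
  gcongr

lemma integral_marginal {f : ℝ → ℝ} (hf : Measurable f) {u : E} (hu : ‖u‖ = 1) :
    ∫ x, f ⟪u, x⟫ ∂stdGaussian E = ∫ s, f s ∂stdGaussian ℝ := by
  rw [← (mp_inner hu).map_eq, integral_map (by fun_prop) hf.aestronglyMeasurable]

lemma ou_marginal {f : ℝ → ℝ} (hf : Measurable f) {u : E} (hu : ‖u‖ = 1) (ρ : ℝ) (x : E) :
    ou ρ (fun x : E => f ⟪u, x⟫) x = ou ρ f ⟪u, x⟫ := by
  unfold ou
  simp only [inner_add_right, inner_smul_right]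
  exact integral_marginal (f := fun t => f (ρ * ⟪u, x⟫ + √(1 - ρ ^ 2) * t))
    (hf.comp (by fun_prop)) hu

lemma S_marginal {f g : ℝ → ℝ} (hf : LG f) (hg : LG g) {u : E} (hu : ‖u‖ = 1) (ρ : ℝ) :
    S ρ (fun x : E => f ⟪u, x⟫) (fun x : E => g ⟪u, x⟫) = S ρ f g := by
  unfold S
  simp only [ou_marginal hg.meas hu]
  exact integral_marginal (f := fun t => f t * ou ρ g t) (hf.meas.mul (hg.ou ρ).meas) hu

end marginal

/-- Indicator of the half-line `(-∞, h)`. -/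
def hl (h s : ℝ) : ℝ := (Iio h).indicator (fun _ => (1 : ℝ)) s

lemma hl_meas (h : ℝ) : Measurable (hl h) := measurable_const.indicator measurableSet_Iio

lemma hl_nonneg (h s : ℝ) : 0 ≤ hl h s := by
  unfold hl; exact indicator_nonneg (fun _ _ => zero_le_one) _

lemma hl_le_one (h s : ℝ) : hl h s ≤ 1 := by
  unfold hl indicator; split_ifs <;> norm_num

lemma hl_abs_le (h s : ℝ) : |hl h s| ≤ 1 := by
  rw [abs_of_nonneg (hl_nonneg _ _)]; exact hl_le_one _ _

lemma hl_LG (h : ℝ) : LG (hl h) := LG.of_bdd (hl_meas h) 1 (hl_abs_le h)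

lemma integral_hl_mul (h : ℝ) (f : ℝ → ℝ) :
    ∫ s, hl h s * f s ∂stdGaussian ℝ = ∫ s in Iio h, ph s * f s := by
  rw [integral_stdGaussian_real, ← integral_indicator measurableSet_Iio]
  congr 1; ext s
  by_cases hs : s ∈ Iio h <;> simp [hl, hs]

lemma integral_hl (h : ℝ) : ∫ s, hl h s ∂stdGaussian ℝ = Phi h := by
  have := integral_hl_mul h (fun _ => 1)
  simpa [Phi_def] using this

lemma ou_hl {τ : ℝ} (h1 : 0 < √(1 - τ ^ 2)) (h s : ℝ) :
    ou τ (hl h) s = Phi ((h - τ * s) / √(1 - τ ^ 2)) := by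
  rw [← integral_hl]
  unfold ou
  congr 1; ext y
  have : (τ • s + √(1 - τ ^ 2) • y ∈ Iio h) ↔ y ∈ Iio ((h - τ * s) / √(1 - τ ^ 2)) := by
    simp only [smul_eq_mul, mem_Iio, lt_div_iff₀ h1]
    constructor <;> intro <;> nlinarith
  unfold hl indicator
  simp only [this]

/-- The Gaussian two-point function: `J τ p q = 𝔼[1{X < Φ⁻¹ p} 1{Y < Φ⁻¹ q}]` for standard
Gaussians `X, Y` of correlation `τ`. As `qf` is the quantile function only on `(0, 1)`, the value has
this meaning only for `p, q ∈ (0, 1)`. -/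
def J (τ p q : ℝ) : ℝ := ∫ s in Iio (qf p), ph s * Phi ((qf q - τ * s) / √(1 - τ ^ 2))

lemma sqrt_pos_of {τ : ℝ} (h0 : 0 < τ) (h1 : τ < 1) : 0 < √(1 - τ ^ 2) :=
  Real.sqrt_pos.2 (by nlinarith)

lemma J_eq_S {τ : ℝ} (h0 : 0 < τ) (h1 : τ < 1) (p q : ℝ) : J τ p q = S τ (hl (qf p)) (hl (qf q)) := by
  unfold S J
  rw [integral_hl_mul]
  simp only [ou_hl (sqrt_pos_of h0 h1)]

lemma J_symm {τ : ℝ} (h0 : 0 < τ) (h1 : τ < 1) (p q : ℝ) : J τ p q = J τ q p := by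
  rw [J_eq_S h0 h1, J_eq_S h0 h1, S_symm (hl_LG _) (hl_LG _) (by rw [abs_of_pos h0]; exact h1.le)]

/-- The partial derivative of `J` in its first probability argument. -/
def Ja (τ : ℝ) (x : ℝ × ℝ) : ℝ := Phi ((qf x.2 - τ * qf x.1) / √(1 - τ ^ 2))

lemma Ja_mem (τ : ℝ) (x : ℝ × ℝ) : Ja τ x ∈ Icc (0 : ℝ) 1 := ⟨Phi_nonneg _, (Phi_lt_one _).le⟩

lemma hasDerivAt_J (τ : ℝ) {p : ℝ} (hp : p ∈ Ioo (0 : ℝ) 1) (q : ℝ) :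
    HasDerivAt (fun p => J τ p q) (Ja τ (p, q)) p := by
  have hc : Continuous fun s => ph s * Phi ((qf q - τ * s) / √(1 - τ ^ 2)) :=
    ph_continuous.mul (Phi_continuous.comp (by fun_prop))
  have hi : Integrable fun s => ph s * Phi ((qf q - τ * s) / √(1 - τ ^ 2)) := by
    refine integrable_ph.mono' hc.aestronglyMeasurable (Filter.Eventually.of_forall fun s => ?_)
    rw [Real.norm_eq_abs, abs_of_nonneg (mul_nonneg (ph_pos s).le (Phi_nonneg _))]
    exact mul_le_of_le_one_right (ph_pos s).le (Phi_lt_one _).le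
  have := (hasDerivAt_Iio hc hi (qf p)).comp p (hasDerivAt_qf hp)
  refine this.congr_deriv ?_
  unfold Ja
  have := (ph_pos (qf p)).ne'
  field_simp

lemma J_lip_left (τ : ℝ) {p p' : ℝ} (hp : p ∈ Ioo (0 : ℝ) 1) (hp' : p' ∈ Ioo (0 : ℝ) 1) (q : ℝ) :
    |J τ p' q - J τ p q| ≤ |p' - p| := by
  have := (convex_Ioo (0 : ℝ) 1).norm_image_sub_le_of_norm_hasDerivWithin_le (C := 1)
    (fun x hx => (hasDerivAt_J τ hx q).hasDerivWithinAt)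
    (fun x hx => by
      rw [Real.norm_eq_abs, abs_of_nonneg (Ja_mem τ _).1]; exact (Ja_mem τ _).2) hp hp'
  simpa using this

lemma J_lip {τ : ℝ} (h0 : 0 < τ) (h1 : τ < 1) {p p' q q' : ℝ} (hp : p ∈ Ioo (0 : ℝ) 1)
    (hp' : p' ∈ Ioo (0 : ℝ) 1) (hq : q ∈ Ioo (0 : ℝ) 1) (hq' : q' ∈ Ioo (0 : ℝ) 1) :
    |J τ p' q' - J τ p q| ≤ |p' - p| + |q' - q| := by
  have e1 := J_lip_left τ hp hp' q'
  have e2 := J_lip_left τ hq hq' p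
  rw [J_symm h0 h1 q', J_symm h0 h1 q] at e2
  calc _ ≤ |J τ p' q' - J τ p q'| + |J τ p q' - J τ p q| := abs_sub_le _ _ _
    _ ≤ _ := add_le_add e1 e2

/-- Half-lines in the same direction are positively correlated. -/
lemma mul_le_J {τ : ℝ} (h0 : 0 < τ) (h1 : τ < 1) {p q : ℝ} (hp : p ∈ Ioo (0 : ℝ) 1)
    (hq : q ∈ Ioo (0 : ℝ) 1) : p * q ≤ J τ p q := by
  have hc := sqrt_pos_of h0 h1
  have hτ : |τ| ≤ 1 := by rw [abs_of_pos h0]; exact h1.le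
  rw [J_eq_S h0 h1]
  set m := ou τ (hl (qf q)) with hm
  have hmL : LG m := (hl_LG _).ou τ
  have key : ∀ s, 0 ≤ (hl (qf p) s - p) * (m s - m (qf p)) := by
    intro s
    have hanti : ∀ a b : ℝ, a ≤ b → m b ≤ m a := fun a b hab => by
      rw [hm, ou_hl hc, ou_hl hc]
      exact Phi_strictMono.monotone (by gcongr)
    by_cases hs : s < qf p
    · have : hl (qf p) s = 1 := by simp [hl, hs]
      rw [this]
      exact mul_nonneg (by linarith [hp.2]) (by linarith [hanti s _ hs.le])
    · have : hl (qf p) s = 0 := by simp [hl, hs]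
      rw [this]
      nlinarith [hanti _ s (not_lt.1 hs), hp.1]
  have hint := integral_nonneg (μ := stdGaussian ℝ)
    (f := fun s => (hl (qf p) s - p) * (m s - m (qf p))) key
  have e : ∀ s, (hl (qf p) s - p) * (m s - m (qf p)) =
      hl (qf p) s * m s - m (qf p) * hl (qf p) s - p * m s + p * m (qf p) := fun s => by ring
  simp_rw [e] at hint
  have i1 : Integrable (fun s => hl (qf p) s * m s) (stdGaussian ℝ) := (hl_LG _).integrable_mul hmL
  have i2 : Integrable (fun s => m (qf p) * hl (qf p) s) (stdGaussian ℝ) :=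
    (hl_LG _).integrable.const_mul _
  have i3 : Integrable (fun s => p * m s) (stdGaussian ℝ) := hmL.integrable.const_mul _
  have i12 : Integrable (fun s => hl (qf p) s * m s - m (qf p) * hl (qf p) s) (stdGaussian ℝ) :=
    i1.sub i2
  have i123 : Integrable (fun s => hl (qf p) s * m s - m (qf p) * hl (qf p) s - p * m s)
    (stdGaussian ℝ) := i12.sub i3
  rw [integral_add i123 (integrable_const _), integral_sub i12 i3, integral_sub i1 i2,
    integral_const_mul, integral_const_mul, integral_hl, hm, integral_ou (hl_LG _) hτ, integral_hl,
    Phi_qf hp, Phi_qf hq] at hint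
  simp at hint
  unfold S
  rw [← hm] at hint ⊢
  linarith

lemma J_continuousAt {τ : ℝ} (h0 : 0 < τ) (h1 : τ < 1) (p q : ℝ) :
    ContinuousAt (fun τ => J τ p q) τ := by
  unfold J
  apply continuousAt_of_dominated (bound := ph)
  · exact Filter.Eventually.of_forall fun t => by
      apply Continuous.aestronglyMeasurable
      exact ph_continuous.mul (Phi_continuous.comp (by fun_prop))
  · refine Filter.Eventually.of_forall fun t => Filter.Eventually.of_forall fun s => ?_
    rw [Real.norm_eq_abs, abs_of_nonneg (mul_nonneg (ph_pos s).le (Phi_nonneg _))]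
    exact mul_le_of_le_one_right (ph_pos s).le (Phi_lt_one _).le
  · exact integrable_ph.integrableOn
  · refine Filter.Eventually.of_forall fun s => ?_
    apply ContinuousAt.mul continuousAt_const
    apply Phi_continuous.continuousAt.comp
    exact ContinuousAt.div (f := fun x => qf q - x * s) (g := fun x => √(1 - x ^ 2))
      (by fun_prop) (Continuous.continuousAt (by fun_prop)) (sqrt_pos_of h0 h1).ne'

/-- Quadratic Taylor remainder, uniform on compact convex sets. -/
lemma taylor_two {V : Type*} [NormedAddCommGroup V] [NormedSpace ℝ V] {f : V → ℝ} {U K : Set V}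
    (hU : IsOpen U) (hf : ContDiffOn ℝ 2 f U) (hK : IsCompact K) (hKc : Convex ℝ K) (hKU : K ⊆ U) :
    ∃ C, 0 ≤ C ∧ ∀ x ∈ K, ∀ y ∈ K, |f y - f x - fderiv ℝ f x (y - x)| ≤ C * ‖y - x‖ ^ 2 := by
  have hf1 : ContDiffOn ℝ 1 (fderiv ℝ f) U := hf.fderiv_of_isOpen hU (by norm_num)
  obtain ⟨C, hC⟩ := (hf1.mono hKU).exists_lipschitzOnWith (by norm_num) hKc hK
  have hd1 : ∀ x ∈ K, HasFDerivAt f (fderiv ℝ f x) x := fun x hx =>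
    ((hf.differentiableOn (by norm_num)).differentiableAt (hU.mem_nhds (hKU hx))).hasFDerivAt
  refine ⟨C, C.2, fun x hx y hy => ?_⟩
  have hlip : ∀ z ∈ K, ‖fderiv ℝ f z - fderiv ℝ f x‖ ≤ C * ‖z - x‖ := fun z hz =>
    hC.norm_sub_le hz hx
  have hseg : segment ℝ x y ⊆ K := hKc.segment_subset hx hy
  have := (convex_segment x y).norm_image_sub_le_of_norm_hasFDerivWithin_le'
    (f := f) (φ := fderiv ℝ f x) (C := C * ‖y - x‖)
    (fun z hz => (hd1 z (hseg hz)).hasFDerivWithinAt)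
    (fun z hz => (hlip z (hseg hz)).trans (by
      have : ‖z - x‖ ≤ ‖y - x‖ := by
        obtain ⟨a, b, ha, hb, hab, rfl⟩ := hz
        have : a • x + b • y - x = b • (y - x) := by
          rw [show a = 1 - b by linarith]; module
        rw [this, norm_smul, Real.norm_eq_abs, abs_of_nonneg hb]
        exact mul_le_of_le_one_left (norm_nonneg _) (by linarith)
      gcongr)) (left_mem_segment ℝ x y) (right_mem_segment ℝ x y)
  rw [Real.norm_eq_abs] at this
  calc _ ≤ _ := this
    _ = _ := by ring

lemma Ja_contDiffOn (τ : ℝ) : ContDiffOn ℝ 2 (Ja τ) (Ioo (0 : ℝ) 1 ×ˢ Ioo (0 : ℝ) 1) := by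
  unfold Ja
  have hq : ContDiffOn ℝ 2 qf (Ioo 0 1) := by simpa using qf_contDiffOn (n := 2)
  have hP : ContDiff ℝ 2 Phi := by simpa using Phi_contDiff (n := 2)
  apply hP.comp_contDiffOn
  apply ContDiffOn.div_const
  apply ContDiffOn.sub
  · exact hq.comp contDiffOn_snd (fun x hx => hx.2)
  · exact contDiffOn_const.mul (hq.comp contDiffOn_fst (fun x hx => hx.1))

/-- `∂a/∂p` for `a = ∂J/∂p`. -/
def Ja1 (τ p q : ℝ) : ℝ := -(τ * ph ((qf q - τ * qf p) / √(1 - τ ^ 2)) / (√(1 - τ ^ 2) * ph (qf p)))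

/-- `∂a/∂q` for `a = ∂J/∂p`. -/
def Ja2 (τ p q : ℝ) : ℝ := ph ((qf q - τ * qf p) / √(1 - τ ^ 2)) / (√(1 - τ ^ 2) * ph (qf q))

lemma fderiv_Ja {τ : ℝ} (hc : 0 < √(1 - τ ^ 2)) {p q : ℝ} (hp : p ∈ Ioo (0 : ℝ) 1)
    (hq : q ∈ Ioo (0 : ℝ) 1) (s t : ℝ) :
    fderiv ℝ (Ja τ) (p, q) (s, t) = Ja1 τ p q * s + Ja2 τ p q * t := by
  have d1 : HasFDerivAt (fun x : ℝ × ℝ => qf x.1) ((ph (qf p))⁻¹ • ContinuousLinearMap.fst ℝ ℝ ℝ)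
      (p, q) := (hasDerivAt_qf hp).comp_hasFDerivAt (p, q) hasFDerivAt_fst
  have d2 : HasFDerivAt (fun x : ℝ × ℝ => qf x.2) ((ph (qf q))⁻¹ • ContinuousLinearMap.snd ℝ ℝ ℝ)
      (p, q) := (hasDerivAt_qf hq).comp_hasFDerivAt (p, q) hasFDerivAt_snd
  have d3 := (d2.sub (d1.const_mul τ)).mul_const (√(1 - τ ^ 2))⁻¹
  have d4 : HasFDerivAt (Ja τ) _ (p, q) :=
    (hasDerivAt_Phi ((qf q - τ * qf p) * (√(1 - τ ^ 2))⁻¹)).comp_hasFDerivAt (p, q) d3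
  rw [d4.fderiv]
  change ph ((qf q - τ * qf p) * (√(1 - τ ^ 2))⁻¹) * ((√(1 - τ ^ 2))⁻¹ * ((ph (qf q))⁻¹ * t -
    τ * ((ph (qf p))⁻¹ * s))) = _
  unfold Ja1 Ja2
  have := (ph_pos (qf p)).ne'
  have := (ph_pos (qf q)).ne'
  simp only [div_eq_mul_inv]
  field_simp
  ring

/-- The determinant identity `J_pp J_qq = τ² J_pq²` for the Hessian of `J`. It expresses that the bivariate
Gaussian density at `(Φ⁻¹ p, Φ⁻¹ q)` factors in two ways, according to which variable is conditioned
on. -/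
lemma Ja_det {τ : ℝ} (h0 : 0 < τ) (h1 : τ < 1) (p q : ℝ) :
    Ja1 τ p q * Ja1 τ q p = (τ * Ja2 τ p q) ^ 2 := by
  have hc := sqrt_pos_of h0 h1
  have hcs : √(1 - τ ^ 2) ^ 2 = 1 - τ ^ 2 := Real.sq_sqrt (by nlinarith)
  have e : ph ((qf p - τ * qf q) / √(1 - τ ^ 2)) * ph (qf q) =
      ph ((qf q - τ * qf p) / √(1 - τ ^ 2)) * ph (qf p) := by
    unfold ph
    have : ∀ k a b : ℝ, k * Real.exp a * (k * Real.exp b) = k ^ 2 * Real.exp (a + b) := fun k a b => by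
      rw [Real.exp_add]; ring
    rw [this, this]
    congr 2
    have : 1 - τ ^ 2 ≠ 0 := by nlinarith
    rw [div_pow, div_pow, hcs]
    field_simp
    ring
  have := (ph_pos (qf p)).ne'
  have := (ph_pos (qf q)).ne'
  unfold Ja1 Ja2
  rw [mul_pow, div_pow, neg_mul_neg, div_mul_div_comm, ← mul_div_assoc]
  rw [div_eq_div_iff (by positivity) (by positivity)]
  linear_combination (τ ^ 2 * (√(1 - τ ^ 2)) ^ 2 * ph (qf q) *
    ph ((qf q - τ * qf p) / √(1 - τ ^ 2))) * e

/-- The second-order term of `J` is nonpositive in expectation for deviations of standard deviations `X`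
and `Y` whose covariance `z` is at most `τ X Y`; this is completing the square with `Ja_det`. -/
lemma Ja_quad {τ : ℝ} (h0 : 0 < τ) (h1 : τ < 1) (p q : ℝ) {X Y z : ℝ} (hX : 0 ≤ X)
    (hY : 0 ≤ Y) (hz : z ≤ τ * (X * Y)) :
    Ja1 τ p q * X ^ 2 / 2 + Ja2 τ p q * z + Ja1 τ q p * Y ^ 2 / 2 ≤ 0 := by
  have hc := sqrt_pos_of h0 h1
  have hd := Ja_det h0 h1 p q
  have n1 : Ja1 τ p q ≤ 0 := by
    unfold Ja1; have := ph_pos (qf p); have := ph_pos ((qf q - τ * qf p) / √(1 - τ ^ 2))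
    rw [neg_nonpos]; positivity
  have n1' : Ja1 τ q p ≤ 0 := by
    unfold Ja1; have := ph_pos (qf q); have := ph_pos ((qf p - τ * qf q) / √(1 - τ ^ 2))
    rw [neg_nonpos]; positivity
  have n2 : 0 ≤ Ja2 τ p q := by
    unfold Ja2; have := ph_pos (qf q); have := ph_pos ((qf q - τ * qf p) / √(1 - τ ^ 2))
    positivity
  have e : τ * Ja2 τ p q = √(-Ja1 τ p q) * √(-Ja1 τ q p) := by
    rw [← Real.sqrt_mul (by linarith), neg_mul_neg, hd, Real.sqrt_sq (by positivity)]
  have s1 := Real.sq_sqrt (show 0 ≤ -Ja1 τ p q by linarith)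
  have s2 := Real.sq_sqrt (show 0 ≤ -Ja1 τ q p by linarith)
  have : Ja2 τ p q * z ≤ √(-Ja1 τ p q) * √(-Ja1 τ q p) * (X * Y) := by
    rw [← e]; nlinarith [mul_le_mul_of_nonneg_left hz n2]
  nlinarith [sq_nonneg (√(-Ja1 τ p q) * X - √(-Ja1 τ q p) * Y)]

/-- Second-order expansion of `J`, uniformly on compact parts of the open square. -/
lemma J_taylor {τ : ℝ} (h0 : 0 < τ) (h1 : τ < 1) {e : ℝ} (he : 0 < e) :
    ∃ C, 0 ≤ C ∧ ∀ p ∈ Icc e (1 - e), ∀ q ∈ Icc e (1 - e), ∀ p' ∈ Icc e (1 - e),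
      ∀ q' ∈ Icc e (1 - e), |J τ p' q' - (J τ p q + Ja τ (p, q) * (p' - p) + Ja τ (q, p) * (q' - q) +
        (Ja1 τ p q * (p' - p) ^ 2 / 2 + Ja2 τ p q * ((p' - p) * (q' - q)) +
          Ja1 τ q p * (q' - q) ^ 2 / 2))| ≤ C * (|p' - p| + |q' - q|) ^ 3 := by
  have hsub : Icc e (1 - e) ⊆ Ioo (0 : ℝ) 1 := fun x hx => ⟨by linarith [hx.1], by linarith [hx.2]⟩
  have hc := sqrt_pos_of h0 h1
  obtain ⟨C, hC, hT⟩ := taylor_two (isOpen_Ioo.prod isOpen_Ioo) (Ja_contDiffOn τ)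
    (isCompact_Icc.prod isCompact_Icc) ((convex_Icc e (1 - e)).prod (convex_Icc e (1 - e)))
    (Set.prod_mono hsub hsub)
  have hT' : ∀ p ∈ Icc e (1 - e), ∀ q ∈ Icc e (1 - e), ∀ p' ∈ Icc e (1 - e), ∀ q' ∈ Icc e (1 - e),
      |Ja τ (p', q') - Ja τ (p, q) - (Ja1 τ p q * (p' - p) + Ja2 τ p q * (q' - q))| ≤
        C * (|p' - p| + |q' - q|) ^ 2 := by
    intro p hp q hq p' hp' q' hq'
    have := hT (p, q) ⟨hp, hq⟩ (p', q') ⟨hp', hq'⟩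
    rw [Prod.mk_sub_mk, fderiv_Ja hc (hsub hp) (hsub hq)] at this
    refine this.trans ?_
    gcongr
    rw [Prod.norm_mk, Real.norm_eq_abs, Real.norm_eq_abs]
    exact max_le (by linarith [abs_nonneg (q' - q)]) (by linarith [abs_nonneg (p' - p)])
  have useg : ∀ p ∈ Icc e (1 - e), ∀ p' ∈ Icc e (1 - e), uIcc p p' ⊆ Icc e (1 - e) :=
    fun p hp p' hp' => uIcc_subset_Icc hp hp'
  have uabs : ∀ p p' x : ℝ, x ∈ uIcc p p' → |x - p| ≤ |p' - p| := fun p p' x hx =>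
    abs_sub_left_of_mem_uIcc hx
  refine ⟨2 * C, by positivity, fun p hp q hq p' hp' q' hq' => ?_⟩
  set D := |p' - p| + |q' - q| with hD
  have hDn : 0 ≤ D := by positivity
  have s1 := (convex_uIcc p p').norm_image_sub_le_of_norm_hasDerivWithin_le
    (f := fun x => J τ x q' - (Ja τ (p, q) * (x - p) + Ja1 τ p q * (x - p) ^ 2 / 2 +
      Ja2 τ p q * ((x - p) * (q' - q))))
    (f' := fun x => Ja τ (x, q') - (Ja τ (p, q) + Ja1 τ p q * (x - p) + Ja2 τ p q * (q' - q)))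
    (C := C * D ^ 2)
    (fun x hx => by
      have hx' := useg p hp p' hp' hx
      apply HasDerivAt.hasDerivWithinAt
      apply (hasDerivAt_J τ (hsub hx') q').sub
      have b1 := (hasDerivAt_id x).sub_const p
      have := ((b1.const_mul (Ja τ (p, q))).add (((b1.pow 2).const_mul (Ja1 τ p q)).div_const 2)).add
        ((b1.mul_const (q' - q)).const_mul (Ja2 τ p q))
      refine this.congr_deriv ?_
      simp; ring)
    (fun x hx => by
      have hx' := useg p hp p' hp' hx
      have := hT' p hp q hq x hx' q' hq'
      rw [Real.norm_eq_abs]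
      calc _ = _ := by congr 1; ring
        _ ≤ _ := this
        _ ≤ _ := by
          have := uabs _ _ _ hx
          rw [hD]; gcongr) left_mem_uIcc right_mem_uIcc
  have s2 := (convex_uIcc q q').norm_image_sub_le_of_norm_hasDerivWithin_le
    (f := fun y => J τ y p - (Ja τ (q, p) * (y - q) + Ja1 τ q p * (y - q) ^ 2 / 2))
    (f' := fun y => Ja τ (y, p) - (Ja τ (q, p) + Ja1 τ q p * (y - q)))
    (C := C * D ^ 2)
    (fun x hx => by
      have hx' := useg q hq q' hq' hx
      apply HasDerivAt.hasDerivWithinAt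
      apply (hasDerivAt_J τ (hsub hx') p).sub
      have b1 := (hasDerivAt_id x).sub_const q
      have := (b1.const_mul (Ja τ (q, p))).add (((b1.pow 2).const_mul (Ja1 τ q p)).div_const 2)
      refine this.congr_deriv ?_
      simp; ring)
    (fun x hx => by
      have hx' := useg q hq q' hq' hx
      have := hT' q hq p hp x hx' p hp
      rw [Real.norm_eq_abs]
      calc _ = _ := by congr 1; ring
        _ ≤ _ := this
        _ ≤ _ := by
          have := uabs _ _ _ hx
          rw [sub_self, abs_zero, add_zero, hD]
          have : |x - q| ≤ |p' - p| + |q' - q| := by linarith [abs_nonneg (p' - p)]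
          gcongr) left_mem_uIcc right_mem_uIcc
  rw [Real.norm_eq_abs, Real.norm_eq_abs] at s1 s2
  rw [J_symm h0 h1 q' p, J_symm h0 h1 q p] at s2
  have t1 : C * D ^ 2 * |p' - p| ≤ C * D ^ 2 * D := by
    gcongr; rw [hD]; linarith [abs_nonneg (q' - q)]
  have t2 : C * D ^ 2 * |q' - q| ≤ C * D ^ 2 * D := by
    gcongr; rw [hD]; linarith [abs_nonneg (p' - p)]
  have := abs_add_le
    (J τ p' q' - (Ja τ (p, q) * (p' - p) + Ja1 τ p q * (p' - p) ^ 2 / 2 +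
      Ja2 τ p q * ((p' - p) * (q' - q))) - (J τ p q' - (Ja τ (p, q) * (p - p) + Ja1 τ p q * (p - p) ^ 2 / 2 +
      Ja2 τ p q * ((p - p) * (q' - q)))))
    (J τ p q' - (Ja τ (q, p) * (q' - q) + Ja1 τ q p * (q' - q) ^ 2 / 2) -
      (J τ p q - (Ja τ (q, p) * (q - q) + Ja1 τ q p * (q - q) ^ 2 / 2)))
  calc _ = _ := by congr 1; ring
    _ ≤ _ := this
    _ ≤ _ := add_le_add s1 s2
    _ ≤ C * D ^ 2 * D + C * D ^ 2 * D := add_le_add t1 t2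
    _ = _ := by ring

/-- On the diagonal the two partial derivatives agree, and `(1 - τ) / √(1 - τ²) = √((1 - τ) / (1 + τ))`. -/
lemma hasDerivAt_J_diag {τ : ℝ} (h0 : 0 < τ) (h1 : τ < 1) {p : ℝ} (hp : p ∈ Ioo (0 : ℝ) 1) :
    HasDerivAt (fun p => J τ p p) (2 * Phi (√((1 - τ) / (1 + τ)) * qf p)) p := by
  have hJ : Ja τ (p, p) = Phi (√((1 - τ) / (1 + τ)) * qf p) := by
    unfold Ja
    congr 1
    have e : √((1 - τ) / (1 + τ)) = (1 - τ) / √(1 - τ ^ 2) := by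
      rw [eq_div_iff (sqrt_pos_of h0 h1).ne', ← Real.sqrt_mul (by apply div_nonneg <;> linarith)]
      rw [show (1 - τ) / (1 + τ) * (1 - τ ^ 2) = (1 - τ) ^ 2 by
        field_simp; ring, Real.sqrt_sq (by linarith)]
    rw [e]; ring
  obtain ⟨e, he, he1, he2⟩ : ∃ e, 0 < e ∧ e < p ∧ p < 1 - e := by
    refine ⟨min p (1 - p) / 2, by have := hp.1; have := hp.2; simp [hp.1, hp.2], ?_, ?_⟩
    · have := min_le_left p (1 - p); have := hp.1; linarith
    · have := min_le_right p (1 - p); have := hp.2; linarith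
  obtain ⟨C, hC, hT⟩ := J_taylor h0 h1 he
  have hpm : p ∈ Icc e (1 - e) := ⟨he1.le, he2.le⟩
  rw [← hJ, hasDerivAt_iff_isLittleO]
  set D := Ja1 τ p p / 2 + Ja2 τ p p + Ja1 τ p p / 2 with hD
  have hO : (fun x => J τ x x - J τ p p - (x - p) • (2 * Ja τ (p, p))) =O[𝓝 p]
      fun x => (x - p) ^ 2 := by
    apply Asymptotics.IsBigO.of_bound (|D| + C * 8)
    filter_upwards [Ioo_mem_nhds he1 he2] with x hx
    have := hT p hpm p hpm x ⟨hx.1.le, hx.2.le⟩ x ⟨hx.1.le, hx.2.le⟩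
    have hx1 : |x - p| ≤ 1 := by rw [abs_le]; constructor <;> linarith [hx.1, hx.2]
    have hcube : C * (|x - p| + |x - p|) ^ 3 ≤ C * 8 * (x - p) ^ 2 := by
      rw [← sq_abs (x - p)]
      have : (|x - p| + |x - p|) ^ 3 = 8 * |x - p| ^ 2 * |x - p| := by ring
      rw [this]
      have : 8 * |x - p| ^ 2 * |x - p| ≤ 8 * |x - p| ^ 2 * 1 := by gcongr
      nlinarith
    rw [Real.norm_eq_abs, Real.norm_eq_abs, abs_of_nonneg (sq_nonneg (x - p)), smul_eq_mul]
    have e1 : J τ x x - J τ p p - (x - p) * (2 * Ja τ (p, p)) =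
        D * (x - p) ^ 2 + (J τ x x - (J τ p p + Ja τ (p, p) * (x - p) + Ja τ (p, p) * (x - p) +
        (Ja1 τ p p * (x - p) ^ 2 / 2 + Ja2 τ p p * ((x - p) * (x - p)) +
          Ja1 τ p p * (x - p) ^ 2 / 2))) := by rw [hD]; ring
    rw [e1]
    refine (abs_add_le _ _).trans ?_
    rw [abs_mul, abs_of_nonneg (sq_nonneg (x - p))]
    linarith
  refine hO.trans_isLittleO ?_
  have := (Asymptotics.isLittleO_pow_id (𝕜 := ℝ) (n := 2) (by norm_num)).comp_tendsto
    (show Tendsto (fun x => x - p) (𝓝 p) (𝓝 0) by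
      have : Tendsto (fun x => x - p) (𝓝 p) (𝓝 (p - p)) := (continuous_id.sub continuous_const).tendsto p
      simpa using this)
  exact this

end

/-! ### The two-function Borell inequality -/

section

variable {E : Type*} [NormedAddCommGroup E] [InnerProductSpace ℝ E] [FiniteDimensional ℝ E]
  [MeasurableSpace E] [BorelSpace E]

lemma mp_integral {X Y : Type*} [MeasurableSpace X] [MeasurableSpace Y] {μ : Measure X}
    {ν : Measure Y} {g : X → Y} (h : MeasurePreserving g μ ν) {f : Y → ℝ} (hf : Measurable f) :
    ∫ x, f (g x) ∂μ = ∫ y, f y ∂ν := by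
  rw [← h.map_eq, integral_map h.measurable.aemeasurable hf.aestronglyMeasurable]

/-- `2`-stability of `γ ⊗ γ`: normalized sum of two independent pairs. -/
lemma map_double {b : ℝ} (hb : b ^ 2 = 1 / 2) :
    MeasurePreserving (fun w : (E × E) × (E × E) => b • w.1 + b • w.2)
      (((stdGaussian E).prod (stdGaussian E)).prod ((stdGaussian E).prod (stdGaussian E)))
      ((stdGaussian E).prod (stdGaussian E)) := by
  refine ⟨by fun_prop, ?_⟩
  let L : (E × E) × (E × E) →L[ℝ] E × E :=
    b • ContinuousLinearMap.fst ℝ (E × E) (E × E) + b • ContinuousLinearMap.snd ℝ (E × E) (E × E)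
  have hL : (fun w : (E × E) × (E × E) => b • w.1 + b • w.2) = L := by
    ext p <;> simp [L]
  rw [hL]
  apply Measure.ext_of_charFunDual
  ext M
  set l1 := M.comp (ContinuousLinearMap.inl ℝ E E) with hl1
  set l2 := M.comp (ContinuousLinearMap.inr ℝ E E) with hl2
  have e1 : (M.comp L).comp (ContinuousLinearMap.inl ℝ (E × E) (E × E)) = b • M := by
    ext x <;> simp [L, ← map_smul]
  have e2 : (M.comp L).comp (ContinuousLinearMap.inr ℝ (E × E) (E × E)) = b • M := by
    ext x <;> simp [L, ← map_smul]
  have e3 : (b • M).comp (ContinuousLinearMap.inl ℝ E E) = b • l1 := rfl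
  have e4 : (b • M).comp (ContinuousLinearMap.inr ℝ E E) = b • l2 := rfl
  rw [charFunDual_map, charFunDual_prod, e1, e2]
  simp only [charFunDual_prod, e3, e4, ← hl1, ← hl2]
  simp only [charFunDual_stdGaussian, ← Complex.exp_add]
  congr 1
  rw [norm_smul, norm_smul, Real.norm_eq_abs]
  have hb' : ((|b| : ℝ) : ℂ) ^ 2 = 1 / 2 := by
    rw [← Complex.ofReal_pow, sq_abs, hb]; norm_num
  push_cast
  linear_combination (-((‖l1‖ : ℂ) ^ 2 + (‖l2‖ : ℂ) ^ 2)) * hb'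

/-- `F` takes values in `[e, 1 - e]` and is `l`-Lipschitz. -/
def Lp (e l : ℝ) (F : E → ℝ) : Prop :=
  (∀ x, F x ∈ Icc e (1 - e)) ∧ ∀ x h, |F (x + h) - F x| ≤ l * ‖h‖

lemma Lp.cont {e l : ℝ} {F : E → ℝ} (h : Lp e l F) : Continuous F := by
  have : LipschitzWith (Real.toNNReal l) F := by
    apply LipschitzWith.of_dist_le_mul
    intro x y
    have := h.2 y (x - y)
    rw [add_sub_cancel] at this
    rw [Real.dist_eq, dist_eq_norm]
    exact this.trans (mul_le_mul_of_nonneg_right (Real.le_coe_toNNReal l) (norm_nonneg _))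
  exact this.continuous

lemma Lp.lg {e l : ℝ} {F : E → ℝ} (h : Lp e l F) (he : 0 < e) : LG F :=
  LG.of_bdd h.cont.measurable 1 fun x => by
    rw [abs_le]; constructor <;> linarith [(h.1 x).1, (h.1 x).2]

lemma integral_mem_Icc {F : E → ℝ} (hF : LG F) {a b : ℝ} (h : ∀ x, F x ∈ Icc a b) :
    ∫ x, F x ∂stdGaussian E ∈ Icc a b := by
  constructor
  · have := integral_mono (μ := stdGaussian E) (integrable_const a) hF.integrable fun x => (h x).1
    simpa using this
  · have := integral_mono (μ := stdGaussian E) hF.integrable (integrable_const b) fun x => (h x).2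
    simpa using this

lemma Icc_sub {e : ℝ} (he : 0 < e) : Icc e (1 - e) ⊆ Ioo (0 : ℝ) 1 :=
  fun x hx => ⟨by linarith [hx.1], by linarith [hx.2]⟩

lemma J_mem {τ : ℝ} (h0 : 0 < τ) (h1 : τ < 1) (p q : ℝ) : J τ p q ∈ Icc (0 : ℝ) 1 := by
  have hou : ∀ s, ou τ (hl (qf q)) s ∈ Icc (0 : ℝ) 1 := fun s => by
    rw [ou_hl (sqrt_pos_of h0 h1)]; exact ⟨Phi_nonneg _, (Phi_lt_one _).le⟩
  rw [J_eq_S h0 h1, S]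
  have hm : ∀ s, hl (qf p) s * ou τ (hl (qf q)) s ∈ Icc (0 : ℝ) 1 := fun s =>
    ⟨mul_nonneg (hl_nonneg _ _) (hou s).1, mul_le_one₀ (hl_le_one _ _) (hou s).1 (hou s).2⟩
  exact integral_mem_Icc (LG.of_bdd (f := fun s => hl (qf p) s * ou τ (hl (qf q)) s)
    ((hl_LG _).meas.mul ((hl_LG _).ou τ).meas) 1 fun s => by
      rw [abs_of_nonneg (hm s).1]; exact (hm s).2) hm

lemma J_continuousOn {τ : ℝ} (h0 : 0 < τ) (h1 : τ < 1) :
    ContinuousOn (fun x : ℝ × ℝ => J τ x.1 x.2) (Ioo (0 : ℝ) 1 ×ˢ Ioo (0 : ℝ) 1) := by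
  have : LipschitzOnWith 2 (fun x : ℝ × ℝ => J τ x.1 x.2) (Ioo (0 : ℝ) 1 ×ˢ Ioo (0 : ℝ) 1) := by
    apply LipschitzOnWith.of_dist_le_mul
    intro x hx y hy
    rw [Real.dist_eq]
    refine (J_lip h0 h1 hy.1 hx.1 hy.2 hx.2).trans ?_
    have a1 : |x.1 - y.1| ≤ dist x y := by
      rw [Prod.dist_eq, ← Real.dist_eq]; exact le_max_left _ _
    have a2 : |x.2 - y.2| ≤ dist x y := by
      rw [Prod.dist_eq, ← Real.dist_eq]; exact le_max_right _ _
    norm_num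
    linarith
  exact this.continuousOn

/-- The pair of correlated vectors as a function of an independent pair. -/
def cor (τ : ℝ) (p : E × E) : E := τ • p.1 + √(1 - τ ^ 2) • p.2

lemma cor_cont (τ : ℝ) : Continuous (cor (E := E) τ) := by unfold cor; fun_prop

lemma mp_cor {τ : ℝ} (h0 : 0 < τ) (h1 : τ < 1) :
    MeasurePreserving (cor (E := E) τ) ((stdGaussian E).prod (stdGaussian E)) (stdGaussian E) :=
  map_stable (sq_add_sqrt (by rw [abs_of_pos h0]; exact h1.le))

/-- `𝔼 J(F(X), G(Y))` for `τ`-correlated `X, Y`. -/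
def EJ (τ : ℝ) (F G : E → ℝ) : ℝ :=
  ∫ p, J τ (F p.1) (G (cor τ p)) ∂((stdGaussian E).prod (stdGaussian E))

lemma EJ_cont {τ : ℝ} (h0 : 0 < τ) (h1 : τ < 1) {e l l' : ℝ} (he : 0 < e) {F G : E → ℝ}
    (hF : Lp e l F) (hG : Lp e l' G) : Continuous fun p : E × E => J τ (F p.1) (G (cor τ p)) :=
  (J_continuousOn h0 h1).comp_continuous
    ((hF.cont.comp continuous_fst).prodMk (hG.cont.comp (cor_cont τ)))
    fun p => ⟨Icc_sub he (hF.1 _), Icc_sub he (hG.1 _)⟩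

lemma EJ_integrable {τ : ℝ} (h0 : 0 < τ) (h1 : τ < 1) {X : Type*} [MeasurableSpace X]
    {μ : Measure X} [IsFiniteMeasure μ] {f g : X → ℝ}
    (hm : Measurable fun p => J τ (f p) (g p)) : Integrable (fun p => J τ (f p) (g p)) μ :=
  Integrable.of_bound hm.aestronglyMeasurable 1 (Filter.Eventually.of_forall fun p => by
    rw [Real.norm_eq_abs, abs_of_nonneg (J_mem h0 h1 _ _).1]; exact (J_mem h0 h1 _ _).2)

lemma Lp.dev {e l : ℝ} (he : 0 < e) {F : E → ℝ} (h : Lp e l F) (x : E) :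
    |F x - ∫ y, F y ∂stdGaussian E| ≤ l * (‖x‖ + ∫ y : E, ‖y‖ ∂stdGaussian E) := by
  have hi := (h.lg he).integrable
  have hn : Integrable (fun y : E => ‖y‖) (stdGaussian E) := by
    have := integrable_norm_pow (E := E) 1
    simp only [pow_one] at this
    refine this.mono' (by fun_prop) (Filter.Eventually.of_forall fun y => ?_)
    simp
  have e1 : F x - ∫ y, F y ∂stdGaussian E = ∫ y, (F x - F y) ∂stdGaussian E := by
    rw [integral_sub (integrable_const _) hi]; simp
  rw [e1]
  calc _ ≤ ∫ y, |F x - F y| ∂stdGaussian E := abs_integral_le_integral_abs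
    _ ≤ ∫ y, l * (‖x‖ + ‖y‖) ∂stdGaussian E := by
      refine integral_mono ((integrable_const _).sub hi).abs
        (((integrable_const _).add hn).const_mul _) fun y => ?_
      have h2 := h.2 y (x - y)
      rw [add_sub_cancel] at h2
      have hl : 0 ≤ l * ‖x - y‖ := (abs_nonneg _).trans h2
      rcases (norm_nonneg (x - y)).eq_or_lt with h0 | h0
      · have : x = y := by rwa [eq_comm, norm_sub_eq_zero_iff] at h0
        subst this
        by_cases hx : 0 ≤ l
        · simp only [sub_self, abs_zero]; positivity
        · -- a negative Lipschitz constant forces the space to be trivial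
          have h3 := h.2 x x
          have h4 : l * ‖x‖ ≤ 0 := mul_nonpos_of_nonpos_of_nonneg (not_le.1 hx).le (norm_nonneg _)
          have h5 : l * ‖x‖ = 0 := le_antisymm h4 ((abs_nonneg _).trans h3)
          have h6 : ‖x‖ = 0 := by
            rcases mul_eq_zero.1 h5 with h | h
            · exact absurd h.symm.le hx
            · exact h
          simp [h6]
      · have hl0 : 0 ≤ l := by
          by_contra! hneg
          nlinarith
        exact h2.trans (mul_le_mul_of_nonneg_left (norm_sub_le x y) hl0)
    _ = _ := by
      rw [integral_const_mul, integral_add (integrable_const _) hn]; simp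

lemma norm_cor_le {τ : ℝ} (h0 : 0 < τ) (h1 : τ < 1) (p : E × E) : ‖cor τ p‖ ≤ ‖p.1‖ + ‖p.2‖ := by
  have hc : √(1 - τ ^ 2) ≤ 1 := Real.sqrt_le_one.2 (by nlinarith)
  unfold cor
  refine (norm_add_le _ _).trans ?_
  rw [norm_smul, norm_smul, Real.norm_eq_abs, Real.norm_eq_abs, abs_of_pos h0,
    abs_of_nonneg (Real.sqrt_nonneg _)]
  exact add_le_add (mul_le_of_le_one_left (norm_nonneg _) h1.le)
    (mul_le_of_le_one_left (norm_nonneg _) hc)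

/-- One step: the quadratic part of the expansion of `J` at the means is nonpositive in
expectation (the matrix of second derivatives is compensated by the spectral gap), so only a cubic
error remains. -/
lemma EJ_one_step {τ : ℝ} (h0 : 0 < τ) (h1 : τ < 1) {e : ℝ} (he : 0 < e) :
    ∃ C, 0 ≤ C ∧ ∀ l, 0 ≤ l → ∀ F G : E → ℝ, Lp e l F → Lp e l G →
      EJ τ F G ≤ J τ (∫ x, F x ∂stdGaussian E) (∫ x, G x ∂stdGaussian E) + C * l ^ 3 := by
  obtain ⟨C, hC, hT⟩ := J_taylor h0 h1 he
  set m := ∫ y : E, ‖y‖ ∂stdGaussian E with hm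
  have hm0 : 0 ≤ m := integral_nonneg fun y => norm_nonneg y
  set I := ∫ p : E × E, (1 + ‖p.1‖) ^ 3 * (1 + ‖p.2‖) ^ 3 ∂((stdGaussian E).prod (stdGaussian E))
    with hI
  have hI0 : 0 ≤ I := integral_nonneg fun p => by positivity
  refine ⟨C * (2 + 2 * m) ^ 3 * I, by positivity, fun l hl F G hF hG => ?_⟩
  have hiI : Integrable (fun p : E × E => (1 + ‖p.1‖) ^ 3 * (1 + ‖p.2‖) ^ 3)
      ((stdGaussian E).prod (stdGaussian E)) :=
    (integrable_norm_pow (E := E) 3).mul_prod (integrable_norm_pow (E := E) 3)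
  set P := ∫ x, F x ∂stdGaussian E with hP
  set Q := ∫ x, G x ∂stdGaussian E with hQ
  set A := fun x => F x - P with hA
  set B := fun x => G x - Q with hB
  have hAL : LG A := (hF.lg he).sub (LG.const P)
  have hBL : LG B := (hG.lg he).sub (LG.const Q)
  have hPm : P ∈ Icc e (1 - e) := integral_mem_Icc (hF.lg he) hF.1
  have hQm : Q ∈ Icc e (1 - e) := integral_mem_Icc (hG.lg he) hG.1
  have hA0 : ∫ x, A x ∂stdGaussian E = 0 := by
    rw [hA, integral_sub (hF.lg he).integrable (integrable_const _)]; simp [hP]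
  have hB0 : ∫ x, B x ∂stdGaussian E = 0 := by
    rw [hB, integral_sub (hG.lg he).integrable (integrable_const _)]; simp [hQ]
  have hAl : ∀ x h, |A (x + h) - A x| ≤ l * ‖h‖ := fun x h => by
    have := hF.2 x h; simpa [hA] using this
  have hBl : ∀ x h, |B (x + h) - B x| ≤ l * ‖h‖ := fun x h => by
    have := hG.2 x h; simpa [hB] using this
  have gap := gap_one_cross hAL hBL hA0 hB0 hAl hBl h0 h1.le
  -- integrals against the joint law
  set ν := (stdGaussian E).prod (stdGaussian E) with hν
  have iA : Integrable (fun p : E × E => A p.1) ν := by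
    simpa using hAL.integrable_prod (LG.const 1) 1 0 0 0
  have iB : Integrable (fun p : E × E => B (cor τ p)) ν := by
    simpa [cor] using hBL.integrable_prod (LG.const 1) τ (√(1 - τ ^ 2)) 0 0
  have iAA : Integrable (fun p : E × E => A p.1 * A p.1) ν := by
    simpa using hAL.integrable_prod hAL 1 0 1 0
  have iAB : Integrable (fun p : E × E => A p.1 * B (cor τ p)) ν := by
    simpa [cor] using hAL.integrable_prod hBL 1 0 τ (√(1 - τ ^ 2))
  have iBB : Integrable (fun p : E × E => B (cor τ p) * B (cor τ p)) ν := by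
    simpa [cor] using hBL.integrable_prod hBL τ (√(1 - τ ^ 2)) τ (√(1 - τ ^ 2))
  have vA : ∫ p : E × E, A p.1 ∂ν = 0 := by
    rw [hν, mp_integral measurePreserving_fst hAL.meas, hA0]
  have vB : ∫ p : E × E, B (cor τ p) ∂ν = 0 := by
    rw [hν, mp_integral (mp_cor h0 h1) hBL.meas, hB0]
  have vAA : ∫ p : E × E, A p.1 * A p.1 ∂ν = S 1 A A := by
    rw [hν, mp_integral (f := fun x => A x * A x) measurePreserving_fst (hAL.meas.mul hAL.meas), S_one]
  have vBB : ∫ p : E × E, B (cor τ p) * B (cor τ p) ∂ν = S 1 B B := by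
    rw [hν, mp_integral (f := fun x => B x * B x) (mp_cor h0 h1) (hBL.meas.mul hBL.meas), S_one]
  have vAB : ∫ p : E × E, A p.1 * B (cor τ p) ∂ν = S τ A B := (S_eq_prod hAL hBL τ).symm
  have quad := Ja_quad h0 h1 P Q (Real.sqrt_nonneg (S 1 A A)) (Real.sqrt_nonneg (S 1 B B))
    ((le_abs_self _).trans gap)
  rw [Real.sq_sqrt (S_self_nonneg hAL zero_le_one le_rfl),
    Real.sq_sqrt (S_self_nonneg hBL zero_le_one le_rfl)] at quad
  have pw : ∀ p : E × E, J τ (F p.1) (G (cor τ p)) ≤ J τ P Q + Ja τ (P, Q) * A p.1 +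
      Ja τ (Q, P) * B (cor τ p) + Ja1 τ P Q / 2 * (A p.1 * A p.1) +
      Ja2 τ P Q * (A p.1 * B (cor τ p)) + Ja1 τ Q P / 2 * (B (cor τ p) * B (cor τ p)) +
      C * (2 + 2 * m) ^ 3 * l ^ 3 * ((1 + ‖p.1‖) ^ 3 * (1 + ‖p.2‖) ^ 3) := by
    intro p
    have t := (le_abs_self _).trans (hT P hPm Q hQm _ (hF.1 p.1) _ (hG.1 (cor τ p)))
    have d1 : |F p.1 - P| ≤ l * (‖p.1‖ + m) := hF.dev he p.1
    have d2 : |G (cor τ p) - Q| ≤ l * (‖p.1‖ + ‖p.2‖ + m) :=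
      (hG.dev he (cor τ p)).trans (by have := norm_cor_le h0 h1 p; gcongr)
    have d3 : |F p.1 - P| + |G (cor τ p) - Q| ≤ l * ((2 + 2 * m) * ((1 + ‖p.1‖) * (1 + ‖p.2‖))) := by
      have : ‖p.1‖ + m + (‖p.1‖ + ‖p.2‖ + m) ≤ (2 + 2 * m) * ((1 + ‖p.1‖) * (1 + ‖p.2‖)) := by
        have a := norm_nonneg p.1
        have b := norm_nonneg p.2
        have := mul_nonneg a b
        have := mul_nonneg hm0 a
        have := mul_nonneg hm0 b
        have := mul_nonneg hm0 (mul_nonneg a b)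
        nlinarith
      have := mul_le_mul_of_nonneg_left this hl
      linarith
    have d4 : C * (|F p.1 - P| + |G (cor τ p) - Q|) ^ 3 ≤
        C * (l * ((2 + 2 * m) * ((1 + ‖p.1‖) * (1 + ‖p.2‖)))) ^ 3 := by gcongr
    simp only [hA, hB]
    have d5 : C * (l * ((2 + 2 * m) * ((1 + ‖p.1‖) * (1 + ‖p.2‖)))) ^ 3 =
      C * (2 + 2 * m) ^ 3 * l ^ 3 * ((1 + ‖p.1‖) ^ 3 * (1 + ‖p.2‖) ^ 3) := by ring
    rw [d5] at d4
    linarith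
  have j1 : Integrable (fun p : E × E => J τ P Q + Ja τ (P, Q) * A p.1) ν :=
    (integrable_const _).add (iA.const_mul _)
  have j2 : Integrable (fun p : E × E => J τ P Q + Ja τ (P, Q) * A p.1 +
      Ja τ (Q, P) * B (cor τ p)) ν := j1.add (iB.const_mul _)
  have j3 : Integrable (fun p : E × E => J τ P Q + Ja τ (P, Q) * A p.1 +
      Ja τ (Q, P) * B (cor τ p) + Ja1 τ P Q / 2 * (A p.1 * A p.1)) ν := j2.add (iAA.const_mul _)
  have j4 : Integrable (fun p : E × E => J τ P Q + Ja τ (P, Q) * A p.1 +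
      Ja τ (Q, P) * B (cor τ p) + Ja1 τ P Q / 2 * (A p.1 * A p.1) +
      Ja2 τ P Q * (A p.1 * B (cor τ p))) ν := j3.add (iAB.const_mul _)
  have j5 : Integrable (fun p : E × E => J τ P Q + Ja τ (P, Q) * A p.1 +
      Ja τ (Q, P) * B (cor τ p) + Ja1 τ P Q / 2 * (A p.1 * A p.1) +
      Ja2 τ P Q * (A p.1 * B (cor τ p)) + Ja1 τ Q P / 2 * (B (cor τ p) * B (cor τ p))) ν :=
    j4.add (iBB.const_mul _)
  have := integral_mono (EJ_integrable h0 h1 (EJ_cont h0 h1 he hF hG).measurable)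
    (j5.add (hiI.const_mul (C * (2 + 2 * m) ^ 3 * l ^ 3))) pw
  simp only [Pi.add_apply] at this
  rw [integral_add j5 (hiI.const_mul _), integral_add j4 (iBB.const_mul _),
    integral_add j3 (iAB.const_mul _), integral_add j2 (iAA.const_mul _),
    integral_add j1 (iB.const_mul _), integral_add (integrable_const _) (iA.const_mul _)] at this
  simp only [integral_const_mul, vA, vB, vAA, vAB, vBB, integral_const, probReal_univ, one_smul,
    mul_zero, add_zero] at this
  unfold EJ
  refine this.trans ?_
  rw [← hI]
  linarith

lemma Lp.comp {e l : ℝ} {F : E → ℝ} (h : Lp e l F) {b : ℝ} (hb : 0 ≤ b) (y : E) :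
    Lp e (l * b) fun x => F (b • x + y) := by
  refine ⟨fun x => h.1 _, fun x k => ?_⟩
  have := h.2 (b • x + y) (b • k)
  rw [norm_smul, Real.norm_eq_abs, abs_of_nonneg hb, ← mul_assoc] at this
  dsimp only
  rwa [smul_add, add_right_comm]

lemma Lp.avg {e l : ℝ} (he : 0 < e) {F : E → ℝ} (h : Lp e l F) {b : ℝ} (hb : 0 ≤ b) :
    Lp e (l * b) (ou b F) := by
  have hL := h.lg he
  refine ⟨fun x => integral_mem_Icc (hL.comp_affine _ _ _) fun y => h.1 _, fun x k => ?_⟩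
  unfold ou
  rw [← integral_sub (hL.comp_affine _ _ _).integrable (hL.comp_affine _ _ _).integrable]
  refine abs_integral_le_integral_abs.trans ?_
  have : ∀ y : E, |F (b • (x + k) + √(1 - b ^ 2) • y) - F (b • x + √(1 - b ^ 2) • y)| ≤
      l * b * ‖k‖ := fun y => (h.comp hb (√(1 - b ^ 2) • y)).2 x k
  refine (integral_mono ((hL.comp_affine _ _ _).integrable.sub
    (hL.comp_affine _ _ _).integrable).abs (integrable_const _) this).trans ?_
  simp

/-- Doubling: applying a bound on `𝔼 J(F, G) - J(𝔼F, 𝔼G)` to two independent halves of the Gaussian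
vector improves the error by a fixed factor. -/
lemma EJ_iter {τ : ℝ} (h0 : 0 < τ) (h1 : τ < 1) {e : ℝ} (he : 0 < e) :
    ∃ C, 0 ≤ C ∧ ∀ j : ℕ, ∀ l, 0 ≤ l → ∀ F G : E → ℝ, Lp e l F → Lp e l G →
      EJ τ F G ≤ J τ (∫ x, F x ∂stdGaussian E) (∫ x, G x ∂stdGaussian E) +
        C * √(1 / 2) ^ j * l ^ 3 := by
  obtain ⟨C, hC, hstep⟩ := EJ_one_step (E := E) h0 h1 he
  refine ⟨C, hC, fun j => ?_⟩
  induction j with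
  | zero => simpa using hstep
  | succ j ih =>
    intro l hl F G hF hG
    set b := √(1 / 2 : ℝ) with hb
    have hb2 : b ^ 2 = 1 / 2 := Real.sq_sqrt (by norm_num)
    have hb0 : 0 ≤ b := Real.sqrt_nonneg _
    have hbb : √(1 - b ^ 2) = b := by rw [hb2, hb]; norm_num
    have hb1 : |b| ≤ 1 := by rw [abs_of_nonneg hb0]; nlinarith
    have hFa := hF.avg he hb0
    have hGa := hG.avg he hb0
    have hcont := EJ_cont h0 h1 he hF hG
    have hlin : ∀ w w' : E × E, cor τ (b • w + b • w') = b • cor τ w + b • cor τ w' := by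
      intro w w'; simp only [cor, Prod.fst_add, Prod.snd_add, Prod.smul_fst, Prod.smul_snd]; module
    set K := C * b ^ j * (l * b) ^ 3 with hK
    set ν := (stdGaussian E).prod (stdGaussian E) with hν
    have e1 : EJ τ F G = ∫ w', ∫ w, J τ (F (b • w.1 + b • w'.1))
        (G (b • cor τ w + b • cor τ w')) ∂ν ∂ν := by
      unfold EJ
      rw [← hν, ← mp_integral (map_double (E := E) hb2) hcont.measurable, ← hν]
      rw [integral_prod_symm]
      · simp only [hlin, Prod.fst_add, Prod.smul_fst]
      · apply EJ_integrable h0 h1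
          (f := fun w : (E × E) × (E × E) => F (b • w.1 + b • w.2).1)
          (g := fun w => G (cor τ (b • w.1 + b • w.2)))
        exact hcont.measurable.comp (by fun_prop)
    have inner : ∀ w' : E × E, ∫ w, J τ (F (b • w.1 + b • w'.1))
        (G (b • cor τ w + b • cor τ w')) ∂ν ≤ J τ (ou b F w'.1) (ou b G (cor τ w')) + K := by
      intro w'
      have := ih (l * b) (by positivity) _ _ (hF.comp hb0 (b • w'.1)) (hG.comp hb0 (b • cor τ w'))
      refine this.trans (le_of_eq ?_)
      unfold ou
      simp only [hbb, add_comm (b • w'.1), add_comm (b • cor τ w')]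
      rw [hK]
    have iL : Integrable (fun w' : E × E => ∫ w, J τ (F (b • w.1 + b • w'.1))
        (G (b • cor τ w + b • cor τ w')) ∂ν) ν := by
      have : Integrable (fun w : (E × E) × (E × E) => J τ (F (b • w.1.1 + b • w.2.1))
          (G (b • cor τ w.1 + b • cor τ w.2))) (ν.prod ν) := by
        apply EJ_integrable h0 h1
        have : Measurable fun w : (E × E) × (E × E) =>
          J τ (F (b • w.1 + b • w.2).1) (G (cor τ (b • w.1 + b • w.2))) :=
            hcont.measurable.comp (g := fun p : E × E => J τ (F p.1) (G (cor τ p))) (by fun_prop)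
        simpa only [hlin, Prod.fst_add, Prod.smul_fst] using this
      exact this.integral_prod_right
    have iR : Integrable (fun w' : E × E => J τ (ou b F w'.1) (ou b G (cor τ w'))) ν :=
      EJ_integrable h0 h1 (EJ_cont h0 h1 he hFa hGa).measurable
    have e2 := integral_mono iL (iR.add (integrable_const K)) inner
    simp only [Pi.add_apply] at e2
    rw [integral_add iR (integrable_const K)] at e2
    have e3 := ih (l * b) (by positivity) _ _ hFa hGa
    rw [integral_ou (hF.lg he) hb1, integral_ou (hG.lg he) hb1] at e3
    rw [e1]
    refine e2.trans ?_
    simp only [integral_const, probReal_univ, one_smul]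
    have e4 : EJ τ (ou b F) (ou b G) = ∫ w', J τ (ou b F w'.1) (ou b G (cor τ w')) ∂ν := rfl
    rw [← e4]
    -- Each of the two halves contributes an error `K`, in which the Lipschitz constant has dropped to
    -- `l b`; as `2 b³ = b`, the total error gains a factor `b`.
    have e5 : C * b ^ (j + 1) * l ^ 3 = K + K := by
      rw [hK, mul_pow, pow_succ b j]
      have : b ^ 3 = b * (1 / 2) := by rw [← hb2]; ring
      rw [this]; ring
    rw [e5]
    linarith

/-- The error in `EJ_iter` tends to zero under repeated doubling. -/
lemma EJ_le {τ : ℝ} (h0 : 0 < τ) (h1 : τ < 1) {e l : ℝ} (he : 0 < e) (hl : 0 ≤ l) {F G : E → ℝ}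
    (hF : Lp e l F) (hG : Lp e l G) :
    EJ τ F G ≤ J τ (∫ x, F x ∂stdGaussian E) (∫ x, G x ∂stdGaussian E) := by
  obtain ⟨C, hC, h⟩ := EJ_iter (E := E) h0 h1 he
  have hb : √(1 / 2 : ℝ) < 1 := by rw [Real.sqrt_lt' one_pos]; norm_num
  have ht := (((tendsto_pow_atTop_nhds_zero_of_lt_one (Real.sqrt_nonneg _) hb).const_mul C).mul_const
    (l ^ 3)).const_add (J τ (∫ x, F x ∂stdGaussian E) (∫ x, G x ∂stdGaussian E))
  rw [mul_zero, zero_mul, add_zero] at ht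
  exact ge_of_tendsto' ht fun j => h j l hl F G hF hG

/-- Borell's inequality for Lipschitz functions bounded away from `0` and `1`, from `EJ_le` and
`p q ≤ J τ p q` applied pointwise. -/
lemma S_le_J_of_Lp {τ : ℝ} (h0 : 0 < τ) (h1 : τ < 1) {e l : ℝ} (he : 0 < e) (hl : 0 ≤ l)
    {F G : E → ℝ} (hF : Lp e l F) (hG : Lp e l G) :
    S τ F G ≤ J τ (∫ x, F x ∂stdGaussian E) (∫ x, G x ∂stdGaussian E) := by
  refine le_trans ?_ (EJ_le h0 h1 he hl hF hG)
  rw [S_eq_prod (hF.lg he) (hG.lg he), EJ]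
  refine integral_mono ?_ (EJ_integrable h0 h1 (EJ_cont h0 h1 he hF hG).measurable) fun p =>
    mul_le_J h0 h1 (Icc_sub he (hF.1 _)) (Icc_sub he (hG.1 _))
  simpa using (hF.lg he).integrable_prod (hG.lg he) 1 0 τ (√(1 - τ ^ 2))

lemma S_mono {f g F G : E → ℝ} (hf : LG f) (hg : LG g) (hF : LG F) (hG : LG G) (ρ : ℝ)
    (h1 : ∀ x, 0 ≤ f x) (h2 : ∀ x, f x ≤ F x) (h3 : ∀ x, 0 ≤ g x) (h4 : ∀ x, g x ≤ G x) :
    S ρ f g ≤ S ρ F G := by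
  rw [S_eq_prod hf hg, S_eq_prod hF hG]
  refine integral_mono ?_ ?_ fun p => mul_le_mul (h2 _) (h4 _) (h3 _) ((h1 _).trans (h2 _))
  · simpa using hf.integrable_prod hg 1 0 ρ (√(1 - ρ ^ 2))
  · simpa using hF.integrable_prod hG 1 0 ρ (√(1 - ρ ^ 2))

lemma ou_mem {f : E → ℝ} (hf : LG f) {a b : ℝ} (h : ∀ x, f x ∈ Icc a b) (s : ℝ) (x : E) :
    ou s f x ∈ Icc a b := integral_mem_Icc (hf.comp_affine _ _ _) fun _ => h _

lemma S_mem {f g : E → ℝ} (hf : Measurable f) (hg : Measurable g) (hf1 : ∀ x, f x ∈ Icc (0 : ℝ) 1)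
    (hg1 : ∀ x, g x ∈ Icc (0 : ℝ) 1) (s : ℝ) : S s f g ∈ Icc (0 : ℝ) 1 := by
  have hgL : LG g := LG.of_bdd hg 1 fun x => by rw [abs_of_nonneg (hg1 x).1]; exact (hg1 x).2
  have hm : ∀ x, f x * ou s g x ∈ Icc (0 : ℝ) 1 := fun x =>
    ⟨mul_nonneg (hf1 x).1 (ou_mem hgL hg1 s x).1,
      mul_le_one₀ (hf1 x).2 (ou_mem hgL hg1 s x).1 (ou_mem hgL hg1 s x).2⟩
  exact integral_mem_Icc (LG.of_bdd (f := fun x => f x * ou s g x) (hf.mul (hgL.ou s).meas) 1 fun x => by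
    rw [abs_of_nonneg (hm x).1]; exact (hm x).2) hm

/-- Borell's inequality at the smaller correlation `s² τ`: `T_s f` and `T_s g` are Lipschitz, and an affine
squeeze into `[e, 1 - e]` changes both sides by `O(e)`. -/
lemma S_le_J_aux {f g : E → ℝ} (hf : Measurable f) (hg : Measurable g)
    (hf1 : ∀ x, f x ∈ Icc (0 : ℝ) 1) (hg1 : ∀ x, g x ∈ Icc (0 : ℝ) 1)
    (hp : ∫ x, f x ∂stdGaussian E ∈ Ioo (0 : ℝ) 1) (hq : ∫ x, g x ∂stdGaussian E ∈ Ioo (0 : ℝ) 1)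
    {τ s : ℝ} (h0 : 0 < τ) (h1 : τ < 1) (hs0 : 0 < s) (hs1 : s < 1) :
    S (s * s * τ) f g ≤ J τ (∫ x, f x ∂stdGaussian E) (∫ x, g x ∂stdGaussian E) := by
  have habs : ∀ {k : E → ℝ}, (∀ x, k x ∈ Icc (0 : ℝ) 1) → ∀ x, |k x| ≤ 1 := fun h x => by
    rw [abs_of_nonneg (h x).1]; exact (h x).2
  have hfL : LG f := LG.of_bdd hf 1 (habs hf1)
  have hgL : LG g := LG.of_bdd hg 1 (habs hg1)
  have hsa : |s| ≤ 1 := by rw [abs_of_pos hs0]; exact hs1.le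
  have hτa : |τ| ≤ 1 := by rw [abs_of_pos h0]; exact h1.le
  set p := ∫ x, f x ∂stdGaussian E
  set q := ∫ x, g x ∂stdGaussian E
  set l := 4 * (s / √(1 - s ^ 2)) with hl
  have hl0 : 0 ≤ l := by positivity
  have hS := S_mem hf hg hf1 hg1 (s * s * τ)
  apply le_of_forall_pos_le_add
  intro t ht
  set e := min (1 / 4) (t / 8) with he
  have he0 : 0 < e := by positivity
  have he4 : e ≤ 1 / 4 := min_le_left _ _
  have het : e ≤ t / 8 := min_le_right _ _
  have hLp : ∀ {k : E → ℝ}, Measurable k → (∀ x, k x ∈ Icc (0 : ℝ) 1) →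
      Lp e l fun x => e + (1 - 2 * e) * ou s k x := by
    intro k hk hk1
    have hkL : LG k := LG.of_bdd hk 1 (habs hk1)
    refine ⟨fun x => ?_, fun x h => ?_⟩
    · have := ou_mem hkL hk1 s x
      constructor <;> nlinarith [this.1, this.2]
    · have := ou_lipschitz hk (habs hk1) hs0.le hs1 x h
      have e1 : e + (1 - 2 * e) * ou s k (x + h) - (e + (1 - 2 * e) * ou s k x) =
        (1 - 2 * e) * (ou s k (x + h) - ou s k x) := by ring
      rw [e1, abs_mul, abs_of_nonneg (by linarith)]
      exact (mul_le_of_le_one_left (abs_nonneg _) (by linarith)).trans this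
  have key := S_le_J_of_Lp h0 h1 he0 hl0 (hLp hf hf1) (hLp hg hg1)
  have hI : ∀ {k : E → ℝ}, LG k → ∫ x, (e + (1 - 2 * e) * ou s k x) ∂stdGaussian E =
      e + (1 - 2 * e) * ∫ x, k x ∂stdGaussian E := by
    intro k hk
    rw [integral_add (integrable_const _) ((hk.ou s).integrable.const_mul _), integral_const_mul,
      integral_ou hk hsa]
    simp
  rw [hI hfL, hI hgL] at key
  have low : (1 - 2 * e) * ((1 - 2 * e) * S (s * s * τ) f g) ≤
      S τ (fun x => e + (1 - 2 * e) * ou s f x) (fun x => e + (1 - 2 * e) * ou s g x) := by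
    rw [← S_split3 hfL hgL hτa hsa hsa, ← S_const_mul_right, ← S_const_mul_left]
    have h2e : 0 ≤ 1 - 2 * e := by linarith
    refine S_mono ((hfL.ou s).const_mul _) ((hgL.ou s).const_mul _) ((hLp hf hf1).lg he0)
      ((hLp hg hg1).lg he0) τ (fun x => mul_nonneg h2e (ou_mem hfL hf1 s x).1)
      (fun x => by linarith) (fun x => mul_nonneg h2e (ou_mem hgL hg1 s x).1) (fun x => by linarith)
  have hJ := (le_abs_self _).trans (J_lip h0 h1 hp (p' := e + (1 - 2 * e) * p)
    ⟨by nlinarith [hp.1], by nlinarith [hp.2]⟩ hq (q' := e + (1 - 2 * e) * q)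
    ⟨by nlinarith [hq.1], by nlinarith [hq.2]⟩)
  have a1 : |e + (1 - 2 * e) * p - p| ≤ e := by
    rw [abs_le]; constructor <;> nlinarith [hp.1, hp.2]
  have a2 : |e + (1 - 2 * e) * q - q| ≤ e := by
    rw [abs_le]; constructor <;> nlinarith [hq.1, hq.2]
  have low2 : S (s * s * τ) f g - 4 * e ≤ (1 - 2 * e) * ((1 - 2 * e) * S (s * s * τ) f g) := by
    nlinarith [hS.1, hS.2, mul_nonneg he0.le hS.1, mul_nonneg (mul_nonneg he0.le he0.le) hS.1,
      mul_nonneg he0.le (sub_nonneg.2 hS.2)]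
  linarith

/-- Borell's inequality for two functions with values in `[0, 1]`. -/
lemma S_le_J {f g : E → ℝ} (hf : Measurable f) (hg : Measurable g)
    (hf1 : ∀ x, f x ∈ Icc (0 : ℝ) 1) (hg1 : ∀ x, g x ∈ Icc (0 : ℝ) 1)
    (hp : ∫ x, f x ∂stdGaussian E ∈ Ioo (0 : ℝ) 1) (hq : ∫ x, g x ∂stdGaussian E ∈ Ioo (0 : ℝ) 1)
    {τ : ℝ} (h0 : 0 < τ) (h1 : τ < 1) :
    S τ f g ≤ J τ (∫ x, f x ∂stdGaussian E) (∫ x, g x ∂stdGaussian E) := by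
  -- Apply `S_le_J_aux` at a correlation `t > τ` with `s² = τ / t`, and let `t` decrease to `τ`.
  have ht : Tendsto (fun t => J t (∫ x, f x ∂stdGaussian E) (∫ x, g x ∂stdGaussian E)) (𝓝[>] τ)
      (𝓝 (J τ (∫ x, f x ∂stdGaussian E) (∫ x, g x ∂stdGaussian E))) :=
    (J_continuousAt h0 h1 _ _).tendsto.mono_left nhdsWithin_le_nhds
  refine ge_of_tendsto ht ?_
  filter_upwards [Ioo_mem_nhdsGT h1] with t htt
  have ht0 : 0 < t := h0.trans htt.1
  have hd : τ / t < 1 := (div_lt_one ht0).2 htt.1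
  have := S_le_J_aux hf hg hf1 hg1 hp hq ht0 htt.2 (s := √(τ / t)) (by positivity)
    (by rw [Real.sqrt_lt' one_pos]; simpa using hd)
  rwa [Real.mul_self_sqrt (by positivity), div_mul_cancel₀ _ ht0.ne'] at this

end

/-! ### Monotonicity of the deficit in the correlation -/

section

variable {E : Type*} [NormedAddCommGroup E] [InnerProductSpace ℝ E] [FiniteDimensional ℝ E]
  [MeasurableSpace E] [BorelSpace E]

/-- Conditioning on a common Gaussian component `W` of the two correlated vectors. -/
lemma S_fiber {f : E → ℝ} (hf : Measurable f) (hf1 : ∀ x, f x ∈ Icc (0 : ℝ) 1) {s c r : ℝ}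
    (hsc : s ^ 2 + c ^ 2 = 1) (hr : |r| ≤ 1) :
    ∫ W, S r (fun y => f (s • W + c • y)) (fun y => f (s • W + c • y)) ∂stdGaussian E =
      S (s ^ 2 + c ^ 2 * r) f f := by
  have habs : ∀ x, |f x| ≤ 1 := fun x => by rw [abs_of_nonneg (hf1 x).1]; exact (hf1 x).2
  have hL : LG f := LG.of_bdd hf 1 habs
  set d := c * √(1 - r ^ 2) with hd
  set ρ := s ^ 2 + c ^ 2 * r with hρ
  set G : E → ℝ := fun x => ∫ z, f (x + d • z) ∂stdGaussian E with hG
  have hGm : Measurable G := by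
    have : StronglyMeasurable fun p : E × E => f (p.1 + d • p.2) :=
      (hf.comp (by fun_prop)).stronglyMeasurable
    exact this.integral_prod_right'.measurable
  have hGb : ∀ x, |G x| ≤ 1 := fun x => by
    have := norm_integral_le_of_norm_le_const (μ := stdGaussian E) (f := fun z => f (x + d • z))
      (C := 1) (Filter.Eventually.of_forall fun z => by rw [Real.norm_eq_abs]; exact habs _)
    simpa using this
  have hGL : LG G := LG.of_bdd hGm 1 hGb
  have e1 : ∀ W : E, S r (fun y => f (s • W + c • y)) (fun y => f (s • W + c • y)) =
      ∫ y, f (s • W + c • y) * G (s • W + (c * r) • y) ∂stdGaussian E := by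
    intro W
    unfold S ou
    simp only [hG, hd, smul_add, smul_smul, add_assoc]
  simp only [e1]
  have hi1 := hL.integrable_prod hGL s c s (c * r)
  rw [← integral_prod (f := fun p : E × E => f (s • p.1 + c • p.2) * G (s • p.1 + (c * r) • p.2))
    hi1]
  set q := s * c * (1 - r) with hq
  have hi2 := hL.integrable_prod hGL 1 0 ρ q
  have e2 := mp_integral (map_rot (E := E) hsc)
    (f := fun p : E × E => f ((1 : ℝ) • p.1 + (0 : ℝ) • p.2) * G (ρ • p.1 + q • p.2))
    ((hf.comp (by fun_prop)).mul (hGm.comp (by fun_prop)))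
  have c1 : ρ * s + q * c = s := by rw [hρ, hq]; linear_combination s * hsc
  have c2 : ρ * c - q * s = c * r := by rw [hρ, hq]; linear_combination c * r * hsc
  have c3 : q ^ 2 + d ^ 2 = 1 - ρ ^ 2 := by
    have hr2 : (√(1 - r ^ 2)) ^ 2 = 1 - r ^ 2 :=
      Real.sq_sqrt (by have := (sq_le_one_iff_abs_le_one r).2 hr; linarith)
    rw [hq, hd, hρ, mul_pow c, hr2]
    linear_combination (s ^ 2 + 1 + c ^ 2 * r ^ 2) * hsc
  have e3 : ∀ p : E × E, ρ • (s • p.1 + c • p.2) + q • (c • p.1 - s • p.2) =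
      s • p.1 + (c * r) • p.2 := by
    intro p
    rw [← c2]; nth_rewrite 3 [← c1]
    module
  simp only [one_smul, zero_smul, add_zero, e3] at e2
  rw [e2]
  simp only [one_smul, zero_smul, add_zero] at hi2
  rw [integral_prod _ hi2, S]
  congr 1
  ext x
  dsimp only
  rw [integral_const_mul]
  congr 1
  have := integral_two hL (ρ • x) q d
  simp only [hG, add_assoc]
  rw [this, c3, ou]

lemma LG.of_mem {f : E → ℝ} (hf : Measurable f) (hf1 : ∀ x, f x ∈ Icc (0 : ℝ) 1) : LG f :=
  LG.of_bdd hf 1 fun x => by rw [abs_of_nonneg (hf1 x).1]; exact (hf1 x).2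

/-- Positivity improvement of `T_s` for `0 ≤ s < 1`. -/
lemma ou_pos {f : E → ℝ} (hf : Measurable f) (hf1 : ∀ x, f x ∈ Icc (0 : ℝ) 1)
    (hp : 0 < ∫ x, f x ∂stdGaussian E) {s : ℝ} (hs0 : 0 ≤ s) (hs1 : s < 1) (x : E) :
    0 < ou s f x := by
  have hL := LG.of_mem hf hf1
  have hs : 0 < √(1 - s ^ 2) := Real.sqrt_pos.2 (by nlinarith)
  refine lt_of_le_of_ne (ou_mem hL hf1 s x).1 fun h0 => ?_
  have h1 : (fun y => f (s • x + √(1 - s ^ 2) • y)) =ᵐ[stdGaussian E] 0 := by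
    rw [← integral_eq_zero_iff_of_nonneg (fun y => (hf1 _).1) (hL.comp_affine _ _ _).integrable]
    exact h0.symm
  have h2 : ∀ h, ou s f (x + h) = 0 := by
    intro h
    rw [ou_shift f hs]
    apply integral_eq_zero_of_ae
    filter_upwards [h1] with y hy
    simp only [Pi.zero_apply] at hy ⊢
    rw [hy, zero_mul]
  have h3 := integral_ou hL (ρ := s) (by rw [abs_of_nonneg hs0]; exact hs1.le)
  have h4 : ∀ y, ou s f y = 0 := fun y => by simpa using h2 (y - x)
  simp only [h4, integral_zero] at h3
  linarith

lemma ou_mem_Ioo {f : E → ℝ} (hf : Measurable f) (hf1 : ∀ x, f x ∈ Icc (0 : ℝ) 1)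
    (hp : ∫ x, f x ∂stdGaussian E ∈ Ioo (0 : ℝ) 1) {s : ℝ} (hs0 : 0 ≤ s) (hs1 : s < 1) (x : E) :
    ou s f x ∈ Ioo (0 : ℝ) 1 := by
  have hL := LG.of_mem hf hf1
  refine ⟨ou_pos hf hf1 hp.1 hs0 hs1 x, ?_⟩
  have h := ou_pos (f := fun x => 1 - f x) (measurable_const.sub hf)
    (fun x => ⟨by linarith [(hf1 x).2], by linarith [(hf1 x).1]⟩)
    (by rw [integral_sub (integrable_const _) hL.integrable]; simp; exact hp.2) hs0 hs1 x
  rw [ou_sub (LG.const 1) hL, ou_const] at h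
  linarith

/-- Among `[0,1]`-valued functions of given mean, half-spaces maximise the stop-loss transform of
`T_s f`. Testing against the indicator `b` of `{T_s f > θ}` turns the left-hand side into
`⟨b, T_s f⟩ - θ ∫ b`, to which Borell's inequality for the pair `b, f` applies. -/
lemma stop_loss {f : E → ℝ} (hf : Measurable f) (hf1 : ∀ x, f x ∈ Icc (0 : ℝ) 1) {h : ℝ}
    (hp : ∫ x, f x ∂stdGaussian E = Phi h) {u : E} (hu : ‖u‖ = 1)
    {s : ℝ} (hs0 : 0 < s) (hs1 : s < 1) {θ : ℝ} (hθ : θ ∈ Ioo (0 : ℝ) 1) :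
    ∫ x, max (ou s f x - θ) 0 ∂stdGaussian E ≤
      ∫ x : E, max (ou s (fun x => hl h ⟪u, x⟫) x - θ) 0 ∂stdGaussian E := by
  have hL := LG.of_mem hf hf1
  have hsa : |s| ≤ 1 := by rw [abs_of_pos hs0]; exact hs1.le
  set g : E → ℝ := fun x => hl h ⟪u, x⟫ with hg
  have hgm : Measurable g := (hl_meas h).comp (by fun_prop)
  have hg1 : ∀ x, g x ∈ Icc (0 : ℝ) 1 := fun x => ⟨hl_nonneg _ _, hl_le_one _ _⟩
  have hgL := LG.of_mem hgm hg1
  have hga : ∫ x, g x ∂stdGaussian E = Phi h := by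
    rw [hg, integral_marginal (hl_meas h) hu, integral_hl]
  have hfm := ou_mem hL hf1 s
  have hgmm := ou_mem hgL hg1 s
  have hfo := hL.ou s
  have hgo := hgL.ou s
  have hmax : ∀ {k : E → ℝ}, LG k → (∀ x, k x ∈ Icc (0 : ℝ) 1) →
      Integrable (fun x => max (k x - θ) 0) (stdGaussian E) := by
    intro k hk hk1
    refine (LG.of_bdd (f := fun x => max (k x - θ) 0)
      ((hk.meas.sub measurable_const).max measurable_const) 1 fun x => ?_).integrable
    rw [abs_of_nonneg (le_max_right _ _)]
    exact max_le (by linarith [(hk1 x).2, hθ.1]) zero_le_one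
  have hR0 : 0 ≤ ∫ x, max (ou s g x - θ) 0 ∂stdGaussian E :=
    integral_nonneg fun x => le_max_right _ _
  set b : E → ℝ := fun x => if θ < ou s f x then 1 else 0 with hb
  have hbm : Measurable b :=
    Measurable.ite (measurableSet_lt measurable_const hfo.meas) measurable_const measurable_const
  have hb1 : ∀ x, b x ∈ Icc (0 : ℝ) 1 := fun x => by
    simp only [hb]; split_ifs <;> norm_num
  have hbL := LG.of_mem hbm hb1
  have e1 : ∀ x, max (ou s f x - θ) 0 = b x * (ou s f x - θ) := fun x => by
    simp only [hb]; split_ifs with hx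
    · rw [max_eq_left (by linarith), one_mul]
    · rw [max_eq_right (by linarith), zero_mul]
  have hbi := integral_mem_Icc hbL hb1
  have key : ∀ {b' k : E → ℝ}, LG b' → LG k →
      ∫ x, b' x * (ou s k x - θ) ∂stdGaussian E = S s b' k - θ * ∫ x, b' x ∂stdGaussian E := by
    intro b' k hb' hk
    have i1 := hb'.integrable_mul (hk.ou s)
    have i2 := hb'.integrable.const_mul θ
    rw [S, ← integral_const_mul, ← integral_sub i1 i2]
    congr 1; ext x; ring
  have hi1 := hmax hfo hfm
  -- When `b` vanishes, or equals `1`, almost everywhere, the quantile of `∫ b` is not defined, and the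
  -- claim reduces to `0 ≤ (·)₊` or to the equality of the means.
  rcases eq_or_lt_of_le hbi.1 with h0 | h0
  · have : ∫ x, max (ou s f x - θ) 0 ∂stdGaussian E ≤ ∫ x, b x ∂stdGaussian E := by
      refine integral_mono hi1 hbL.integrable fun x => ?_
      rw [e1]
      nlinarith [(hb1 x).1, (hfm x).2, hθ.1]
    linarith
  rcases eq_or_lt_of_le hbi.2 with h2 | h2
  · have i3 : Integrable (fun x => 1 - b x) (stdGaussian E) := (integrable_const 1).sub hbL.integrable
    have i4 : Integrable (fun x => ou s f x - θ) (stdGaussian E) :=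
      hfo.integrable.sub (integrable_const θ)
    have i5 : Integrable (fun x => ou s g x - θ) (stdGaussian E) :=
      hgo.integrable.sub (integrable_const θ)
    calc ∫ x, max (ou s f x - θ) 0 ∂stdGaussian E
        ≤ ∫ x, ((ou s f x - θ) + (1 - b x)) ∂stdGaussian E := by
          refine integral_mono hi1 (i4.add i3) fun x => ?_
          rw [e1]
          nlinarith [(hb1 x).1, (hb1 x).2, (hfm x).1, hθ.1, hθ.2]
      _ = ∫ x, (ou s g x - θ) ∂stdGaussian E := by
          rw [integral_add i4 i3, integral_sub hfo.integrable (integrable_const θ),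
            integral_sub (integrable_const 1) hbL.integrable,
            integral_sub hgo.integrable (integrable_const θ), integral_ou hL hsa,
            integral_ou hgL hsa, hp, hga, h2]
          simp
      _ ≤ _ := integral_mono i5 (hmax hgo hgmm) fun x => le_max_left _ _
  · set q := ∫ x, b x ∂stdGaussian E with hq
    have hqI : q ∈ Ioo (0 : ℝ) 1 := ⟨h0, h2⟩
    set b' : E → ℝ := fun x => hl (qf q) ⟪u, x⟫ with hb'
    have hb'm : Measurable b' := (hl_meas _).comp (by fun_prop)
    have hb'1 : ∀ x, b' x ∈ Icc (0 : ℝ) 1 := fun x => ⟨hl_nonneg _ _, hl_le_one _ _⟩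
    have hb'L := LG.of_mem hb'm hb'1
    have hb'i : ∫ x, b' x ∂stdGaussian E = q := by
      rw [hb', integral_marginal (hl_meas _) hu, integral_hl, Phi_qf hqI]
    have hSJ := S_le_J hbm hf hb1 hf1 hqI (by rw [hp]; exact ⟨Phi_pos _, Phi_lt_one _⟩) hs0 hs1
    rw [hp, J_eq_S hs0 hs1, qf_Phi, ← S_marginal (hl_LG _) (hl_LG _) hu] at hSJ
    calc ∫ x, max (ou s f x - θ) 0 ∂stdGaussian E = S s b f - θ * q := by
          simp only [e1]; exact key hbL hL
      _ ≤ S s b' g - θ * q := by linarith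
      _ = ∫ x, b' x * (ou s g x - θ) ∂stdGaussian E := by rw [key hb'L hgL, hb'i]
      _ ≤ _ := by
        refine integral_mono ?_ (hmax hgo hgmm) fun x => ?_
        · have := (hb'L.integrable_mul hgo).sub (hb'L.integrable.const_mul θ)
          refine this.congr (Filter.Eventually.of_forall fun x => ?_)
          simp only [Pi.sub_apply]; ring
        · rcases le_total 0 (ou s g x - θ) with hx | hx
          · exact le_trans (mul_le_of_le_one_left hx (hb'1 x).2) (le_max_left _ _)
          · exact le_trans (mul_nonpos_of_nonneg_of_nonpos (hb'1 x).1 hx) (le_max_right _ _)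


lemma ph_anti {x y : ℝ} (h : |x| ≤ |y|) : ph y ≤ ph x := by
  unfold ph
  have := sq_le_sq.2 h
  gcongr

lemma integrable_w {k : ℝ} (hk : 0 < k) : Integrable fun h => 2 * (k * ph (k * h) - k * ph h) :=
  (((integrable_ph.comp_mul_left' hk.ne').const_mul k).sub (integrable_ph.const_mul k)).const_mul 2

/-- The primitive of the weight in `J_diag_repr`, vanishing at `-∞`. -/
lemma integral_w {k : ℝ} (hk : 0 < k) (x : ℝ) :
    ∫ h in Iio x, 2 * (k * ph (k * h) - k * ph h) = 2 * (Phi (k * x) - k * Phi x) := by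
  rw [← integral_Iic_eq_integral_Iio]
  have hd : ∀ y, HasDerivAt (fun y => 2 * (Phi (k * y) - k * Phi y))
      (2 * (k * ph (k * y) - k * ph y)) y := by
    intro y
    have h1 : HasDerivAt (fun y => Phi (k * y)) (ph (k * y) * k) y :=
      (hasDerivAt_Phi (k * y)).comp y (by simpa using (hasDerivAt_id y).const_mul k)
    rw [mul_comm] at h1
    exact (h1.sub ((hasDerivAt_Phi y).const_mul k)).const_mul 2
  have ht : Tendsto (fun y => 2 * (Phi (k * y) - k * Phi y)) atBot (𝓝 0) := by
    have h1 : Tendsto (fun y => Phi (k * y)) atBot (𝓝 0) :=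
      Phi_tendsto_atBot.comp (tendsto_id.const_mul_atBot hk)
    simpa using (h1.sub (Phi_tendsto_atBot.const_mul k)).const_mul 2
  rw [integral_Iic_of_hasDerivAt_of_tendsto' (fun y _ => hd y) (integrable_w hk).integrableOn ht,
    sub_zero]

/-- `J_r(p,p) - k p²` is, up to a constant, a mixture of the functions `(p - θ)₊` with `θ = Φ(h)` and
weight `2 (k φ(k h) - k φ(h))`, which is nonnegative because `k ≤ 1`. The weight is the second derivative
of the left-hand side, transported to the variable `h`. -/
lemma J_diag_repr {r k : ℝ} (h0 : 0 < r) (h1 : r < 1) (hk : k = √((1 - r) / (1 + r))) :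
    ∃ c, ∀ p ∈ Ioo (0 : ℝ) 1, J r p p - k * p ^ 2 =
      c + ∫ h, 2 * (k * ph (k * h) - k * ph h) * max (p - Phi h) 0 := by
  have hk0 : 0 < k := by rw [hk]; exact Real.sqrt_pos.2 (div_pos (by linarith) (by linarith))
  set w : ℝ → ℝ := fun h => 2 * (k * ph (k * h) - k * ph h) with hw
  have hwi : Integrable w := integrable_w hk0
  have hwc : Continuous w := by
    have := ph_continuous
    rw [hw]; fun_prop
  have hwPi : Integrable fun h => w h * Phi h :=
    hwi.mul_bdd (c := 1) Phi_measurable.aestronglyMeasurable (Filter.Eventually.of_forall fun h => by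
      rw [Real.norm_eq_abs, abs_of_nonneg (Phi_nonneg _)]; exact (Phi_lt_one _).le)
  set R : ℝ → ℝ := fun x => Phi x * (∫ h in Iio x, w h) - ∫ h in Iio x, w h * Phi h with hR
  have hRd : ∀ x, HasDerivAt R (ph x * (2 * (Phi (k * x) - k * Phi x))) x := by
    intro x
    have := ((hasDerivAt_Phi x).mul (hasDerivAt_Iio hwc hwi x)).sub
      (hasDerivAt_Iio (hwc.mul Phi_continuous) hwPi x)
    rw [integral_w hk0] at this
    exact this.congr_deriv (by simp only [Pi.mul_apply]; ring)
  -- `R` is the mixture at `p = Φ x`.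
  have hReq : ∀ x, ∫ h, w h * max (Phi x - Phi h) 0 = R x := by
    intro x
    have e : (fun h => w h * max (Phi x - Phi h) 0) =
        (Iio x).indicator fun h => Phi x * w h - w h * Phi h := by
      ext h
      by_cases hh : h < x
      · rw [indicator_of_mem (mem_Iio.2 hh),
          max_eq_left (by linarith [Phi_strictMono hh])]
        ring
      · rw [indicator_of_notMem (by simpa using hh), max_eq_right, mul_zero]
        linarith [Phi_strictMono.monotone (not_lt.1 hh)]
    rw [e, integral_indicator measurableSet_Iio,
      integral_sub (hwi.const_mul _).integrableOn hwPi.integrableOn, integral_const_mul]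
  have hJd : ∀ x, HasDerivAt (fun x => J r (Phi x) (Phi x) - k * Phi x ^ 2 - R x) 0 x := by
    intro x
    have h2 := (hasDerivAt_J_diag h0 h1 (p := Phi x) ⟨Phi_pos _, Phi_lt_one _⟩).comp x
      (hasDerivAt_Phi x)
    rw [qf_Phi, ← hk] at h2
    have := (h2.sub (((hasDerivAt_Phi x).pow 2).const_mul k)).sub (hRd x)
    refine this.congr_deriv ?_
    push_cast; ring
  refine ⟨J r (Phi 0) (Phi 0) - k * Phi 0 ^ 2 - R 0, fun p hp => ?_⟩
  have := is_const_of_deriv_eq_zero (fun x => (hJd x).differentiableAt) (fun x => (hJd x).deriv)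
    (qf p) 0
  rw [← this]
  have h3 := hReq (qf p)
  simp only [Phi_qf hp] at h3 ⊢
  linarith

/-- The deficit of `f` against the half space at correlation `s² + c² r` is at least `k` times the deficit at the
smaller correlation `s²`. -/
lemma S_mono_rho {f : E → ℝ} (hf : Measurable f) (hf1 : ∀ x, f x ∈ Icc (0 : ℝ) 1) {h : ℝ}
    (hp : ∫ x, f x ∂stdGaussian E = Phi h) {u : E} (hu : ‖u‖ = 1)
    {s c r k : ℝ} (hs0 : 0 < s) (hc0 : 0 < c) (hsc : s ^ 2 + c ^ 2 = 1) (h0 : 0 < r) (h1 : r < 1)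
    (hk : k = √((1 - r) / (1 + r))) :
    k * (S (s ^ 2) (fun x : E => hl h ⟪u, x⟫) (fun x => hl h ⟪u, x⟫) - S (s ^ 2) f f) ≤
      S (s ^ 2 + c ^ 2 * r) (fun x : E => hl h ⟪u, x⟫) (fun x => hl h ⟪u, x⟫) -
        S (s ^ 2 + c ^ 2 * r) f f := by
  have hs1 : s < 1 := by nlinarith
  have hsa : |s| ≤ 1 := by rw [abs_of_pos hs0]; exact hs1.le
  have hra : |r| ≤ 1 := by rw [abs_of_pos h0]; exact h1.le
  have hL := LG.of_mem hf hf1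
  set g : E → ℝ := fun x => hl h ⟪u, x⟫ with hg
  have hgm : Measurable g := (hl_meas h).comp (by fun_prop)
  have hg1 : ∀ x, g x ∈ Icc (0 : ℝ) 1 := fun x => ⟨hl_nonneg _ _, hl_le_one _ _⟩
  have hgL := LG.of_mem hgm hg1
  have hga : ∫ x, g x ∂stdGaussian E = Phi h := by
    rw [hg, integral_marginal (hl_meas h) hu, integral_hl]
  have hPI : Phi h ∈ Ioo (0 : ℝ) 1 := ⟨Phi_pos _, Phi_lt_one _⟩
  obtain ⟨c0, hc0'⟩ := J_diag_repr h0 h1 hk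
  have hk0 : 0 < k := by rw [hk]; exact Real.sqrt_pos.2 (div_pos (by linarith) (by linarith))
  have hk1 : k ≤ 1 := by
    rw [hk]; apply Real.sqrt_le_one.2; rw [div_le_one (by linarith)]; linarith
  have hcs : √(1 - s ^ 2) = c := by
    rw [show 1 - s ^ 2 = c ^ 2 by linarith]; exact Real.sqrt_sq hc0.le
  have hMI : ∀ {q : E → ℝ}, Measurable q → (∀ x, q x ∈ Icc (0 : ℝ) 1) →
      ∫ x, q x ∂stdGaussian E = Phi h → ∀ x, ou s q x ∈ Ioo (0 : ℝ) 1 :=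
    fun hq hq1 hqi => ou_mem_Ioo hq hq1 (by rw [hqi]; exact hPI) hs0.le hs1
  have hJm : ContinuousOn (fun p => J r p p) (Ioo (0 : ℝ) 1) :=
    (J_continuousOn h0 h1).comp (f := fun p : ℝ => (p, p)) (by fun_prop) fun p hp => ⟨hp, hp⟩
  -- measurability of `J_r(M, M)` for `M` with values in `(0,1)`
  have hJM : ∀ {q : E → ℝ}, Measurable q → (∀ x, q x ∈ Ioo (0 : ℝ) 1) →
      LG fun x => J r (q x) (q x) := by
    intro q hq hq1
    refine LG.of_mem ?_ fun x => J_mem h0 h1 _ _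
    have hmm : Measurable ((Ioo (0 : ℝ) 1).indicator fun p => J r p p) := by
      classical
      rw [← piecewise_eq_indicator]
      exact hJm.measurable_piecewise continuousOn_const measurableSet_Ioo
    have e : (fun x => J r (q x) (q x)) = ((Ioo (0 : ℝ) 1).indicator fun p => J r p p) ∘ q := by
      ext x
      rw [Function.comp_apply, indicator_of_mem (hq1 x)]
    rw [e]
    exact hmm.comp hq
  set w : ℝ → ℝ := fun h => 2 * (k * ph (k * h) - k * ph h) with hw
  have hwi : Integrable w := integrable_w hk0
  have hw0 : ∀ t, 0 ≤ w t := fun t => by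
    have : ph t ≤ ph (k * t) := ph_anti (by
      rw [abs_mul, abs_of_pos hk0]; exact mul_le_of_le_one_left (abs_nonneg _) hk1)
    have := mul_le_mul_of_nonneg_left this hk0.le
    simp only [hw]; linarith
  -- the common formula for `∫ J_r(M,M) - k M²`
  have main : ∀ {q : E → ℝ}, Measurable q → (∀ x, q x ∈ Icc (0 : ℝ) 1) →
      ∫ x, q x ∂stdGaussian E = Phi h →
      ∫ x, J r (ou s q x) (ou s q x) ∂stdGaussian E - k * S (s ^ 2) q q =
        c0 + ∫ t, w t * ∫ x, max (ou s q x - Phi t) 0 ∂stdGaussian E := by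
    intro q hq hq1 hqi
    have hqL := LG.of_mem hq hq1
    have hMm := (hqL.ou s).meas
    have hM := hMI hq hq1 hqi
    have e1 : S (s ^ 2) q q = ∫ x, ou s q x ^ 2 ∂stdGaussian E := by
      rw [sq, S_split hqL hqL hsa hsa]; simp only [sq]
    have i1 := (hJM hMm hM).integrable
    have i2 : Integrable (fun x => k * ou s q x ^ 2) (stdGaussian E) := by
      have := (hqL.ou s).integrable_mul (hqL.ou s)
      simp only [← sq] at this
      exact this.const_mul k
    rw [e1, ← integral_const_mul, ← integral_sub i1 i2]
    have i3 : Integrable (fun p : E × ℝ => w p.2 * max (ou s q p.1 - Phi p.2) 0)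
        ((stdGaussian E).prod volume) := by
      have i4 : Integrable (fun p : E × ℝ => w p.2) ((stdGaussian E).prod volume) :=
        hwi.comp_snd _
      refine i4.mul_bdd (c := 1) ?_ (Filter.Eventually.of_forall fun p => ?_)
      · have := Phi_measurable
        have : Measurable fun p : E × ℝ => max (ou s q p.1 - Phi p.2) 0 := by fun_prop
        exact this.aestronglyMeasurable
      · rw [Real.norm_eq_abs, abs_of_nonneg (le_max_right _ _)]
        exact max_le (by linarith [(hM p.1).2, Phi_pos p.2]) zero_le_one
    have e2 : ∀ x, J r (ou s q x) (ou s q x) - k * ou s q x ^ 2 =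
        c0 + ∫ t, w t * max (ou s q x - Phi t) 0 := fun x => hc0' _ (hM x)
    simp only [e2]
    rw [integral_add (integrable_const _) i3.integral_prod_left, integral_integral_swap i3]
    simp [integral_const_mul]
  have hw2 : ∀ {q : E → ℝ}, Measurable q → (∀ x, q x ∈ Icc (0 : ℝ) 1) →
      ∫ x, q x ∂stdGaussian E = Phi h →
      Integrable fun t => w t * ∫ x, max (ou s q x - Phi t) 0 ∂stdGaussian E := by
    intro q hq hq1 hqi
    have hqL := LG.of_mem hq hq1
    have hMm := (hqL.ou s).meas
    have hM := hMI hq hq1 hqi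
    refine hwi.mul_bdd (c := 1) ?_ (Filter.Eventually.of_forall fun t => ?_)
    · have := Phi_measurable
      have : StronglyMeasurable fun p : ℝ × E => max (ou s q p.2 - Phi p.1) 0 :=
        Measurable.stronglyMeasurable (by fun_prop)
      exact this.integral_prod_right'.aestronglyMeasurable
    · have := norm_integral_le_of_norm_le_const (μ := stdGaussian E)
        (f := fun x => max (ou s q x - Phi t) 0) (C := 1) (Filter.Eventually.of_forall fun x => by
          rw [Real.norm_eq_abs, abs_of_nonneg (le_max_right _ _)]
          exact max_le (by linarith [(hM x).2, Phi_pos t]) zero_le_one)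
      simpa using this
  have m1 := main hf hf1 hp
  have m2 := main hgm hg1 hga
  have m3 : ∫ t, w t * ∫ x, max (ou s f x - Phi t) 0 ∂stdGaussian E ≤
      ∫ t, w t * ∫ x, max (ou s g x - Phi t) 0 ∂stdGaussian E :=
    integral_mono (hw2 hf hf1 hp) (hw2 hgm hg1 hga) fun t =>
      mul_le_mul_of_nonneg_left (stop_loss hf hf1 hp hu hs0 hs1 ⟨Phi_pos _, Phi_lt_one _⟩) (hw0 t)
  -- Borell's inequality in every fibre of the common component `W`.
  have m4 : S (s ^ 2 + c ^ 2 * r) f f ≤ ∫ x, J r (ou s f x) (ou s f x) ∂stdGaussian E := by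
    rw [← S_fiber hf hf1 hsc hra]
    have e3 : ∀ W : E, S r (fun y => f (s • W + c • y)) (fun y => f (s • W + c • y)) ≤
        J r (ou s f W) (ou s f W) := by
      intro W
      have hfm : Measurable fun y => f (s • W + c • y) := hf.comp (by fun_prop)
      have hI : ∫ y, f (s • W + c • y) ∂stdGaussian E = ou s f W := by rw [ou, hcs]
      have := S_le_J hfm hfm (fun y => hf1 _) (fun y => hf1 _)
        (by rw [hI]; exact hMI hf hf1 hp W) (by rw [hI]; exact hMI hf hf1 hp W) h0 h1
      rwa [hI] at this
    refine integral_mono_of_nonneg (Filter.Eventually.of_forall fun W => ?_)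
      (hJM (hL.ou s).meas (hMI hf hf1 hp)).integrable (Filter.Eventually.of_forall e3)
    exact (S_mem (hf.comp (by fun_prop)) (hf.comp (by fun_prop)) (fun y => hf1 _)
      (fun y => hf1 _) r).1
  -- The fibres of a half space are parallel half spaces, for which Borell's inequality is an equality.
  have m5 : S (s ^ 2 + c ^ 2 * r) g g = ∫ x, J r (ou s g x) (ou s g x) ∂stdGaussian E := by
    rw [← S_fiber hgm hg1 hsc hra]
    congr 1; ext W
    have e4 : ∀ y : E, g (s • W + c • y) = hl ((h - s * ⟪u, W⟫) / c) ⟪u, y⟫ := by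
      intro y
      simp only [hg, hl, inner_add_right, inner_smul_right]
      refine indicator_eq_indicator ?_ rfl
      rw [mem_Iio, mem_Iio, lt_div_iff₀ hc0]
      constructor <;> intro hh <;> linarith
    have e5 : ou s g W = Phi ((h - s * ⟪u, W⟫) / c) := by
      rw [hg, ou_marginal (hl_meas h) hu, ou_hl (by rw [hcs]; exact hc0), hcs]
    simp only [e4]
    rw [e5, J_eq_S h0 h1, qf_Phi, ← S_marginal (hl_LG _) (hl_LG _) hu]
  linarith

end

/-! ### The deficit at small correlation -/

section

variable {E : Type*} [NormedAddCommGroup E] [InnerProductSpace ℝ E] [FiniteDimensional ℝ E]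
  [MeasurableSpace E] [BorelSpace E]

/-- A Gaussian of standard deviation `c ≥ 4/5` has density at most `1/2`, so that it lies in a strip of
half-width `w` with probability at most `w`. -/
lemma strip_prob {v : E} (hv : ‖v‖ = 1) {c : ℝ} (hc : 4 / 5 ≤ c) (d : ℝ) {w : ℝ} (hw : 0 ≤ w) :
    ∫ y : E, (if |d + c * ⟪v, y⟫| ≤ w then (1 : ℝ) else 0) ∂stdGaussian E ≤ min w 1 := by
  have hc0 : 0 < c := by linarith
  have hm : Measurable fun s : ℝ => if |d + c * s| ≤ w then (1 : ℝ) else 0 :=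
    Measurable.ite (measurableSet_le (by fun_prop) (by fun_prop)) measurable_const measurable_const
  have hm1 : ∀ s : ℝ, (if |d + c * s| ≤ w then (1 : ℝ) else 0) ∈ Icc (0 : ℝ) 1 := fun s => by
    split_ifs <;> norm_num
  rw [integral_marginal (f := fun s : ℝ => if |d + c * s| ≤ w then (1 : ℝ) else 0) hm hv]
  refine le_min ?_ (integral_mem_Icc (LG.of_mem hm hm1) hm1).2
  rw [integral_stdGaussian_real]
  have e : (fun s : ℝ => ph s * if |d + c * s| ≤ w then (1 : ℝ) else 0) =
      (Icc ((-w - d) / c) ((w - d) / c)).indicator ph := by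
    ext s
    by_cases hs : |d + c * s| ≤ w
    · rw [if_pos hs, mul_one, indicator_of_mem]
      rw [abs_le] at hs
      constructor
      · rw [div_le_iff₀ hc0]; linarith
      · rw [le_div_iff₀ hc0]; linarith
    · rw [if_neg hs, mul_zero, indicator_of_notMem]
      rintro ⟨h1, h2⟩
      rw [div_le_iff₀ hc0] at h1
      rw [le_div_iff₀ hc0] at h2
      exact hs (abs_le.2 ⟨by linarith, by linarith⟩)
  rw [e, integral_indicator measurableSet_Icc]
  have := norm_setIntegral_le_of_norm_le_const (μ := volume) (f := ph) (C := 2 / 5)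
    (s := Icc ((-w - d) / c) ((w - d) / c)) measure_Icc_lt_top (fun s _ => by
      rw [Real.norm_eq_abs, abs_of_pos (ph_pos s)]; exact ph_le s)
  rw [Real.volume_real_Icc_of_le (by gcongr; linarith)] at this
  refine (le_abs_self _).trans (this.trans ?_)
  rw [← sub_div, ← mul_div_assoc, div_le_iff₀ hc0]
  nlinarith

/-- Of two exchangeable points, keep the one further from the hyperplane `⟪v,x⟫ = h`; the other one
then lies in a strip. This bounds the self-correlation of `f` by its mass weighted with the distance
to the hyperplane. -/
lemma S_half_le {f : E → ℝ} (hf : Measurable f) (hb : ∀ x, |f x| ≤ 1) {v : E} (hv : ‖v‖ = 1)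
    (h : ℝ) : S (1 / 2) f f ≤ 2 * ∫ x, |f x| * min |⟪v, x⟫ - h| 1 ∂stdGaussian E := by
  have hL : LG f := LG.of_bdd hf 1 hb
  set c := √(1 - (1 / 2 : ℝ) ^ 2) with hc
  have hc45 : 4 / 5 ≤ c := Real.le_sqrt_of_sq_le (by norm_num)
  have hsq : (1 / 2 : ℝ) ^ 2 + c ^ 2 = 1 := sq_add_sqrt (by rw [abs_of_pos] <;> norm_num)
  set ν := (stdGaussian E).prod (stdGaussian E) with hν
  set k : E × E → ℝ := fun p => |f p.1| *
    (if |⟪v, p.2⟫ - h| ≤ |⟪v, p.1⟫ - h| then (1 : ℝ) else 0) with hk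
  have hkm : Measurable k := by
    refine (hf.comp measurable_fst).abs.mul (Measurable.ite (measurableSet_le ?_ ?_)
      measurable_const measurable_const) <;> fun_prop
  have hk1 : ∀ p, k p ∈ Icc (0 : ℝ) 1 := fun p => by
    simp only [hk]
    split_ifs
    · rw [mul_one]; exact ⟨abs_nonneg _, hb _⟩
    · rw [mul_zero]; norm_num
  have hki : ∀ {g : E × E → E × E}, Measurable g → Integrable (fun p => k (g p)) ν := fun hg =>
    (integrable_const (1 : ℝ)).mono' (hkm.comp hg).aestronglyMeasurable
      (Filter.Eventually.of_forall fun p => by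
        rw [Real.norm_eq_abs, abs_of_nonneg (hk1 _).1]; exact (hk1 _).2)
  set Y : E × E → E := fun p => (1 / 2 : ℝ) • p.1 + c • p.2 with hY
  have hYm : Measurable Y := by fun_prop
  have i1 : Integrable (fun p => k (p.1, Y p)) ν := hki (measurable_fst.prodMk hYm)
  have i2 : Integrable (fun p => k (Y p, p.1)) ν := hki (hYm.prodMk measurable_fst)
  -- The correlated pair is exchangeable.
  have e1 : ∫ p, k (Y p, p.1) ∂ν = ∫ p, k (p.1, Y p) ∂ν := by
    have := mp_integral (map_rot (E := E) hsq) (f := fun p => k (p.1, Y p))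
      (hkm.comp (measurable_fst.prodMk hYm))
    rw [← hν] at this
    rw [← this]
    congr 1; ext p
    have : Y ((1 / 2 : ℝ) • p.1 + c • p.2, c • p.1 - (1 / 2 : ℝ) • p.2) = p.1 := by
      simp only [hY]
      rw [smul_add, smul_sub, smul_smul, smul_smul, smul_smul, smul_smul]
      have : p.1 = ((1 / 2 : ℝ) * (1 / 2) + c * c) • p.1 := by
        rw [← sq, ← sq, hsq, one_smul]
      nth_rewrite 3 [this]
      module
    rw [this]
  rw [S_eq_prod hL hL]
  have i0 := hL.integrable_prod hL 1 0 (1 / 2) c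
  simp only [one_smul, zero_smul, add_zero] at i0
  have e2 : ∫ p, k (p.1, Y p) ∂ν ≤ ∫ x, |f x| * min |⟪v, x⟫ - h| 1 ∂stdGaussian E := by
    rw [hν, integral_prod _ i1]
    have e3 : ∀ x : E, ∫ y, k (x, Y (x, y)) ∂stdGaussian E ≤ |f x| * min |⟪v, x⟫ - h| 1 := by
      intro x
      simp only [hk, hY, inner_add_right, inner_smul_right]
      rw [integral_const_mul]
      refine mul_le_mul_of_nonneg_left ?_ (abs_nonneg _)
      have := strip_prob hv hc45 (1 / 2 * ⟪v, x⟫ - h) (abs_nonneg (⟪v, x⟫ - h))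
      refine le_trans (le_of_eq ?_) this
      congr 1; ext y
      rw [sub_add_eq_add_sub]
    refine integral_mono i1.integral_prod_left ?_ e3
    refine (LG.of_bdd (f := fun x : E => |f x| * min |⟪v, x⟫ - h| 1) ?_ 1 fun x => ?_).integrable
    · exact hf.abs.mul (by fun_prop)
    · rw [abs_mul, abs_abs]
      refine mul_le_one₀ (hb x) (abs_nonneg _) ?_
      rw [abs_of_nonneg (by positivity)]; exact min_le_right _ _
  calc ∫ p, f p.1 * f (Y p) ∂ν ≤ ∫ p, (k (p.1, Y p) + k (Y p, p.1)) ∂ν := by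
        refine integral_mono i0 (i1.add i2) fun p => ?_
        -- Whichever of the two points is further from the hyperplane, the corresponding `k` is `|f|` there.
        have hle : f p.1 * f (Y p) ≤ |f p.1| * |f (Y p)| := by
          rw [← abs_mul]; exact le_abs_self _
        refine hle.trans ?_
        simp only [hk]
        have h1 := hb p.1
        have h2 := hb (Y p)
        have h3 := abs_nonneg (f p.1)
        have h4 := abs_nonneg (f (Y p))
        rcases le_total |⟪v, p.1⟫ - h| |⟪v, Y p⟫ - h| with hh | hh
        · rw [if_pos hh]
          split_ifs <;> nlinarith
        · rw [if_pos hh]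
          split_ifs <;> nlinarith
    _ = 2 * ∫ p, k (p.1, Y p) ∂ν := by rw [integral_add i1 i2, e1]; ring
    _ ≤ _ := by linarith

/-- The profile of `T_ρ` of a half-space. -/
def prof (ρ h s : ℝ) : ℝ := Phi ((h - ρ * s) / √(1 - ρ ^ 2))

lemma prof_meas (ρ h : ℝ) : Measurable (prof ρ h) :=
  Phi_measurable.comp (by fun_prop)

lemma prof_mem (ρ h s : ℝ) : prof ρ h s ∈ Icc (0 : ℝ) 1 := ⟨Phi_nonneg _, (Phi_lt_one _).le⟩

lemma prof_anti {ρ : ℝ} (h0 : 0 ≤ ρ) (h : ℝ) : Antitone (prof ρ h) := fun a b hab => by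
  refine Phi_strictMono.monotone ?_
  gcongr

lemma hasDerivAt_prof (ρ h s : ℝ) :
    HasDerivAt (prof ρ h) (-(ρ / √(1 - ρ ^ 2) * ph ((h - ρ * s) / √(1 - ρ ^ 2)))) s := by
  have h1 : HasDerivAt (fun s => (h - ρ * s) / √(1 - ρ ^ 2)) (-(ρ * 1) / √(1 - ρ ^ 2)) s :=
    (((hasDerivAt_id s).const_mul ρ).const_sub h).div_const _
  exact ((hasDerivAt_Phi _).comp s h1).congr_deriv (by ring)

/-- The profile is Lipschitz and has values in `[0, 1]`. -/
lemma prof_upper {β : ℝ} (h0 : 0 ≤ β) (h1 : β < 1) (h s : ℝ) :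
    |prof β h s - prof β h h| ≤ min |s - h| 1 / √(1 - β ^ 2) := by
  have hc := Real.sqrt_pos.2 (show 0 < 1 - β ^ 2 by nlinarith)
  have hc1 : √(1 - β ^ 2) ≤ 1 := Real.sqrt_le_one.2 (by nlinarith)
  have hA : |prof β h s - prof β h h| ≤ 1 := by
    rw [abs_le]
    constructor <;> linarith [(prof_mem β h s).1, (prof_mem β h s).2, (prof_mem β h h).1,
      (prof_mem β h h).2]
  have hB : |prof β h s - prof β h h| ≤ 1 / √(1 - β ^ 2) * |s - h| := by
    have := convex_univ.norm_image_sub_le_of_norm_hasDerivWithin_le (f := prof β h)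
      (C := 1 / √(1 - β ^ 2)) (x := h) (y := s)
      (fun x _ => (hasDerivAt_prof β h x).hasDerivWithinAt) (fun x _ => by
        rw [norm_neg, Real.norm_eq_abs, abs_of_nonneg (mul_nonneg (by positivity) (ph_pos _).le),
          div_mul_eq_mul_div]
        gcongr
        nlinarith [ph_le ((h - β * x) / √(1 - β ^ 2)), ph_pos ((h - β * x) / √(1 - β ^ 2))])
      (mem_univ _) (mem_univ _)
    simpa [Real.norm_eq_abs] using this
  rw [le_div_iff₀ hc]
  refine le_min ?_ ?_
  · calc _ ≤ 1 / √(1 - β ^ 2) * |s - h| * √(1 - β ^ 2) := by gcongr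
      _ = |s - h| := by field_simp
  · exact mul_le_one₀ hA hc.le hc1

/-- The Gaussian density loses at most a tenth when the squared argument grows by `1/5`. -/
lemma ph_ratio {x h : ℝ} (hx : x ^ 2 ≤ h ^ 2 + 1 / 5) : 9 / 10 * ph h ≤ ph x := by
  unfold ph
  have h1 : Real.exp (-h ^ 2 / 2) * Real.exp (-(1 / 10)) ≤ Real.exp (-x ^ 2 / 2) := by
    rw [← Real.exp_add]; apply Real.exp_le_exp.2; linarith
  have h2 : (9 / 10 : ℝ) ≤ Real.exp (-(1 / 10)) := by
    have := Real.add_one_le_exp (-(1 / 10 : ℝ)); linarith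
  have h3 := mul_le_mul_of_nonneg_left h2 (Real.exp_pos (-h ^ 2 / 2)).le
  have h4 : 0 < (2 * π : ℝ) ^ (-(1 : ℝ) / 2) := by positivity
  nlinarith

/-- For small `ρ`, the profile decreases at least linearly near the threshold. -/
lemma prof_lower {ρ h : ℝ} (h0 : 0 < ρ) (hρ : ρ * (3 * |h| + 4) ^ 2 ≤ 1 / 20) (s : ℝ) :
    9 / 10 * ρ * ph h * min |s - h| (2 * |h| + 4) ≤ |prof ρ h s - prof ρ h h| := by
  have hM := abs_nonneg h
  have hρ1 : ρ ≤ 1 / 320 := by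
    have h16 : 16 ≤ (3 * |h| + 4) ^ 2 := by nlinarith
    have := mul_le_mul_of_nonneg_left h16 h0.le
    linarith
  have hc := Real.sqrt_pos.2 (show 0 < 1 - ρ ^ 2 by nlinarith)
  have hc1 : √(1 - ρ ^ 2) ≤ 1 := Real.sqrt_le_one.2 (by nlinarith)
  have hder : ∀ x, |x| ≤ 3 * |h| + 4 → 9 / 10 * ρ * ph h ≤
      ρ / √(1 - ρ ^ 2) * ph ((h - ρ * x) / √(1 - ρ ^ 2)) := by
    intro x hx
    have h1 : 9 / 10 * ph h ≤ ph ((h - ρ * x) / √(1 - ρ ^ 2)) := by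
      apply ph_ratio
      rw [div_pow, Real.sq_sqrt (by nlinarith), div_le_iff₀ (by nlinarith)]
      have a1 : -(h * x) ≤ |h| * (3 * |h| + 4) := by
        calc -(h * x) ≤ |h * x| := neg_le_abs _
          _ = |h| * |x| := abs_mul _ _
          _ ≤ _ := by gcongr
      have a2 : x ^ 2 ≤ (3 * |h| + 4) ^ 2 := by rw [← sq_abs x]; gcongr
      have a3 : h ^ 2 = |h| ^ 2 := (sq_abs h).symm
      have a4 : |h| * (3 * |h| + 4) ≤ (3 * |h| + 4) ^ 2 / 3 := by nlinarith
      have a5 : ρ * -(h * x) ≤ 1 / 60 := by nlinarith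
      have a6 : ρ ^ 2 * x ^ 2 ≤ ρ * (1 / 20) := by nlinarith
      have a7 : ρ ^ 2 * h ^ 2 ≤ ρ * (1 / 20) := by
        have : h ^ 2 ≤ (3 * |h| + 4) ^ 2 := by rw [a3]; gcongr; linarith
        nlinarith
      nlinarith
    have h2 : ρ ≤ ρ / √(1 - ρ ^ 2) := by rw [le_div_iff₀ hc]; nlinarith
    calc 9 / 10 * ρ * ph h = ρ * (9 / 10 * ph h) := by ring
      _ ≤ _ := mul_le_mul h2 h1 (by have := ph_pos h; positivity) (by positivity)
  set R := 2 * |h| + 4 with hR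
  have hle : ∀ x, |x| ≤ 3 * |h| + 4 ↔ x ∈ Icc (-(3 * |h| + 4)) (3 * |h| + 4) := fun x => abs_le
  -- The derivative bound holds on `|x| ≤ 3|h| + 4`, an interval containing every point at distance at most
  -- `2|h| + 4` from `h`; further out, monotonicity of the profile suffices.
  have mvt : ∀ x ∈ Icc (-(3 * |h| + 4)) (3 * |h| + 4), ∀ y ∈ Icc (-(3 * |h| + 4)) (3 * |h| + 4),
      x ≤ y → 9 / 10 * ρ * ph h * (y - x) ≤ prof ρ h x - prof ρ h y := by
    have := (convex_Icc (-(3 * |h| + 4)) (3 * |h| + 4)).mul_sub_le_image_sub_of_le_deriv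
      (f := fun x => -prof ρ h x) (C := 9 / 10 * ρ * ph h)
      (fun x _ => (hasDerivAt_prof ρ h x).neg.continuousAt.continuousWithinAt)
      (fun x _ => (hasDerivAt_prof ρ h x).neg.differentiableAt.differentiableWithinAt)
      (fun x hx => by
        rw [(hasDerivAt_prof ρ h x).fun_neg.deriv, neg_neg]
        exact hder x ((hle x).2 (interior_subset hx)))
    intro x hx y hy hxy
    have := this x hx y hy hxy
    linarith
  have hR0 : 0 ≤ R := by positivity
  have hhl := neg_abs_le h
  have hhu := le_abs_self h
  have hhI : h ∈ Icc (-(3 * |h| + 4)) (3 * |h| + 4) := ⟨by linarith, by linarith⟩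
  rcases le_total h s with hs | hs
  · rw [abs_of_nonneg (by linarith : 0 ≤ s - h), abs_sub_comm,
      abs_of_nonneg (by linarith [prof_anti h0.le h hs])]
    have hm : min (s - h) R ≤ R := min_le_right _ _
    have hm0 : 0 ≤ min (s - h) R := le_min (by linarith) hR0
    have := mvt h hhI (h + min (s - h) R) ⟨by linarith, by linarith⟩ (by linarith)
    have h3 := prof_anti h0.le h (show h + min (s - h) R ≤ s by linarith [min_le_left (s - h) R])
    rw [add_sub_cancel_left] at this
    linarith
  · rw [abs_sub_comm s h, abs_of_nonneg (by linarith : 0 ≤ h - s),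
      abs_of_nonneg (by linarith [prof_anti h0.le h hs])]
    have hm : min (h - s) R ≤ R := min_le_right _ _
    have hm0 : 0 ≤ min (h - s) R := le_min (by linarith) hR0
    have := mvt (h - min (h - s) R) ⟨by linarith, by linarith⟩ h hhI (by linarith)
    have h3 := prof_anti h0.le h (show s ≤ h - min (h - s) R by linarith [min_le_left (h - s) R])
    rw [sub_sub_cancel] at this
    linarith


lemma LG.abs {f : E → ℝ} (hf : LG f) : LG fun x => |f x| := by
  obtain ⟨hm, C, hC, h⟩ := hf
  exact ⟨hm.abs, C, hC, fun x => by rw [abs_abs]; exact h x⟩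

lemma LG.posPart {f : E → ℝ} (hf : LG f) : LG fun x => max (f x) 0 := by
  obtain ⟨hm, C, hC, h⟩ := hf
  refine ⟨hm.max measurable_const, C, hC, fun x => ?_⟩
  rw [abs_of_nonneg (le_max_right _ _)]
  exact (max_le (le_abs_self _) (abs_nonneg _)).trans (h x)

lemma dist_LG (v : E) (h : ℝ) : LG fun x : E => |⟪v, x⟫ - h| := ((LG.inner v).sub (LG.const h)).abs

/-- Gaussian tail bound: the part of the distance to the hyperplane beyond `2|h| + 4` is negligible
compared with the density at `h`. -/
lemma tail_le {v : E} (hv : ‖v‖ = 1) (h : ℝ) :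
    ∫ x : E, max (|⟪v, x⟫ - h| - (2 * |h| + 4)) 0 * max (|⟪v, x⟫ - h| - (2 * |h| + 4)) 0
      ∂stdGaussian E ≤ ph h / 25 := by
  have hLG := ((dist_LG v h).sub (LG.const (2 * |h| + 4))).posPart
  set b := |h| + 4 with hb
  have hb4 : 4 ≤ b := by rw [hb]; linarith [abs_nonneg h]
  -- Compare with the two exponential tilts in the directions `± b v`; the integrand vanishes
  -- where `|⟪v, x⟫| < b`.
  set K := 1 / 8 * Real.exp (-b ^ 2 / 2) with hK
  have hn : ‖b • v‖ = b := by rw [norm_smul, hv, mul_one, Real.norm_eq_abs, abs_of_nonneg]; linarith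
  have pt : ∀ x : E, max (|⟪v, x⟫ - h| - (2 * |h| + 4)) 0 * max (|⟪v, x⟫ - h| - (2 * |h| + 4)) 0 ≤
      K * (cmd (b • v) x + cmd (-(b • v)) x) := by
    intro x
    set s := ⟪v, x⟫ with hs
    have e1 : cmd (b • v) x = Real.exp (b * s - b ^ 2 / 2) := by
      rw [cmd, hn, real_inner_smul_left]
    have e2 : cmd (-(b • v)) x = Real.exp (-(b * s) - b ^ 2 / 2) := by
      rw [cmd, norm_neg, hn, inner_neg_left, real_inner_smul_left]
    have hpos : 0 ≤ K * (cmd (b • v) x + cmd (-(b • v)) x) := by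
      rw [e1, e2]; positivity
    rcases le_total (|s - h| - (2 * |h| + 4)) 0 with h0 | h0
    · rw [max_eq_right h0, zero_mul]; exact hpos
    · rw [max_eq_left h0]
      have h1 : |s - h| ≤ |s| + |h| := abs_sub s h
      have h2 : |s - h| - (2 * |h| + 4) ≤ |s| - b := by rw [hb]; linarith
      have h3 : 0 ≤ |s| - b := h0.trans h2
      have h4 : (b * (|s| - b)) ^ 2 / 2 ≤ Real.exp (b * (|s| - b)) := by
        have := Real.quadratic_le_exp_of_nonneg (show 0 ≤ b * (|s| - b) by positivity)
        nlinarith [show 0 ≤ b * (|s| - b) by positivity]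
      have h5 : (|s| - b) * (|s| - b) ≤ 1 / 8 * Real.exp (b * (|s| - b)) := by
        have : 16 * ((|s| - b) * (|s| - b)) ≤ (b * (|s| - b)) ^ 2 := by
          have : 16 ≤ b ^ 2 := by nlinarith
          nlinarith [mul_self_nonneg (|s| - b)]
        linarith
      have h6 : Real.exp (b * (|s| - b)) ≤
          Real.exp (-b ^ 2 / 2) * (cmd (b • v) x + cmd (-(b • v)) x) := by
        rw [e1, e2, mul_add, ← Real.exp_add, ← Real.exp_add]
        rcases abs_cases s with ⟨hh, _⟩ | ⟨hh, _⟩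
        · rw [hh]
          refine le_trans (le_of_eq ?_) (le_add_of_nonneg_right (Real.exp_pos _).le)
          congr 1; ring
        · rw [hh]
          refine le_trans (le_of_eq ?_) (le_add_of_nonneg_left (Real.exp_pos _).le)
          congr 1; ring
      calc _ ≤ (|s| - b) * (|s| - b) := mul_self_le_mul_self h0 h2
        _ ≤ 1 / 8 * Real.exp (b * (|s| - b)) := h5
        _ ≤ 1 / 8 * (Real.exp (-b ^ 2 / 2) * (cmd (b • v) x + cmd (-(b • v)) x)) := by gcongr
        _ = _ := by rw [hK]; ring
  have hi := integral_mono (hLG.integrable_mul hLG)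
    (((integrable_cmd (b • v)).add (integrable_cmd (-(b • v)))).const_mul K) pt
  simp only [Pi.add_apply] at hi
  rw [integral_const_mul, integral_add (integrable_cmd _) (integrable_cmd _), integral_cmd,
    integral_cmd] at hi
  refine hi.trans ?_
  rw [hK, ph]
  have h7 : Real.exp (-b ^ 2 / 2) ≤ Real.exp (-h ^ 2 / 2) * Real.exp (-8) := by
    rw [← Real.exp_add]; apply Real.exp_le_exp.2
    have : h ^ 2 = |h| ^ 2 := (sq_abs h).symm
    rw [this, hb]; nlinarith [abs_nonneg h]
  have h8 : Real.exp (-8) ≤ 1 / 41 := by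
    rw [Real.exp_neg, inv_eq_one_div]
    apply one_div_le_one_div_of_le (by norm_num)
    have := Real.quadratic_le_exp_of_nonneg (show (0 : ℝ) ≤ 8 by norm_num)
    linarith
  have h9 := le_ph_zero
  have h10 := Real.exp_pos (-h ^ 2 / 2)
  have h11 := mul_le_mul_of_nonneg_left h8 h10.le
  have h12 := mul_le_mul_of_nonneg_right h9 h10.le
  linarith

/-- Testing against a half space is integrating against its profile. -/
lemma S_prof {f : E → ℝ} (h : ℝ) {v : E} (hv : ‖v‖ = 1) {ρ : ℝ} (h0 : 0 ≤ ρ) (h1 : ρ < 1) :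
    S ρ f (fun x => hl h ⟪v, x⟫) = ∫ x, f x * prof ρ h ⟪v, x⟫ ∂stdGaussian E := by
  unfold S
  congr 1; ext x
  rw [ou_marginal (hl_meas h) hv, ou_hl (Real.sqrt_pos.2 (by nlinarith)), prof]

lemma prof_LG (ρ h : ℝ) (v : E) : LG fun x : E => prof ρ h ⟪v, x⟫ :=
  LG.of_mem ((prof_meas ρ h).comp (by fun_prop)) fun x => prof_mem _ _ _

/-- If `f` is nonnegative on `{⟪v,x⟫ < h}`, nonpositive off it and has mean zero, its integral
against the profile is a weighted oscillation of the profile. -/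
lemma integral_mul_prof {f : E → ℝ} (hf : Measurable f) (hb : ∀ x, |f x| ≤ 1) {v : E} {h : ℝ}
    (hpos : ∀ x, ⟪v, x⟫ < h → 0 ≤ f x) (hneg : ∀ x, h ≤ ⟪v, x⟫ → f x ≤ 0)
    (h0f : ∫ x, f x ∂stdGaussian E = 0) {ρ : ℝ} (h0 : 0 ≤ ρ) :
    ∫ x, f x * prof ρ h ⟪v, x⟫ ∂stdGaussian E =
      ∫ x, |f x| * |prof ρ h ⟪v, x⟫ - prof ρ h h| ∂stdGaussian E := by
  have hL : LG f := LG.of_bdd hf 1 hb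
  have e : ∀ x, |f x| * |prof ρ h ⟪v, x⟫ - prof ρ h h| =
      f x * prof ρ h ⟪v, x⟫ - f x * prof ρ h h := by
    intro x
    rcases lt_or_ge ⟪v, x⟫ h with hx | hx
    · rw [abs_of_nonneg (hpos x hx), abs_of_nonneg (by linarith [prof_anti h0 h hx.le])]; ring
    · rw [abs_of_nonpos (hneg x hx), abs_of_nonpos (by linarith [prof_anti h0 h hx])]; ring
  simp only [e]
  have j1 : Integrable (fun x => f x * prof ρ h ⟪v, x⟫) (stdGaussian E) :=
    hL.integrable_mul (prof_LG ρ h v)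
  have j2 : Integrable (fun x => f x * prof ρ h h) (stdGaussian E) := hL.integrable.mul_const _
  rw [integral_sub j1 j2, integral_mul_const, h0f, zero_mul, sub_zero]

lemma min_LG (v : E) (h R : ℝ) : LG fun x : E => min |⟪v, x⟫ - h| R := by
  have := ((dist_LG v h).sub (LG.const R)).posPart
  refine ((dist_LG v h).sub this).1 |> fun hm => ?_
  have e : (fun x : E => min |⟪v, x⟫ - h| R) =
      fun x => |⟪v, x⟫ - h| - max (|⟪v, x⟫ - h| - R) 0 := by
    ext x
    rcases le_total |⟪v, x⟫ - h| R with hx | hx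
    · rw [min_eq_left hx, max_eq_right (by linarith), sub_zero]
    · rw [min_eq_right hx, max_eq_left (by linarith)]; ring
  rw [e]
  exact (dist_LG v h).sub this

/-- The deficit at small correlation controls the mass of `f` weighted with the (truncated)
distance to the hyperplane. -/
lemma deficit_small {f : E → ℝ} (hf : Measurable f) (hb : ∀ x, |f x| ≤ 1) {v : E} (hv : ‖v‖ = 1)
    {h : ℝ} (hpos : ∀ x, ⟪v, x⟫ < h → 0 ≤ f x) (hneg : ∀ x, h ≤ ⟪v, x⟫ → f x ≤ 0)
    (h0f : ∫ x, f x ∂stdGaussian E = 0) {e : ℝ}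
    (h1f : ∀ w, ∫ x, f x * ⟪w, x⟫ ∂stdGaussian E = e * ⟪w, v⟫) (he : -e ≤ ph h)
    {ρ : ℝ} (h0 : 0 < ρ) (hρ : ρ ≤ ph h / 300) :
    1 / 4 * ρ * ph h * ∫ x, |f x| * min |⟪v, x⟫ - h| 1 ∂stdGaussian E ≤
      2 * S ρ f (fun x => hl h ⟪v, x⟫) - S ρ f f := by
  have hL : LG f := LG.of_bdd hf 1 hb
  have hq := hL.abs
  have hph := ph_pos h
  have hρs : ρ * (3 * |h| + 4) ^ 2 ≤ 1 / 20 := by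
    -- The Gaussian decay of `ph h` absorbs the factor `(3|h| + 4)²`, so `ρ ≤ ph h / 300` is enough for
    -- `prof_lower`.
    have h2 : ph h * (1 + h ^ 2 / 2) ≤ 2 / 5 := by
      have a1 := ph_zero_le
      have a2 := Real.add_one_le_exp (h ^ 2 / 2)
      have a3 : Real.exp (-h ^ 2 / 2) * Real.exp (h ^ 2 / 2) = 1 := by
        rw [← Real.exp_add, neg_div, neg_add_cancel, Real.exp_zero]
      have a4 := mul_le_mul_of_nonneg_left a2 (Real.exp_pos (-h ^ 2 / 2)).le
      have a5 : 0 < (2 * π : ℝ) ^ (-(1 : ℝ) / 2) := by positivity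
      rw [ph, mul_assoc]
      nlinarith
    have h3 : (3 * |h| + 4) ^ 2 ≤ 36 * (1 + h ^ 2 / 2) := by
      have : h ^ 2 = |h| ^ 2 := (sq_abs h).symm
      rw [this]; nlinarith [sq_nonneg (3 * |h| - 4)]
    calc ρ * (3 * |h| + 4) ^ 2 ≤ ph h / 300 * (36 * (1 + h ^ 2 / 2)) := by gcongr
      _ ≤ 1 / 20 := by linarith
  have hρ1 : ρ ≤ 1 / 2 := by linarith [ph_le h]
  set R := 2 * |h| + 4 with hR
  have hR4 : 4 ≤ R := by rw [hR]; linarith [abs_nonneg h]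
  set A := ∫ x, |f x| * min |⟪v, x⟫ - h| R ∂stdGaussian E with hA
  set F := ∫ x, |f x| * max (|⟪v, x⟫ - h| - R) 0 ∂stdGaussian E with hF
  set ε := ∫ x, |f x| * min |⟪v, x⟫ - h| 1 ∂stdGaussian E with hε
  have hmR := min_LG v h R
  have hm1 := min_LG v h 1
  have hpR := ((dist_LG v h).sub (LG.const R)).posPart
  have iA := hq.integrable_mul hmR
  have iF := hq.integrable_mul hpR
  have iε := hq.integrable_mul hm1
  have hε0 : 0 ≤ ε := integral_nonneg fun x => by positivity
  have hF0 : 0 ≤ F := integral_nonneg fun x => mul_nonneg (abs_nonneg _) (le_max_right _ _)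
  have hεA : ε ≤ A := integral_mono iε iA fun x => by
    dsimp only; gcongr; linarith
  -- the first moment of `f`
  have hAF : -e = A + F := by
    have h2 := h1f v
    rw [real_inner_self_eq_norm_sq, hv] at h2
    have i1 : Integrable (fun x => f x * ⟪v, x⟫) (stdGaussian E) := hL.integrable_mul (LG.inner v)
    have i2 : Integrable (fun x => f x * h) (stdGaussian E) := hL.integrable.mul_const h
    have h3 : A + F = ∫ x, -(f x * ⟪v, x⟫ - f x * h) ∂stdGaussian E := by
      rw [hA, hF, ← integral_add iA iF]
      congr 1; ext x
      have hs : min |⟪v, x⟫ - h| R + max (|⟪v, x⟫ - h| - R) 0 = |⟪v, x⟫ - h| := by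
        rcases le_total |⟪v, x⟫ - h| R with hx | hx
        · rw [min_eq_left hx, max_eq_right (by linarith), add_zero]
        · rw [min_eq_right hx, max_eq_left (by linarith)]; ring
      rw [← mul_add, hs]
      rcases lt_or_ge ⟪v, x⟫ h with hx | hx
      · rw [abs_of_nonneg (hpos x hx), abs_of_nonpos (by linarith)]; ring
      · rw [abs_of_nonpos (hneg x hx), abs_of_nonneg (by linarith)]; ring
    rw [integral_neg, integral_sub i1 i2, integral_mul_const, h0f, h2] at h3
    linarith
  -- the far part is dominated by the near part
  have hFF : F ^ 2 ≤ A * (ph h / 100) := by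
    -- Cauchy–Schwarz: the mass of the far part is at most `A / R ≤ A / 4`, and the second moment is `tail_le`.
    set χ : E → ℝ := fun x => if R < |⟪v, x⟫ - h| then |f x| else 0 with hχ
    have hχm : Measurable χ :=
      Measurable.ite (measurableSet_lt measurable_const (dist_LG v h).meas) hq.meas measurable_const
    have hχ1 : ∀ x, χ x ∈ Icc (0 : ℝ) 1 := fun x => by
      simp only [hχ]; split_ifs
      · exact ⟨abs_nonneg _, hb x⟩
      · norm_num
    have hχL := LG.of_mem hχm hχ1
    have e1 : F = ∫ x, χ x * max (|⟪v, x⟫ - h| - R) 0 ∂stdGaussian E := by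
      rw [hF]; congr 1; ext x
      simp only [hχ]
      split_ifs with hx
      · rfl
      · rw [max_eq_right (by linarith), mul_zero, mul_zero]
    have e2 := cs (hχL.integrable_mul hχL) (hpR.integrable_mul hpR) (hχL.integrable_mul hpR)
    rw [← e1] at e2
    have e3 : ∫ x, χ x * χ x ∂stdGaussian E ≤ A / 4 := by
      rw [hA, ← integral_div]
      refine integral_mono (hχL.integrable_mul hχL) (iA.div_const 4) fun x => ?_
      have : χ x * χ x ≤ χ x := mul_le_of_le_one_left (hχ1 x).1 (hχ1 x).2
      refine this.trans ?_
      simp only [hχ]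
      split_ifs with hx
      · rw [min_eq_right hx.le]; nlinarith [abs_nonneg (f x)]
      · positivity
    have hA0 : 0 ≤ A := hε0.trans hεA
    calc F ^ 2 ≤ A / 4 * (ph h / 25) := e2.trans (mul_le_mul e3 (tail_le hv h)
          (integral_nonneg fun x => mul_self_nonneg _) (by positivity))
      _ = _ := by ring
  have hS := S_gap_half hf hb h0f hv h1f h0 hρ1
  have hS2 := S_half_le hf hb hv h
  rw [← hε] at hS2
  have hcross : 9 / 10 * ρ * ph h * A ≤ S ρ f (fun x => hl h ⟪v, x⟫) := by
    rw [S_prof h hv h0.le (by linarith), integral_mul_prof hf hb hpos hneg h0f h0.le, hA,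
      ← integral_const_mul]
    refine integral_mono (iA.const_mul _) ?_ fun x => ?_
    · exact hq.integrable_mul ((prof_LG ρ h v).sub (LG.const _)).abs
    · have := mul_le_mul_of_nonneg_left (prof_lower h0 hρs ⟪v, x⟫) (abs_nonneg (f x))
      dsimp only
      linarith
  have hA0 : 0 ≤ A := hε0.trans hεA
  -- The first-order terms compare as `e² ≤ 1.3 φ(h) A` against `2 · 0.9 φ(h) A`; the surplus `φ(h) A / 2` pays
  -- for the second-order term.
  have he2 : e ^ 2 ≤ 13 / 10 * ph h * A := by
    have h2 : e ^ 2 = (A + F) ^ 2 := by rw [← hAF]; ring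
    have h3 : A ^ 2 ≤ ph h * A := by
      have : A ≤ ph h := by linarith
      nlinarith
    nlinarith [sq_nonneg (A - 4 * F)]
  have h4 : ρ * e ^ 2 ≤ ρ * (13 / 10 * ph h * A) := by gcongr
  have h5 : 4 * ρ ^ 2 * S (1 / 2) f f ≤ 4 * ρ ^ 2 * (2 * ε) := by gcongr
  have h6 : ρ ^ 2 * ε ≤ ρ * (ph h / 300) * A := by
    rw [sq, mul_assoc, mul_assoc]
    exact mul_le_mul_of_nonneg_left (mul_le_mul hρ hεA hε0 (by positivity)) h0.le
  have h7 : ρ * ph h * ε ≤ ρ * ph h * A := by gcongr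
  nlinarith [mul_nonneg (mul_nonneg h0.le hph.le) hA0]

end

/-! ### The robust bound for functions with values in [0, 1] -/

section

variable {E : Type*} [NormedAddCommGroup E] [InnerProductSpace ℝ E] [FiniteDimensional ℝ E]
  [MeasurableSpace E] [BorelSpace E]

lemma hasDerivAt_neg_ph (s : ℝ) : HasDerivAt (fun s => -ph s) (ph s * s) s := by
  unfold ph
  have h1 : HasDerivAt (fun s : ℝ => -s ^ 2 / 2) (-s) s := by
    have := ((hasDerivAt_pow 2 s).neg).div_const 2
    refine this.congr_deriv ?_
    norm_num; ring
  refine ((h1.exp.const_mul ((2 * π) ^ (-(1 : ℝ) / 2))).neg).congr_deriv ?_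
  ring

lemma integrable_ph_mul_id : Integrable fun s => ph s * s := by
  have h := integrable_mul_exp_neg_mul_sq (b := 1 / 2) (by norm_num)
  refine (h.const_mul ((2 * π) ^ (-(1 : ℝ) / 2))).congr (Eventually.of_forall fun s => ?_)
  simp only [ph]
  rw [show -(1 / 2) * s ^ 2 = -s ^ 2 / 2 by ring]
  ring

/-- The first moment of a half line. -/
lemma integral_hl_id (h : ℝ) : ∫ s, hl h s * s ∂stdGaussian ℝ = -ph h := by
  rw [integral_hl_mul, ← integral_Iic_eq_integral_Iio]
  have ht : Tendsto (fun s => -ph s) atBot (𝓝 0) :=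
    tendsto_zero_of_hasDerivAt_of_integrableOn_Iic (a := 0) (fun s _ => hasDerivAt_neg_ph s)
      integrable_ph_mul_id.integrableOn integrable_ph.neg.integrableOn
  rw [integral_Iic_of_hasDerivAt_of_tendsto' (fun s _ => hasDerivAt_neg_ph s)
    integrable_ph_mul_id.integrableOn ht, sub_zero]

/-- The barycentre of a half space points along its normal: components orthogonal to the normal
vanish because a reflection preserves both the half space and the Gaussian measure. -/
lemma integral_hl_inner (h : ℝ) {v : E} (hv : ‖v‖ = 1) (w : E) :
    ∫ x, hl h ⟪v, x⟫ * ⟪w, x⟫ ∂stdGaussian E = -ph h * ⟪w, v⟫ := by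
  have hL : LG fun x : E => hl h ⟪v, x⟫ := (hl_LG h).marginal hv
  have orth : ∀ y : E, ⟪v, y⟫ = 0 → ∫ x, hl h ⟪v, x⟫ * ⟪y, x⟫ ∂stdGaussian E = 0 := by
    intro y hy
    let R := (ℝ ∙ y)ᗮ.reflection
    have hRv : R v = v := Submodule.reflection_mem_subspace_eq_self
      (Submodule.mem_orthogonal_singleton_iff_inner_left.2 hy)
    have hRy : R y = -y := Submodule.reflection_orthogonalComplement_singleton_eq_neg y
    have e1 : ∀ x, ⟪v, R x⟫ = ⟪v, x⟫ := fun x => by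
      conv_lhs => rw [← hRv]
      exact R.inner_map_map v x
    have e2 : ∀ x, ⟪y, R x⟫ = -⟪y, x⟫ := fun x => by
      have := R.inner_map_map (-y) x
      rw [map_neg, hRy, neg_neg, inner_neg_left] at this
      exact this
    have hm : Measurable (fun x : E => hl h ⟪v, x⟫ * ⟪y, x⟫) :=
      hL.meas.mul (by fun_prop)
    have hI : ∫ x, hl h ⟪v, x⟫ * ⟪y, x⟫ ∂stdGaussian E =
        -∫ x, hl h ⟪v, x⟫ * ⟪y, x⟫ ∂stdGaussian E := by
      conv_lhs => rw [← stdGaussian_map R]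
      rw [integral_map R.continuous.measurable.aemeasurable hm.aestronglyMeasurable,
        ← integral_neg]
      congr 1; ext x
      rw [e1, e2]; ring
    linarith
  have hdec : ∀ x : E, hl h ⟪v, x⟫ * ⟪w, x⟫ =
      ⟪w, v⟫ * (hl h ⟪v, x⟫ * ⟪v, x⟫) + hl h ⟪v, x⟫ * ⟪w - ⟪w, v⟫ • v, x⟫ := fun x => by
    rw [inner_sub_left, inner_smul_left]; simp; ring
  have hz : ⟪v, w - ⟪w, v⟫ • v⟫ = 0 := by
    rw [inner_sub_right, inner_smul_right, real_inner_self_eq_norm_sq, hv, real_inner_comm]; ring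
  have j1 : Integrable (fun x : E => ⟪w, v⟫ * (hl h ⟪v, x⟫ * ⟪v, x⟫)) (stdGaussian E) :=
    (hL.integrable_mul (LG.inner v)).const_mul _
  have j2 : Integrable (fun x : E => hl h ⟪v, x⟫ * ⟪w - ⟪w, v⟫ • v, x⟫) (stdGaussian E) :=
    hL.integrable_mul (LG.inner _)
  simp only [hdec]
  rw [integral_add j1 j2, orth _ hz, integral_const_mul,
    integral_marginal (f := fun s => hl h s * s) ((hl_meas h).mul measurable_id) hv,
    integral_hl_id]
  ring

/-- The robust bound for `[0,1]`-valued functions `F` of the same mean as the half space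
`{⟪v, x⟫ < h}` and with barycentre parallel to `v`. -/
lemma robust_core {F : E → ℝ} (hF : Measurable F) (hF1 : ∀ x, F x ∈ Icc (0 : ℝ) 1) {h : ℝ}
    (hp : ∫ x, F x ∂stdGaussian E = Phi h) {v : E} (hv : ‖v‖ = 1) {m : ℝ} (hm : 0 ≤ m)
    (hbar : ∀ w, ∫ x, F x * ⟪w, x⟫ ∂stdGaussian E = -m * ⟪w, v⟫)
    {ρ β : ℝ} (h0 : 0 < ρ) (h1 : ρ < 1) (hβ0 : 0 ≤ β) (hβ1 : β < 1) :
    let η : ℝ → ℝ := fun b => ∫ x, (hl h ⟪v, x⟫ - F x) * prof b h ⟪v, x⟫ ∂stdGaussian E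
    let δ := S ρ (fun x : E => hl h ⟪v, x⟫) (fun x => hl h ⟪v, x⟫) - S ρ F F
    m ≤ ph h ∧ 0 ≤ η β ∧ ρ * (1 - ρ) ^ 2 * ph h ^ 2 / 2400 * (√(1 - β ^ 2) * η β) ≤ δ ∧
      δ ≤ 2 * η ρ := by
  intro η δ
  set g : E → ℝ := fun x => hl h ⟪v, x⟫ with hg
  set f : E → ℝ := fun x => hl h ⟪v, x⟫ - F x with hf
  have hgm : Measurable g := (hl_meas h).comp (by fun_prop)
  have hfm : Measurable f := hgm.sub hF
  have hgL : LG g := LG.of_mem hgm fun x => ⟨hl_nonneg _ _, hl_le_one _ _⟩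
  have hFL : LG F := LG.of_mem hF hF1
  have hfL : LG f := hgL.sub hFL
  have hb : ∀ x, |f x| ≤ 1 := fun x => by
    have h1 := hl_nonneg h ⟪v, x⟫
    have h2 := hl_le_one h ⟪v, x⟫
    have h3 := hF1 x
    rw [abs_le]; constructor <;> simp only [hf] <;> linarith [h3.1, h3.2]
  have hpos : ∀ x, ⟪v, x⟫ < h → 0 ≤ f x := fun x hx => by
    have : hl h ⟪v, x⟫ = 1 := by simp [hl, hx]
    simp only [hf, this]; linarith [(hF1 x).2]
  have hneg : ∀ x, h ≤ ⟪v, x⟫ → f x ≤ 0 := fun x hx => by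
    have : hl h ⟪v, x⟫ = 0 := by simp [hl, hx]
    simp only [hf, this]; linarith [(hF1 x).1]
  have hgi : ∫ x, g x ∂stdGaussian E = Phi h := by
    rw [hg, integral_marginal (hl_meas h) hv, integral_hl]
  have h0f : ∫ x, f x ∂stdGaussian E = 0 := by
    simp only [hf]
    rw [integral_sub hgL.integrable hFL.integrable, hp, hgi, sub_self]
  have h1f : ∀ w, ∫ x, f x * ⟪w, x⟫ ∂stdGaussian E = (-(ph h - m)) * ⟪w, v⟫ := fun w => by
    simp only [hf, sub_mul]
    have j1 : Integrable (fun x : E => hl h ⟪v, x⟫ * ⟪w, x⟫) (stdGaussian E) :=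
      hgL.integrable_mul (LG.inner w)
    have j2 : Integrable (fun x : E => F x * ⟪w, x⟫) (stdGaussian E) :=
      hFL.integrable_mul (LG.inner w)
    rw [integral_sub j1 j2, integral_hl_inner h hv, hbar]; ring
  have hφ := ph_pos h
  have hφ2 := ph_le h
  -- `∫ f (h - ⟪v, x⟫) = ph h - m` has a nonnegative integrand
  have hmle : m ≤ ph h := by
    have j1 : Integrable (fun x => h * f x) (stdGaussian E) := hfL.integrable.const_mul _
    have j2 : Integrable (fun x => f x * ⟪v, x⟫) (stdGaussian E) := hfL.integrable_mul (LG.inner v)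
    have : 0 ≤ ∫ x, (h * f x - f x * ⟪v, x⟫) ∂stdGaussian E :=
      integral_nonneg (f := fun x => h * f x - f x * ⟪v, x⟫) fun x => by
        show 0 ≤ h * f x - f x * ⟪v, x⟫
        rcases lt_or_ge ⟪v, x⟫ h with hx | hx
        · nlinarith [hpos x hx]
        · nlinarith [hneg x hx]
    rw [integral_sub j1 j2, integral_const_mul, h0f, h1f, real_inner_self_eq_norm_sq, hv] at this
    linarith
  set I := ∫ x, |f x| * min |⟪v, x⟫ - h| 1 ∂stdGaussian E with hI
  have hηeq : η β = ∫ x, |f x| * |prof β h ⟪v, x⟫ - prof β h h| ∂stdGaussian E :=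
    integral_mul_prof hfm hb hpos hneg h0f hβ0
  have hη0 : 0 ≤ η β := by
    rw [hηeq]
    exact integral_nonneg fun x => mul_nonneg (abs_nonneg _) (abs_nonneg _)
  have hsq : 0 < √(1 - β ^ 2) := Real.sqrt_pos.2 (by nlinarith)
  have hηI : √(1 - β ^ 2) * η β ≤ I := by
    rw [hηeq, hI, ← integral_const_mul]
    refine integral_mono ((hfL.abs.integrable_mul
      ((prof_LG β h v).sub (LG.const _)).abs).const_mul _)
      (hfL.abs.integrable_mul (min_LG v h 1)) fun x => ?_
    have := prof_upper hβ0 hβ1 h ⟪v, x⟫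
    rw [le_div_iff₀ hsq] at this
    calc √(1 - β ^ 2) * (|f x| * |prof β h ⟪v, x⟫ - prof β h h|)
        = |f x| * (|prof β h ⟪v, x⟫ - prof β h h| * √(1 - β ^ 2)) := by ring
      _ ≤ _ := mul_le_mul_of_nonneg_left this (abs_nonneg _)
  have hI0 : 0 ≤ I := (mul_nonneg hsq.le hη0).trans hηI
  have hFf : F = fun x => g x - f x := by ext x; simp [hf, hg]
  have expand : ∀ r : ℝ, 0 < r → r < 1 →
      S r g g - S r F F = 2 * S r f g - S r f f := fun r hr0 hr1 => by
    have hr : |r| ≤ 1 := by rw [abs_of_pos hr0]; exact hr1.le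
    rw [hFf, S_sub_left hgL hfL (hgL.sub hfL), S_sub_right hgL hgL hfL, S_sub_right hfL hgL hfL,
      S_symm hgL hfL hr]
    ring
  refine ⟨hmle, hη0, ?_, ?_⟩
  · -- the deficit at the small correlation `r₀`, transported to `ρ`
    -- The extra factor `ρ` ensures `r₀ < ρ`.
    set r₀ := ρ * (ph h / 300) with hr₀
    have hr0 : 0 < r₀ := by positivity
    have hr1 : r₀ < ρ := by nlinarith
    have hr2 : r₀ ≤ ph h / 300 := by nlinarith
    have hsmall := deficit_small hfm hb hv hpos hneg h0f h1f (by linarith) hr0 hr2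
    rw [← hI, ← expand r₀ hr0 (by linarith)] at hsmall
    have h3 : 0 < 1 - r₀ := by linarith
    have hmono := S_mono_rho hF hF1 hp hv (s := √r₀) (c := √(1 - r₀)) (r := (ρ - r₀) / (1 - r₀))
      (Real.sqrt_pos.2 hr0) (Real.sqrt_pos.2 h3)
      (by rw [Real.sq_sqrt hr0.le, Real.sq_sqrt h3.le]; ring)
      (div_pos (by linarith) h3) (by rw [div_lt_one h3]; linarith) rfl
    rw [Real.sq_sqrt hr0.le, Real.sq_sqrt h3.le, mul_div_cancel₀ _ h3.ne',
      show r₀ + (ρ - r₀) = ρ by ring] at hmono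
    -- `k² = (1 - ρ) / (1 + ρ - 2 r₀) ≥ (1 - ρ) / 2 ≥ ((1 - ρ) / 2)²`
    have hk : (1 - ρ) / 2 ≤ √((1 - (ρ - r₀) / (1 - r₀)) / (1 + (ρ - r₀) / (1 - r₀))) := by
      apply Real.le_sqrt_of_sq_le
      rw [one_sub_div h3.ne', one_add_div h3.ne', div_div_div_cancel_right₀ h3.ne',
        le_div_iff₀ (by linarith)]
      nlinarith [mul_pos h0 (sub_pos.2 h1), sq_nonneg (1 - ρ)]
    refine le_trans ?_ hmono
    have hX : 0 ≤ 1 / 4 * r₀ * ph h * I := by positivity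
    have h4 : 0 ≤ (1 - ρ) / 2 := by linarith
    calc ρ * (1 - ρ) ^ 2 * ph h ^ 2 / 2400 * (√(1 - β ^ 2) * η β)
        ≤ ρ * (1 - ρ) ^ 2 * ph h ^ 2 / 2400 * I := by gcongr
      _ ≤ (1 - ρ) / 2 * (1 / 4 * r₀ * ph h * I) := by
        rw [hr₀]
        have : 0 ≤ ρ * (1 - ρ) * ph h ^ 2 * I :=
          mul_nonneg (mul_nonneg (mul_nonneg h0.le (by linarith)) (sq_nonneg _)) hI0
        nlinarith
      _ ≤ _ := mul_le_mul hk hsmall hX (h4.trans hk)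
  · show S ρ g g - S ρ F F ≤ _
    rw [expand ρ h0 h1]
    have := S_self_nonneg hfL h0.le h1.le
    have h5 : S ρ f g = η ρ := S_prof h hv h0.le h1
    linarith

end

/-! ### The theorem for sets -/

/-- The noise stability is the quadratic form `S` at the indicator. -/
lemma noiseStability_eq (k : ℕ) (ρ : ℝ) (A : Set (Euc k)) :
    noiseStability k ρ A =
      S ρ (A.indicator fun _ => (1 : ℝ)) (A.indicator fun _ => (1 : ℝ)) := by
  unfold noiseStability S ouOp ou
  simp only [gaussMeasure_eq]

/-- The barycentre, tested against a vector. -/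
lemma inner_bary {k : ℕ} {A : Set (Euc k)} (hA : MeasurableSet A) (w : Euc k) :
    ⟪w, bary k A⟫ = ∫ x, A.indicator (fun _ => (1 : ℝ)) x * ⟪w, x⟫ ∂stdGaussian (Euc k) := by
  unfold bary
  rw [gaussMeasure_eq, ← _root_.integral_inner (f := fun x : Euc k => x)
    (IsGaussian.integrable_id (μ := stdGaussian (Euc k))).integrableOn w,
    ← integral_indicator hA]
  congr 1; ext x
  by_cases hx : x ∈ A <;> simp [hx]

lemma integral_ind {k : ℕ} {A : Set (Euc k)} (hA : MeasurableSet A) {a : ℝ} (ha : 0 ≤ a)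
    (h : gaussMeasure k A = ENNReal.ofReal a) :
    ∫ x, A.indicator (fun _ => (1 : ℝ)) x ∂stdGaussian (Euc k) = a := by
  rw [integral_indicator hA, setIntegral_const, measureReal_def, ← gaussMeasure_eq, h,
    ENNReal.toReal_ofReal ha]
  simp

end RobustBorell

open ProbabilityTheory RobustBorell

/-- Robust Borell's inequality, small correlation (Theorem 1.13). -/
theorem robust_borell_small_correlation
    (n : ℕ) (ρ β a α z₀ : ℝ)
    (hρ0 : 0 < ρ) (hρ1 : ρ < 1) (hβ0 : 0 ≤ β) (hβρ : β < ρ)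
    (ha0 : 0 < a) (ha1 : a < 1) (hα : Phi (-α) = a) (hz₀ : 0 < z₀)
    (Ω : Set (Euc (n + 1))) (hΩmeas : MeasurableSet Ω)
    (hΩa : gaussMeasure (n + 1) Ω = ENNReal.ofReal a)
    (hzne : bary (n + 1) Ω ≠ 0) (hznorm : z₀ ≤ ‖bary (n + 1) Ω‖)
    (H : Set (Euc (n + 1))) (hH : IsHalfSpace (n + 1) H)
    (hHa : gaussMeasure (n + 1) H = ENNReal.ofReal a)
    (hHz : ∃ c : ℝ, 0 < c ∧ bary (n + 1) H = c • bary (n + 1) Ω) :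
    let z := bary (n + 1) Ω
    let δ := noiseStability (n + 1) ρ H - noiseStability (n + 1) ρ Ω
    let η : ℝ → ℝ := fun β' =>
      ∫ x, Phi ((β' * ⟪‖z‖⁻¹ • z, x⟫ - α) / Real.sqrt (1 - β' ^ 2)) *
        (H.indicator (fun _ => (1 : ℝ)) x - Ω.indicator (fun _ => (1 : ℝ)) x)
        ∂(gaussMeasure (n + 1))
    0 ≤ η β ∧
      (((10 : ℝ) ^ 7)⁻¹ * a * z₀ ^ 2 * Real.exp (-α ^ 2 * max 1 (β / (ρ - β))) /
          (6 + |α|) ^ 2 * (ρ * (1 - ρ) ^ 2 * β * (1 - β ^ 2) * a * (1 - a))) * η β ≤ δ ∧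
      δ ≤ 2 * η ρ := by
  intro z δ η
  have hz0 : 0 < ‖z‖ := norm_pos_iff.2 hzne
  obtain ⟨u, t, hu, hHeq⟩ := hH
  obtain ⟨c, hc, hcz⟩ := hHz
  have hv : ‖-u‖ = 1 := by rw [norm_neg, hu]
  have hHind : (H.indicator fun _ => (1 : ℝ)) = fun x => hl (-t) ⟪-u, x⟫ := by
    ext x
    have : x ∈ H ↔ ⟪-u, x⟫ ∈ Iio (-t) := by
      rw [inner_neg_left, real_inner_comm]; simp [hHeq]
    by_cases hx : x ∈ H
    · rw [indicator_of_mem hx, hl, indicator_of_mem (this.1 hx)]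
    · rw [indicator_of_notMem hx, hl, indicator_of_notMem fun h => hx (this.2 h)]
  have hHm : MeasurableSet H := hHeq ▸ measurableSet_lt measurable_const (by fun_prop)
  have hΩi := integral_ind hΩmeas ha0.le hΩa
  -- the level of the half space is determined by its measure
  have ht : t = α := by
    have h1 := integral_ind hHm ha0.le hHa
    rw [hHind, integral_marginal (hl_meas _) hv, integral_hl, ← hα] at h1
    linarith [Phi_strictMono.injective h1]
  subst ht
  -- its normal is determined by its barycentre
  have hbH : bary (n + 1) H = ph (-t) • u := by
    refine ext_inner_left ℝ fun w => ?_
    rw [inner_bary hHm, hHind, integral_hl_inner _ hv, inner_neg_right, inner_smul_right]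
    ring
  have huz : ‖z‖⁻¹ • z = u := by
    have e : ph (-t) • u = c • z := hbH ▸ hcz
    have hn : ph (-t) = c * ‖z‖ := by
      have := congrArg norm e
      rwa [norm_smul, norm_smul, hu, Real.norm_of_nonneg (ph_pos _).le, Real.norm_of_nonneg hc.le,
        mul_one] at this
    rw [inv_smul_eq_iff₀ hz0.ne']
    refine smul_right_injective _ hc.ne' ?_
    show c • z = c • ‖z‖ • u
    rw [← e, hn, mul_smul]
  have hzu : z = ‖z‖ • u := by rw [← huz, smul_smul, mul_inv_cancel₀ hz0.ne', one_smul]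
  have hF1 : ∀ x, Ω.indicator (fun _ => (1 : ℝ)) x ∈ Icc (0 : ℝ) 1 := fun x => by
    by_cases hx : x ∈ Ω <;> simp [hx]
  have hβ1 : β < 1 := hβρ.trans hρ1
  obtain ⟨hm, hη0, hlow, hup⟩ := robust_core (measurable_const.indicator hΩmeas) hF1
    (hΩi.trans hα.symm) hv (norm_nonneg z)
    (fun w => by
      rw [← inner_bary hΩmeas, inner_neg_right]
      show ⟪w, z⟫ = _
      conv_lhs => rw [hzu]
      rw [inner_smul_right]; ring) hρ0 hρ1 hβ0 hβ1
  have hη : ∀ b, η b = ∫ x, (hl (-t) ⟪-u, x⟫ - Ω.indicator (fun _ => (1 : ℝ)) x) *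
      prof b (-t) ⟪-u, x⟫ ∂stdGaussian (Euc (n + 1)) := fun b => by
    simp only [η, huz, hHind, gaussMeasure_eq, prof, inner_neg_left]
    congr 1; ext x
    rw [mul_comm]; congr 3; ring
  have hδ : δ = S ρ (fun x => hl (-t) ⟪-u, x⟫) (fun x => hl (-t) ⟪-u, x⟫) -
      S ρ (Ω.indicator fun _ => 1) (Ω.indicator fun _ => 1) := by
    show noiseStability (n + 1) ρ H - noiseStability (n + 1) ρ Ω = _
    rw [noiseStability_eq, noiseStability_eq, hHind]
  beta_reduce at hη0 hlow hup
  rw [← hη] at hη0 hlow hup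
  rw [← hδ] at hlow hup
  refine ⟨hη0, le_trans ?_ hlow, hup⟩
  rw [← mul_assoc _ (√(1 - β ^ 2))]
  refine mul_le_mul_of_nonneg_right ?_ hη0
  have hβ2 : 0 < 1 - β ^ 2 := by nlinarith
  have hsq : 1 - β ^ 2 ≤ √(1 - β ^ 2) := by
    apply Real.le_sqrt_of_sq_le; nlinarith [sq_nonneg β]
  have hexp : Real.exp (-t ^ 2 * max 1 (β / (ρ - β))) ≤ 1 := by
    rw [Real.exp_le_one_iff]
    nlinarith [sq_nonneg t, le_max_left 1 (β / (ρ - β))]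
  have h6 : (0 : ℝ) < (6 + |t|) ^ 2 := by positivity
  have h36 : 1 ≤ (6 + |t|) ^ 2 := by nlinarith [abs_nonneg t]
  have hz2 : z₀ ^ 2 ≤ ph (-t) ^ 2 := pow_le_pow_left₀ hz₀.le (hznorm.trans hm) 2
  have hD : (0 : ℝ) ≤ ρ * (1 - ρ) ^ 2 := by positivity
  have hA : ((10 : ℝ) ^ 7)⁻¹ * a * z₀ ^ 2 * Real.exp (-t ^ 2 * max 1 (β / (ρ - β))) /
      (6 + |t|) ^ 2 ≤ 2400⁻¹ * ph (-t) ^ 2 := by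
    rw [div_le_iff₀ h6]
    calc ((10 : ℝ) ^ 7)⁻¹ * a * z₀ ^ 2 * Real.exp (-t ^ 2 * max 1 (β / (ρ - β)))
        ≤ 2400⁻¹ * 1 * ph (-t) ^ 2 * 1 := by gcongr; norm_num
      _ ≤ 2400⁻¹ * ph (-t) ^ 2 * (6 + |t|) ^ 2 := by
        have : 0 ≤ 2400⁻¹ * ph (-t) ^ 2 := by positivity
        nlinarith
  have ha2 : 0 < 1 - a := by linarith
  have hB : ρ * (1 - ρ) ^ 2 * β * (1 - β ^ 2) * a * (1 - a) ≤
      ρ * (1 - ρ) ^ 2 * 1 * √(1 - β ^ 2) * 1 * 1 := by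
    gcongr
    linarith
  refine (mul_le_mul hA hB (by positivity) (by positivity)).trans (le_of_eq ?_)
  ring
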